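/- arXiv:2406.06926 — 4 statements merged into one kernel-verified Lean document; each statement's English description precedes it below -/
import Mathlib

section
/- Let d ≥ 2, 0 < s ≤ 1, 1 ≤ p, q < ∞, 0 < α < d, and assume 𝒟 = p(d+α) − 2q(d−sp) < 0. Then there exists a constant C > 0 such that for all ε > 0 small enough with p(d+α+2ε) − 2q(d−sp) < 0, setting γ_ε = q + (q(sp−1)+p)(d−α−2ε)/(sp(d+α+2ε−2) + (d−α−2ε)) and a_ε = p(γ_ε(d+α+2ε) − 2qd)/(γ_ε(p(d+α+2ε) − 2q(d−sp))), for every radial g ∈ C¹_{c,rad}(ℝ^d): ‖g‖_{L^{γ_ε}(ℝ^d)} ≤ C ‖g‖_{Ẇ^{s,p}(ℝ^d)}^{a_ε} ‖ |x|^{−((d−α)/(2q) − ε/q)} g ‖_{L^q(ℝ^d)}^{1−a_ε}. -/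
open MeasureTheory Real

/-- Homogeneous (fractional) Sobolev seminorm `‖g‖_{Ẇ^{s,p}(ℝ^d)}`:
for `0 < s < 1` the Gagliardo seminorm, for `s = 1` the `L^p` norm of the gradient. -/
noncomputable def sobolevSemi (d : ℕ) (s p : ℝ) (g : EuclideanSpace ℝ (Fin d) → ℝ) : ℝ :=
  if s = 1 then (∫ x, ‖fderiv ℝ g x‖ ^ p) ^ (1 / p)
  else if s = 0 then (∫ x, |g x| ^ p) ^ (1 / p)
  else (∫ x, ∫ y, |g x - g y| ^ p / ‖x - y‖ ^ ((d : ℝ) + s * p)) ^ (1 / p)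

open Set Metric Module Filter
open scoped ENNReal NNReal

/-
Write `W = ∫ |x|^{-b} |g|^q`, `J` for the `p`-th power of the Sobolev seminorm, and `f(x)` for the
inner integral of the Gagliardo energy. Radiality spreads the mass of `|g|^q` in a ball `B(x, r)`
over a whole shell, so `∫_{B(x, r)} |g|^q ≲ r^{d-1} |x|^{b-(d-1)} W`. Each `y` in that ball has
`|g x| ≤ 2 |g x - g y|` or `|g x| ≤ 2 |g y|`, whence, for every `r > 0`,
`1 ≲ |g x|^{-p} f(x) r^{sp} + |g x|^{-q} |x|^{b-(d-1)} W / r`.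
Choosing `r` so that the last term is absorbed and integrating in `x` gives
`∫ |x|^{sp(d-1-b)} |g|^{p+spq} ≲ J W^{sp}`.
For `s = 1` the same bound follows by integrating the derivative of a power of `|g|` along rays and
applying Hölder's inequality. Hölder's inequality between this weighted energy and `W`, with the
parameter for which the two weights cancel, then bounds the unweighted integral of `|g|^γ`.
All constants are uniform in `b`, which makes `C` independent of `ε`.
-/

/-- A function is radial if its value at `x` depends on `‖x‖` only. -/
def IsRadial {E F : Type*} [Norm E] (g : E → F) : Prop :=
  ∀ x y, ‖x‖ = ‖y‖ → g x = g y

section Definitions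

variable {E F : Type*} [NormedAddCommGroup E] [InnerProductSpace ℝ E] [MeasureSpace E]
  [NormedAddCommGroup F]

/-- The energy `∫ |x|^{-b} |g|^q`, i.e. the `q`-th power of the norm of `g` in `L^q` with the
homogeneous weight `|x|^{-b}`. It is `ℝ≥0∞`-valued so that it needs no integrability. -/
noncomputable def weightedEnergy (b q : ℝ) (g : E → F) : ℝ≥0∞ :=
  ∫⁻ x, ‖x‖ₑ ^ (-b) * ‖g x‖ₑ ^ q

/-- The inner integral `∫ |g(x) - g(y)|^p / |x - y|^{d + sp} dy` of the Gagliardo energy. -/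
noncomputable def gagliardoDensity (s p : ℝ) (g : E → F) (x : E) : ℝ≥0∞ :=
  ∫⁻ y, ‖g x - g y‖ₑ ^ p / ‖x - y‖ₑ ^ (finrank ℝ E + s * p)

/-- The `p`-th power of the homogeneous Sobolev seminorm of order `0 < s ≤ 1`: the Gagliardo energy
if `s < 1` and the Dirichlet `p`-energy if `s = 1`. -/
noncomputable def sobolevEnergy [NormedSpace ℝ F] (s p : ℝ) (g : E → F) : ℝ≥0∞ :=
  if s = 1 then ∫⁻ x, ‖fderiv ℝ g x‖ₑ ^ p else ∫⁻ x, gagliardoDensity s p g x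

end Definitions

section RadialAverages

variable {E F : Type*} [NormedAddCommGroup E] [InnerProductSpace ℝ E] [FiniteDimensional ℝ E]
  [MeasurableSpace E] [BorelSpace E] {u : E → ℝ≥0∞}

lemma IsRadial.setLIntegral_ball_eq (hu : IsRadial u) {x x' : E} (h : ‖x‖ = ‖x'‖) (r : ℝ) :
    ∫⁻ y in ball x r, u y = ∫⁻ y in ball x' r, u y := by
  set R := Submodule.reflection (ℝ ∙ (x - x'))ᗮ
  have hx : R x = x' := Submodule.reflection_sub h
  rw [← R.measurePreserving.setLIntegral_comp_preimage_emb
    R.toHomeomorph.measurableEmbedding u (ball x' r), ← hx, R.preimage_ball, R.symm_apply_apply]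
  exact setLIntegral_congr_fun measurableSet_ball fun y _ => hu _ _ (R.norm_map y).symm

lemma IsRadial.setLIntegral_ball_le_of_norm_le (hu : IsRadial u) {x z : E} {r : ℝ}
    (hxz : ‖x‖ ≤ ‖z‖) (hzx : ‖z‖ ≤ ‖x‖ + r) :
    ∫⁻ y in ball x r, u y ≤ ∫⁻ y in ball z (2 * r), u y := by
  set x' := (‖x‖ / ‖z‖) • z with hx'
  have hnorm : ‖x‖ = ‖x'‖ := by
    rw [hx', norm_smul, Real.norm_of_nonneg (by positivity),
      div_mul_cancel_of_imp fun hz => le_antisymm (hz ▸ hxz) (norm_nonneg x)]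
  have hdist : dist x' z = ‖z‖ - ‖x‖ := by
    have hsub : z - x' = (1 - ‖x‖ / ‖z‖) • z := by rw [hx', sub_smul, one_smul]
    rw [dist_comm, dist_eq_norm, hsub, norm_smul, Real.norm_of_nonneg
      (sub_nonneg.2 (div_le_one_of_le₀ hxz (norm_nonneg z))), sub_mul, one_mul,
      div_mul_cancel_of_imp fun hz => le_antisymm (hz ▸ hxz) (norm_nonneg x)]
  rw [hu.setLIntegral_ball_eq hnorm]
  exact lintegral_mono_set (ball_subset_ball' (by linarith))

lemma ofReal_mul_volume_ball_le_volume_shell [Nontrivial E] {ρ r : ℝ} (hρ : 0 ≤ ρ) (hr : 0 < r) :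
    ENNReal.ofReal (r * ρ ^ (finrank ℝ E - 1)) * volume (ball (0 : E) 1) ≤
      volume (ball (0 : E) (ρ + r) \ ball 0 ρ) := by
  obtain ⟨n, hn⟩ : ∃ n, finrank ℝ E = n + 1 :=
    Nat.exists_eq_add_one.2 (finrank_pos (R := ℝ) (M := E))
  have hpow : r * ρ ^ n ≤ (ρ + r) ^ (n + 1) - ρ ^ (n + 1) := by
    have : ρ ^ n ≤ (ρ + r) ^ n := by gcongr; linarith
    simp only [pow_succ]
    nlinarith
  rw [measure_sdiff (ball_subset_ball (by linarith)) measurableSet_ball.nullMeasurableSet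
    measure_ball_lt_top.ne, Measure.addHaar_ball volume 0 hρ,
    Measure.addHaar_ball volume 0 (by positivity : 0 ≤ ρ + r),
    ← ENNReal.sub_mul (fun _ _ => measure_ball_lt_top.ne), ← ENNReal.ofReal_sub _ (by positivity),
    hn, Nat.add_sub_cancel]
  gcongr

lemma setLIntegral_setLIntegral_ball_le (hu : Measurable u) {S : Set E} (hS : MeasurableSet S)
    (r : ℝ) :
    ∫⁻ z in S, ∫⁻ y in ball z r, u y ≤ volume (ball (0 : E) r) * ∫⁻ y in thickening r S, u y := by
  have hmeas : Measurable (Function.uncurry fun z y : E => (ball z r).indicator u y) := by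
    have h : MeasurableSet {w : E × E | dist w.2 w.1 < r} :=
      measurableSet_lt (measurable_snd.dist measurable_fst) measurable_const
    exact (hu.comp measurable_snd).indicator h
  have hinner (y : E) : ∫⁻ z in S, (ball z r).indicator u y ≤
      volume (ball (0 : E) r) * (thickening r S).indicator u y := by
    calc
      _ ≤ ∫⁻ z in S, (ball y r).indicator (fun _ => (thickening r S).indicator u y) z := by
        refine setLIntegral_mono' hS fun z hz => indicator_apply_le' (fun hy => ?_) fun _ => zero_le
        rw [indicator_of_mem (mem_ball_comm.1 hy),
          indicator_of_mem (mem_thickening_iff.2 ⟨z, hz, hy⟩)]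
      _ ≤ ∫⁻ z, (ball y r).indicator (fun _ => (thickening r S).indicator u y) z :=
        setLIntegral_le_lintegral _ _
      _ = _ := by
        rw [lintegral_indicator_const measurableSet_ball, Measure.addHaar_ball_center, mul_comm]
  calc
    _ = ∫⁻ z in S, ∫⁻ y, (ball z r).indicator u y := by
      simp_rw [lintegral_indicator measurableSet_ball]
    _ = ∫⁻ y, ∫⁻ z in S, (ball z r).indicator u y := lintegral_lintegral_swap hmeas.aemeasurable
    _ ≤ ∫⁻ y, volume (ball (0 : E) r) * (thickening r S).indicator u y := lintegral_mono hinner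
    _ = _ := by
      rw [lintegral_const_mul' _ _ measure_ball_lt_top.ne,
        lintegral_indicator isOpen_thickening.measurableSet]

lemma IsRadial.ofReal_mul_setLIntegral_ball_le [Nontrivial E] (hu : IsRadial u)
    (hum : Measurable u) (x : E) {r : ℝ} (hr : 0 < r) :
    ENNReal.ofReal (r * ‖x‖ ^ (finrank ℝ E - 1)) * ∫⁻ y in ball x r, u y ≤
      ENNReal.ofReal ((2 * r) ^ finrank ℝ E) * ∫⁻ y in ball 0 (‖x‖ + 3 * r), u y := by
  set S := ball (0 : E) (‖x‖ + r) \ ball 0 ‖x‖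
  have hSm : MeasurableSet S := measurableSet_ball.diff measurableSet_ball
  have hthick : thickening (2 * r) S ⊆ ball 0 (‖x‖ + 3 * r) :=
    (thickening_subset_of_subset _ sdiff_subset).trans <|
      (Metric.thickening_ball _ _ _).trans (ball_subset_ball (by linarith))
  have hscaled : volume (ball (0 : E) 1) *
      (ENNReal.ofReal (r * ‖x‖ ^ (finrank ℝ E - 1)) * ∫⁻ y in ball x r, u y) ≤
      volume (ball (0 : E) 1) *
        (ENNReal.ofReal ((2 * r) ^ finrank ℝ E) * ∫⁻ y in ball 0 (‖x‖ + 3 * r), u y) := by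
    calc
      _ = (ENNReal.ofReal (r * ‖x‖ ^ (finrank ℝ E - 1)) * volume (ball (0 : E) 1)) *
          ∫⁻ y in ball x r, u y := by ring
      _ ≤ volume S * ∫⁻ y in ball x r, u y := by
        gcongr
        exact ofReal_mul_volume_ball_le_volume_shell (norm_nonneg x) hr
      _ = ∫⁻ _ in S, ∫⁻ y in ball x r, u y := by rw [setLIntegral_const, mul_comm]
      _ ≤ ∫⁻ z in S, ∫⁻ y in ball z (2 * r), u y :=
        setLIntegral_mono' hSm fun z hz =>
          hu.setLIntegral_ball_le_of_norm_le (by simpa using hz.2)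
            (le_of_lt (by simpa using hz.1))
      _ ≤ volume (ball (0 : E) (2 * r)) * ∫⁻ y in thickening (2 * r) S, u y :=
        setLIntegral_setLIntegral_ball_le hum hSm _
      _ ≤ volume (ball (0 : E) (2 * r)) * ∫⁻ y in ball 0 (‖x‖ + 3 * r), u y := by
        gcongr
      _ = _ := by rw [Measure.addHaar_ball _ _ (by positivity)]; ring
  exact (ENNReal.mul_le_mul_iff_right (measure_ball_pos _ _ one_pos).ne'
    measure_ball_lt_top.ne).1 hscaled

lemma setLIntegral_ball_zero_le_lintegral_enorm_rpow_neg_mul (u : E → ℝ≥0∞) {R b : ℝ}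
    (hR : 0 < R) (hb : 0 ≤ b) :
    ∫⁻ y in ball 0 R, u y ≤ ENNReal.ofReal (R ^ b) * ∫⁻ y, ‖y‖ₑ ^ (-b) * u y := by
  have hone (y : E) (hy : y ∈ ball (0 : E) R) : 1 ≤ ENNReal.ofReal (R ^ b) * ‖y‖ₑ ^ (-b) := by
    have hyR : ‖y‖ₑ ≤ ENNReal.ofReal R := by
      rw [← ofReal_norm]
      exact ENNReal.ofReal_le_ofReal (mem_ball_zero_iff.1 hy).le
    calc
      1 = ENNReal.ofReal (R ^ b) * (ENNReal.ofReal R ^ b)⁻¹ := by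
        rw [ENNReal.ofReal_rpow_of_pos hR, ENNReal.mul_inv_cancel
          (ENNReal.ofReal_pos.2 (by positivity)).ne' ENNReal.ofReal_ne_top]
      _ ≤ _ := by
        rw [ENNReal.rpow_neg]
        gcongr
  calc
    _ ≤ ∫⁻ y in ball 0 R, ENNReal.ofReal (R ^ b) * (‖y‖ₑ ^ (-b) * u y) :=
      setLIntegral_mono' measurableSet_ball fun y hy => by
        rw [← mul_assoc]
        exact le_mul_of_one_le_left' (hone y hy)
    _ ≤ _ := by
      rw [← lintegral_const_mul' _ _ ENNReal.ofReal_ne_top]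
      exact setLIntegral_le_lintegral _ _

lemma two_mul_pow_mul_four_mul_rpow_le {n : ℕ} {b r ρ : ℝ} (hb : b ≤ n) (hr : 0 < r)
    (hρ : 0 < ρ) :
    (2 * r) ^ n * (4 * ρ) ^ b ≤
      r * ρ ^ (n - 1 : ℝ) * (8 ^ (n : ℝ) * r ^ (n - 1 : ℝ) * ρ ^ (b - (n - 1))) := by
  calc
    (2 * r) ^ n * (4 * ρ) ^ b = 2 ^ (n : ℝ) * 4 ^ b * (r ^ (n : ℝ) * ρ ^ b) := by
      rw [← Real.rpow_natCast, Real.mul_rpow (by positivity) hr.le,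
        Real.mul_rpow (by positivity) hρ.le]
      ring
    _ ≤ 2 ^ (n : ℝ) * 4 ^ (n : ℝ) * (r ^ (n : ℝ) * ρ ^ b) := by
      gcongr
      norm_num
    _ = 8 ^ (n : ℝ) * (r ^ (1 + (n - 1) : ℝ) * ρ ^ ((n - 1) + (b - (n - 1)) : ℝ)) := by
      rw [← Real.mul_rpow (by positivity) (by positivity)]
      norm_num
    _ = _ := by
      rw [Real.rpow_add hr, Real.rpow_add hρ, Real.rpow_one]
      ring

lemma IsRadial.setLIntegral_ball_le_of_le_norm [Nontrivial E] (hu : IsRadial u)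
    (hum : Measurable u) {b r : ℝ} (hb0 : 0 ≤ b) (hb : b ≤ finrank ℝ E) {x : E} (hr : 0 < r)
    (hrx : r ≤ ‖x‖) :
    ∫⁻ y in ball x r, u y ≤
      ENNReal.ofReal (8 ^ (finrank ℝ E : ℝ) * r ^ (finrank ℝ E - 1 : ℝ) *
        ‖x‖ ^ (b - (finrank ℝ E - 1))) * ∫⁻ y, ‖y‖ₑ ^ (-b) * u y := by
  have hx : 0 < ‖x‖ := hr.trans_le hrx
  set V := ∫⁻ y, ‖y‖ₑ ^ (-b) * u y
  set c := r * ‖x‖ ^ (finrank ℝ E - 1 : ℝ) with hc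
  have hscaled : ENNReal.ofReal c * ∫⁻ y in ball x r, u y ≤
      ENNReal.ofReal c * (ENNReal.ofReal (8 ^ (finrank ℝ E : ℝ) * r ^ (finrank ℝ E - 1 : ℝ) *
        ‖x‖ ^ (b - (finrank ℝ E - 1))) * V) := by
    calc
      _ ≤ ENNReal.ofReal ((2 * r) ^ finrank ℝ E) * ∫⁻ y in ball 0 (‖x‖ + 3 * r), u y := by
        rw [hc, ← Nat.cast_pred finrank_pos, Real.rpow_natCast]
        exact hu.ofReal_mul_setLIntegral_ball_le hum x hr
      _ ≤ ENNReal.ofReal ((2 * r) ^ finrank ℝ E) * (ENNReal.ofReal ((4 * ‖x‖) ^ b) * V) := by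
        gcongr
        exact (lintegral_mono_set (ball_subset_ball (by linarith))).trans
          (setLIntegral_ball_zero_le_lintegral_enorm_rpow_neg_mul u (by positivity) hb0)
      _ ≤ _ := by
        rw [← mul_assoc, ← mul_assoc, ← ENNReal.ofReal_mul (by positivity),
          ← ENNReal.ofReal_mul (by positivity)]
        gcongr ENNReal.ofReal ?_ * _
        exact two_mul_pow_mul_four_mul_rpow_le hb hr hx
  exact (ENNReal.mul_le_mul_iff_right (ENNReal.ofReal_pos.2 (by positivity)).ne'
    ENNReal.ofReal_ne_top).1 hscaled

lemma IsRadial.setLIntegral_ball_le_rpow_mul [Nontrivial E] (hu : IsRadial u) (hum : Measurable u)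
    {b r : ℝ} (hb0 : 0 ≤ b) (hb : b ≤ finrank ℝ E - 1) {x : E} (hx : x ≠ 0) (hr : 0 < r) :
    ∫⁻ y in ball x r, u y ≤
      ENNReal.ofReal (8 ^ (finrank ℝ E : ℝ) * r ^ (finrank ℝ E - 1 : ℝ) *
        ‖x‖ ^ (b - (finrank ℝ E - 1))) * ∫⁻ y, ‖y‖ₑ ^ (-b) * u y := by
  rcases le_total r ‖x‖ with hrx | hxr
  · exact hu.setLIntegral_ball_le_of_le_norm hum hb0 (by linarith) hr hrx
  set d : ℝ := (finrank ℝ E : ℝ)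
  calc
    _ ≤ ∫⁻ y in ball 0 (2 * r), u y :=
      lintegral_mono_set (ball_subset_ball' (by rw [dist_zero_right]; linarith))
    _ ≤ ENNReal.ofReal ((2 * r) ^ b) * ∫⁻ y, ‖y‖ₑ ^ (-b) * u y :=
      setLIntegral_ball_zero_le_lintegral_enorm_rpow_neg_mul u (by positivity) hb0
    _ ≤ _ := by
      gcongr ENNReal.ofReal ?_ * _
      calc
        (2 * r) ^ b = 2 ^ b * (r ^ (d - 1) * r ^ (b - (d - 1))) := by
          rw [Real.mul_rpow (by positivity) hr.le, ← Real.rpow_add hr]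
          ring_nf
        _ ≤ 8 ^ d * (r ^ (d - 1) * ‖x‖ ^ (b - (d - 1))) := by
          gcongr ?_ * (_ * ?_)
          · exact (Real.rpow_le_rpow_of_exponent_le (by norm_num) (by linarith)).trans
              (Real.rpow_le_rpow (by norm_num) (by norm_num) (by linarith))
          · exact Real.rpow_le_rpow_of_nonpos (norm_pos_iff.2 hx) hxr (by linarith)
        _ = _ := by ring

end RadialAverages

section FractionalPointwise

lemma enorm_sub_rpow_le_ofReal_mul_div {E F : Type*} [NormedAddCommGroup E] [NormedAddCommGroup F]
    {g : E → F} {p e r : ℝ} (hp : 0 < p) (he : 0 ≤ e) (hr : 0 < r) {x y : E} (hy : y ∈ ball x r) :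
    ‖g x - g y‖ₑ ^ p ≤ ENNReal.ofReal (r ^ e) * (‖g x - g y‖ₑ ^ p / ‖x - y‖ₑ ^ e) := by
  rcases eq_or_ne x y with rfl | hxy
  · simp [ENNReal.zero_rpow_of_pos hp]
  have hxy0 : ‖x - y‖ₑ ^ e ≠ 0 := by
    simp [ENNReal.rpow_eq_zero_iff, sub_ne_zero.2 hxy]
  have hxyr : ‖x - y‖ₑ ≤ ENNReal.ofReal r := by
    rw [← edist_eq_enorm_sub, edist_dist, dist_comm]
    exact ENNReal.ofReal_le_ofReal (mem_ball.1 hy).le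
  rw [← mul_div_assoc, ENNReal.le_div_iff_mul_le (.inl hxy0)
    (.inl (ENNReal.rpow_ne_top_of_nonneg he enorm_ne_top)), mul_comm,
    ← ENNReal.ofReal_rpow_of_pos hr]
  gcongr

variable {E F : Type*} [NormedAddCommGroup E] [InnerProductSpace ℝ E] [FiniteDimensional ℝ E]
  [MeasurableSpace E] [BorelSpace E] [NormedAddCommGroup F] {g : E → F} {b p q s : ℝ}

lemma one_le_two_div_rpow_mul_add {t x y : ℝ≥0∞} (ht0 : t ≠ 0) (ht : t ≠ ⊤) (hp : 0 ≤ p)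
    (hq : 0 ≤ q) (h : t ≤ x + y) : 1 ≤ (2 / t) ^ p * x ^ p + (2 / t) ^ q * y ^ q := by
  have hlarge {z : ℝ≥0∞} {e : ℝ} (he : 0 ≤ e) (hz : t ≤ 2 * z) : 1 ≤ (2 / t) ^ e * z ^ e := by
    rw [← ENNReal.mul_rpow_of_nonneg _ _ he, ← ENNReal.mul_div_right_comm]
    have hdiv : 1 ≤ 2 * z / t := by rwa [ENNReal.le_div_iff_mul_le (.inl ht0) (.inl ht), one_mul]
    simpa only [ENNReal.one_rpow] using ENNReal.rpow_le_rpow hdiv he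
  rcases le_total x y with hxy | hyx
  · refine le_add_left (hlarge hq (h.trans ?_))
    rw [two_mul]
    gcongr
  · refine le_add_right (hlarge hp (h.trans ?_))
    rw [two_mul]
    gcongr

lemma volume_ball_le_gagliardoDensity_add (hg : StronglyMeasurable g) (hp : 0 < p) (hq : 0 ≤ q)
    (hs : 0 ≤ s) {x : E} (hx : g x ≠ 0) {r : ℝ} (hr : 0 < r) :
    volume (ball x r) ≤
      (2 / ‖g x‖ₑ) ^ p * ENNReal.ofReal (r ^ (finrank ℝ E + s * p)) * gagliardoDensity s p g x +
        (2 / ‖g x‖ₑ) ^ q * ∫⁻ y in ball x r, ‖g y‖ₑ ^ q := by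
  set e : ℝ := finrank ℝ E + s * p
  have hgx : ‖g x‖ₑ ≠ 0 := enorm_ne_zero.2 hx
  have hdiv : 2 / ‖g x‖ₑ ≠ ⊤ := ENNReal.div_ne_top (by norm_num) hgx
  have hc : (2 / ‖g x‖ₑ) ^ p * ENNReal.ofReal (r ^ e) ≠ ⊤ :=
    ENNReal.mul_ne_top (ENNReal.rpow_ne_top_of_nonneg hp.le hdiv) ENNReal.ofReal_ne_top
  calc
    _ = ∫⁻ _ in ball x r, 1 := by rw [setLIntegral_one]
    _ ≤ ∫⁻ y in ball x r, ((2 / ‖g x‖ₑ) ^ p * ENNReal.ofReal (r ^ e) *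
          (‖g x - g y‖ₑ ^ p / ‖x - y‖ₑ ^ e) + (2 / ‖g x‖ₑ) ^ q * ‖g y‖ₑ ^ q) := by
      refine setLIntegral_mono' measurableSet_ball fun y hy => ?_
      refine (one_le_two_div_rpow_mul_add (x := ‖g x - g y‖ₑ) (y := ‖g y‖ₑ) hgx enorm_ne_top hp.le
        hq (by simpa using enorm_add_le (g x - g y) (g y))).trans ?_
      rw [mul_assoc]
      gcongr
      exact enorm_sub_rpow_le_ofReal_mul_div hp (by positivity) hr hy
    _ ≤ _ := by
      rw [lintegral_add_right _ ((hg.enorm.pow_const q).const_mul _), lintegral_const_mul' _ _ hc,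
        lintegral_const_mul' _ _ (ENNReal.rpow_ne_top_of_nonneg hq hdiv)]
      gcongr
      exact setLIntegral_le_lintegral _ _

lemma IsRadial.volume_real_unitBall_le [Nontrivial E] (hrad : IsRadial g)
    (hg : StronglyMeasurable g) (hp : 0 < p) (hq : 0 ≤ q) (hs : 0 ≤ s) (hb0 : 0 ≤ b)
    (hb : b ≤ finrank ℝ E - 1) (hW : weightedEnergy b q g ≠ ⊤) {x : E} (hx : x ≠ 0)
    (hgx : g x ≠ 0) (hf : gagliardoDensity s p g x ≠ ⊤) {r : ℝ} (hr : 0 < r) :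
    volume.real (ball (0 : E) 1) ≤
      (2 / ‖g x‖) ^ p * (gagliardoDensity s p g x).toReal * r ^ (s * p) +
        (2 / ‖g x‖) ^ q * 8 ^ (finrank ℝ E : ℝ) * ‖x‖ ^ (b - (finrank ℝ E - 1)) *
          (weightedEnergy b q g).toReal / r := by
  set d : ℝ := (finrank ℝ E : ℝ)
  have := norm_pos_iff.2 hx
  have := norm_pos_iff.2 hgx
  have hball : ∫⁻ y in ball x r, ‖g y‖ₑ ^ q ≤
      ENNReal.ofReal (8 ^ d * r ^ (d - 1) * ‖x‖ ^ (b - (d - 1))) * weightedEnergy b q g :=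
    IsRadial.setLIntegral_ball_le_rpow_mul (fun y z hyz => by rw [hrad y z hyz])
      (hg.enorm.pow_const q) hb0 hb hx hr
  have hdiv : 2 / ‖g x‖ₑ ≠ ⊤ := ENNReal.div_ne_top (by norm_num) (enorm_ne_zero.2 hgx)
  have hfirst :
      (2 / ‖g x‖ₑ) ^ p * ENNReal.ofReal (r ^ (d + s * p)) * gagliardoDensity s p g x ≠ ⊤ :=
    ENNReal.mul_ne_top (ENNReal.mul_ne_top (ENNReal.rpow_ne_top_of_nonneg hp.le hdiv)
      ENNReal.ofReal_ne_top) hf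
  have hsecond : (2 / ‖g x‖ₑ) ^ q * (ENNReal.ofReal (8 ^ d * r ^ (d - 1) * ‖x‖ ^ (b - (d - 1))) *
      weightedEnergy b q g) ≠ ⊤ :=
    ENNReal.mul_ne_top (ENNReal.rpow_ne_top_of_nonneg hq hdiv)
      (ENNReal.mul_ne_top ENNReal.ofReal_ne_top hW)
  have hvol := ENNReal.toReal_mono (ENNReal.add_ne_top.2 ⟨hfirst, hsecond⟩) <|
    (volume_ball_le_gagliardoDensity_add hg hp hq hs hgx hr).trans (by gcongr)
  rw [Measure.addHaar_ball _ _ hr.le, ← Real.rpow_natCast, ENNReal.toReal_add hfirst hsecond]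
    at hvol
  simp only [ENNReal.toReal_mul, ← ENNReal.toReal_rpow, ENNReal.toReal_div, toReal_enorm,
    ENNReal.toReal_ofNat, ← measureReal_def] at hvol
  rw [ENNReal.toReal_ofReal (by positivity), ENNReal.toReal_ofReal (by positivity),
    ENNReal.toReal_ofReal (by positivity)] at hvol
  refine le_of_mul_le_mul_left (hvol.trans_eq ?_) (Real.rpow_pos_of_pos hr d)
  rw [Real.rpow_add hr, Real.rpow_sub_one hr.ne']
  ring

lemma rpow_one_add_le_of_forall_le_add_div {ω A B σ : ℝ} (hω : 0 < ω) (hB : 0 < B)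
    (h : ∀ r > 0, ω ≤ A * r ^ σ + B / r) : ω ^ (1 + σ) ≤ 2 ^ (1 + σ) * A * B ^ σ := by
  have hr := h (2 * B / ω) (by positivity)
  have hsecond : B / (2 * B / ω) = ω / 2 := by field_simp
  have hhalf : ω ≤ 2 * (A * (2 * B / ω) ^ σ) := by linarith
  calc
    ω ^ (1 + σ) = ω ^ σ * ω := by rw [add_comm, Real.rpow_add_one hω.ne']
    _ ≤ ω ^ σ * (2 * (A * (2 * B / ω) ^ σ)) := by gcongr
    _ = 2 ^ (1 + σ) * A * B ^ σ := by
      rw [Real.div_rpow (by positivity) hω.le, Real.mul_rpow zero_le_two hB.le, add_comm,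
        Real.rpow_add_one two_ne_zero]
      field_simp

lemma rpow_mul_rpow_le_of_forall_le_add_div {ω t ρ f W c κ σ : ℝ} (hω : 0 < ω) (ht : 0 < t)
    (hρ : 0 < ρ) (hW : 0 < W) (hc : 0 < c)
    (h : ∀ r > 0, ω ≤ (2 / t) ^ p * f * r ^ σ + (2 / t) ^ q * c * ρ ^ (-κ) * W / r) :
    ρ ^ (σ * κ) * t ^ (p + σ * q) ≤
      2 ^ (1 + σ) * 2 ^ (p + σ * q) * c ^ σ / ω ^ (1 + σ) * f * W ^ σ := by
  have hopt := rpow_one_add_le_of_forall_le_add_div hω (by positivity) h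
  have hpow : (2 / t) ^ p * ((2 / t) ^ q * c * ρ ^ (-κ) * W) ^ σ =
      2 ^ (p + σ * q) / t ^ (p + σ * q) * c ^ σ * W ^ σ / ρ ^ (σ * κ) := by
    rw [Real.mul_rpow (by positivity) hW.le, Real.mul_rpow (by positivity) (by positivity),
      Real.mul_rpow (by positivity) hc.le, ← Real.rpow_mul (by positivity), ← Real.rpow_mul hρ.le,
      ← Real.div_rpow zero_le_two ht.le, Real.rpow_add (by positivity), neg_mul, mul_comm κ,
      Real.rpow_neg hρ.le, mul_comm q]
    ring
  calc
    ρ ^ (σ * κ) * t ^ (p + σ * q) =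
        ρ ^ (σ * κ) * t ^ (p + σ * q) * ω ^ (1 + σ) / ω ^ (1 + σ) := by field_simp
    _ ≤ ρ ^ (σ * κ) * t ^ (p + σ * q) * (2 ^ (1 + σ) * ((2 / t) ^ p * f) *
        ((2 / t) ^ q * c * ρ ^ (-κ) * W) ^ σ) / ω ^ (1 + σ) := by gcongr
    _ = ρ ^ (σ * κ) * t ^ (p + σ * q) * 2 ^ (1 + σ) * f * ((2 / t) ^ p *
        ((2 / t) ^ q * c * ρ ^ (-κ) * W) ^ σ) / ω ^ (1 + σ) := by ring
    _ = _ := by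
      rw [hpow]
      field_simp

lemma IsRadial.exists_rpow_mul_le_gagliardoDensity_mul [Nontrivial E] (hp : 0 < p) (hq : 0 ≤ q)
    (hs : 0 ≤ s) :
    ∃ C : ℝ≥0, ∀ b : ℝ, 0 ≤ b → b ≤ finrank ℝ E - 1 → ∀ g : E → F, IsRadial g →
      StronglyMeasurable g → weightedEnergy b q g ≠ 0 → weightedEnergy b q g ≠ ⊤ → ∀ x ≠ 0,
        ‖x‖ₑ ^ (s * p * (finrank ℝ E - 1 - b)) * ‖g x‖ₑ ^ (p + s * p * q) ≤
          C * gagliardoDensity s p g x * weightedEnergy b q g ^ (s * p) := by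
  have hω : 0 < volume.real (ball (0 : E) 1) :=
    ENNReal.toReal_pos (measure_ball_pos _ _ one_pos).ne' measure_ball_lt_top.ne
  set C : ℝ := 2 ^ (1 + s * p) * 2 ^ (p + s * p * q) * (8 ^ (finrank ℝ E : ℝ)) ^ (s * p) /
    volume.real (ball (0 : E) 1) ^ (1 + s * p)
  have hC : 0 < C := by positivity
  refine ⟨C.toNNReal, fun b hb0 hb g hrad hg hW0 hW x hx => ?_⟩
  rcases eq_or_ne (g x) 0 with hgx | hgx
  · simp [hgx, ENNReal.zero_rpow_of_pos (show 0 < p + s * p * q by positivity)]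
  rcases eq_or_ne (gagliardoDensity s p g x) ⊤ with hf | hf
  · have hWs : weightedEnergy b q g ^ (s * p) ≠ 0 := by
      simp [ENNReal.rpow_eq_zero_iff, hW0, hW]
    rw [hf, ENNReal.mul_top (by simpa using hC), ENNReal.top_mul hWs]
    exact le_top
  have hW_pos : 0 < (weightedEnergy b q g).toReal := ENNReal.toReal_pos hW0 hW
  have hreal := rpow_mul_rpow_le_of_forall_le_add_div hω (norm_pos_iff.2 hgx) (norm_pos_iff.2 hx)
    hW_pos (c := 8 ^ (finrank ℝ E : ℝ)) (κ := finrank ℝ E - 1 - b) (by positivity) fun r hr => by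
      rw [neg_sub]
      exact hrad.volume_real_unitBall_le hg hp hq hs hb0 hb hW hx hgx hf hr
  calc
    _ = ENNReal.ofReal (‖x‖ ^ (s * p * (finrank ℝ E - 1 - b)) * ‖g x‖ ^ (p + s * p * q)) := by
      rw [ENNReal.ofReal_mul (by positivity), ← ENNReal.ofReal_rpow_of_pos (norm_pos_iff.2 hx),
        ← ENNReal.ofReal_rpow_of_pos (norm_pos_iff.2 hgx), ofReal_norm, ofReal_norm]
    _ ≤ _ := ENNReal.ofReal_le_ofReal hreal
    _ = _ := by
      rw [ENNReal.ofReal_mul (by positivity), ENNReal.ofReal_mul hC.le,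
        ← ENNReal.ofReal_rpow_of_pos hW_pos, ENNReal.ofReal_toReal hf, ENNReal.ofReal_toReal hW]
      rfl

end FractionalPointwise

section WeightedEnergy

variable {E F : Type*} [NormedAddCommGroup E] [InnerProductSpace ℝ E] [FiniteDimensional ℝ E]
  [MeasurableSpace E] [BorelSpace E] [NormedAddCommGroup F] {g : E → F}

lemma weightedEnergy_eq_zero_iff [Nontrivial E] {b q : ℝ} (hq : 0 < q)
    (hg : StronglyMeasurable g) : weightedEnergy b q g = 0 ↔ g =ᵐ[volume] 0 := by
  have hmeas : Measurable fun x => ‖x‖ₑ ^ (-b) * ‖g x‖ₑ ^ q :=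
    (measurable_enorm.pow_const _).mul (hg.enorm.pow_const _)
  rw [weightedEnergy, lintegral_eq_zero_iff hmeas]
  refine eventually_congr ?_
  filter_upwards [Measure.ae_ne volume (0 : E)] with x hx
  simp [ENNReal.rpow_eq_zero_iff, hq, hq.not_gt, hx]

lemma weightedEnergy_interpolate [Nontrivial E] {b₀ b₁ q₀ q₁ l : ℝ} (hq₀ : 0 ≤ q₀) (hq₁ : 0 ≤ q₁)
    (hl0 : 0 ≤ l) (hl1 : l ≤ 1) (hg : StronglyMeasurable g) :
    weightedEnergy (l * b₀ + (1 - l) * b₁) (l * q₀ + (1 - l) * q₁) g ≤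
      weightedEnergy b₀ q₀ g ^ l * weightedEnergy b₁ q₁ g ^ (1 - l) := by
  have hmeas (b q : ℝ) : AEMeasurable fun x => ‖x‖ₑ ^ (-b) * ‖g x‖ₑ ^ q :=
    ((measurable_enorm.pow_const _).mul (hg.enorm.pow_const _)).aemeasurable
  have hl1' : 0 ≤ 1 - l := sub_nonneg.2 hl1
  calc
    _ = ∫⁻ x, (‖x‖ₑ ^ (-b₀) * ‖g x‖ₑ ^ q₀) ^ l * (‖x‖ₑ ^ (-b₁) * ‖g x‖ₑ ^ q₁) ^ (1 - l) := by
      refine lintegral_congr_ae ?_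
      filter_upwards [Measure.ae_ne volume (0 : E)] with x hx
      rw [ENNReal.mul_rpow_of_nonneg _ _ hl0, ENNReal.mul_rpow_of_nonneg _ _ hl1',
        mul_mul_mul_comm, ← ENNReal.rpow_mul, ← ENNReal.rpow_mul, ← ENNReal.rpow_mul,
        ← ENNReal.rpow_mul, ← ENNReal.rpow_add _ _ (enorm_ne_zero.2 hx) enorm_ne_top,
        ← ENNReal.rpow_add_of_nonneg _ _ (by positivity) (by positivity)]
      ring_nf
    _ ≤ _ := ENNReal.lintegral_mul_norm_pow_le (hmeas b₀ q₀) (hmeas b₁ q₁) hl0 hl1' (by ring)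

lemma IsRadial.exists_weightedEnergy_le_gagliardo_mul [Nontrivial E] {p q s : ℝ} (hp : 0 < p)
    (hq : 0 < q) (hs : 0 ≤ s) :
    ∃ C : ℝ≥0, ∀ b : ℝ, 0 ≤ b → b ≤ finrank ℝ E - 1 → ∀ g : E → F, IsRadial g →
      StronglyMeasurable g → weightedEnergy b q g ≠ ⊤ →
        weightedEnergy (-(s * p * (finrank ℝ E - 1 - b))) (p + s * p * q) g ≤
          C * (∫⁻ x, gagliardoDensity s p g x) * weightedEnergy b q g ^ (s * p) := by
  obtain ⟨C, hC⟩ := IsRadial.exists_rpow_mul_le_gagliardoDensity_mul (E := E) (F := F) hp hq.le hs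
  refine ⟨C, fun b hb0 hb g hrad hg hW => ?_⟩
  rcases eq_or_ne (weightedEnergy b q g) 0 with hW0 | hW0
  · rw [(weightedEnergy_eq_zero_iff (by positivity) hg).2
      ((weightedEnergy_eq_zero_iff hq hg).1 hW0)]
    exact zero_le
  calc
    _ ≤ ∫⁻ x, C * gagliardoDensity s p g x * weightedEnergy b q g ^ (s * p) := by
      refine lintegral_mono_ae ?_
      filter_upwards [Measure.ae_ne volume (0 : E)] with x hx
      rw [neg_neg]
      exact hC b hb0 hb g hrad hg hW0 hW x hx
    _ = _ := by
      rw [lintegral_mul_const' _ _ (ENNReal.rpow_ne_top_of_nonneg (by positivity) hW),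
        lintegral_const_mul' _ _ ENNReal.coe_ne_top]

end WeightedEnergy

section RayIntegration

variable {F : Type*} [NormedAddCommGroup F] [NormedSpace ℝ F]

lemma enorm_le_lintegral_Ioi_deriv [CompleteSpace F] {f : ℝ → F} (hf : ContDiff ℝ 1 f)
    (hfc : HasCompactSupport f) (r : ℝ) : ‖f r‖ₑ ≤ ∫⁻ t in Ioi r, ‖deriv f t‖ₑ := by
  rw [← enorm_neg, ← hfc.integral_Ioi_deriv_eq hf r]
  exact enorm_integral_le_lintegral_enorm _

lemma enorm_deriv_eq_enorm_fderiv (f : ℝ → F) (t : ℝ) : ‖deriv f t‖ₑ = ‖fderiv ℝ f t‖ₑ := by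
  rw [← ofReal_norm, ← ofReal_norm, norm_deriv_eq_norm_fderiv]

lemma enorm_deriv_norm_rpow_le {H : Type*} [NormedAddCommGroup H] [InnerProductSpace ℝ H]
    {f : ℝ → H} (hf : Differentiable ℝ f) {k : ℝ} (hk : 1 < k) (t : ℝ) :
    ‖deriv (fun t => ‖f t‖ ^ k) t‖ₑ ≤ ENNReal.ofReal k * (‖f t‖ₑ ^ (k - 1) * ‖deriv f t‖ₑ) := by
  have h := enorm_fderiv_norm_rpow_le hf (x := t) (Real.one_lt_toNNReal.2 hk)
  rwa [Real.coe_toNNReal k (by linarith), mul_assoc, ← enorm_deriv_eq_enorm_fderiv,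
    ← enorm_deriv_eq_enorm_fderiv] at h

lemma enorm_rpow_le_lintegral_Ioi_deriv {φ : ℝ → F} (hφ : ContDiff ℝ 1 φ)
    (hφc : HasCompactSupport φ) {k : ℝ} (hk : 1 ≤ k) (r : ℝ) :
    ‖φ r‖ₑ ^ k ≤ ENNReal.ofReal k * ∫⁻ t in Ioi r, ‖φ t‖ₑ ^ (k - 1) * ‖deriv φ t‖ₑ := by
  -- A norming functional at `φ r` reduces the claim to the scalar function `ψ`.
  obtain ⟨ℓ, hℓ, hℓr⟩ := exists_dual_vector'' ℝ (φ r)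
  have hℓ' : ‖ℓ‖ₑ ≤ 1 := by simpa [← ofReal_norm] using hℓ
  set ψ : ℝ → ℝ := fun t => ℓ (φ t)
  have hψ : ContDiff ℝ 1 ψ := ℓ.contDiff.comp hφ
  have hψc : HasCompactSupport ψ := hφc.comp_left (map_zero ℓ)
  have hψr : ‖ψ r‖ₑ = ‖φ r‖ₑ := by simp [ψ, hℓr]
  have hψφ (t : ℝ) : ‖ψ t‖ₑ ≤ ‖φ t‖ₑ := (ℓ.le_opENorm _).trans (mul_le_of_le_one_left' hℓ')
  have hdψ (t : ℝ) : ‖deriv ψ t‖ₑ ≤ ‖deriv φ t‖ₑ := by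
    have : deriv ψ t = ℓ (deriv φ t) :=
      (ℓ.hasFDerivAt.comp_hasDerivAt t (hφ.differentiable one_ne_zero t).hasDerivAt).deriv
    rw [this]
    exact (ℓ.le_opENorm _).trans (mul_le_of_le_one_left' hℓ')
  rcases hk.eq_or_lt with rfl | hk
  · simpa [hψr] using (enorm_le_lintegral_Ioi_deriv hψ hψc r).trans (lintegral_mono hdψ)
  have hdψk (t : ℝ) :
      ‖deriv (fun t => ‖ψ t‖ ^ k) t‖ₑ ≤ ENNReal.ofReal k * (‖φ t‖ₑ ^ (k - 1) * ‖deriv φ t‖ₑ) := by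
    refine (enorm_deriv_norm_rpow_le (hψ.differentiable one_ne_zero) hk t).trans ?_
    gcongr
    exacts [hψφ t, hdψ t]
  calc
    ‖φ r‖ₑ ^ k = ‖‖ψ r‖ ^ k‖ₑ := by
      rw [Real.enorm_rpow_of_nonneg (norm_nonneg _) (by linarith), enorm_norm, hψr]
    _ ≤ ∫⁻ t in Ioi r, ‖deriv (fun t => ‖ψ t‖ ^ k) t‖ₑ :=
      enorm_le_lintegral_Ioi_deriv (hψ.norm_rpow hk)
        (hψc.comp_left (g := fun t => ‖t‖ ^ k) (by simp [Real.zero_rpow (by linarith : k ≠ 0)])) r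
    _ ≤ ∫⁻ t in Ioi r, ENNReal.ofReal k * (‖φ t‖ₑ ^ (k - 1) * ‖deriv φ t‖ₑ) :=
      lintegral_mono hdψk
    _ = _ := lintegral_const_mul' _ _ ENNReal.ofReal_ne_top

end RayIntegration

section PolarCoordinates

variable {E : Type*} [NormedAddCommGroup E] [NormedSpace ℝ E] [FiniteDimensional ℝ E]
  [MeasurableSpace E] [BorelSpace E] [Nontrivial E]

lemma lintegral_fun_norm_addHaar (μ : Measure E) [μ.IsAddHaarMeasure] {f : ℝ → ℝ≥0∞}
    (hf : Measurable f) :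
    ∫⁻ x, f ‖x‖ ∂μ =
      finrank ℝ E * μ (ball 0 1) * ∫⁻ t in Ioi 0, ENNReal.ofReal (t ^ (finrank ℝ E - 1)) * f t := by
  calc
    ∫⁻ x, f ‖x‖ ∂μ = ∫⁻ x : ({0}ᶜ : Set E), f ‖x.1‖ ∂μ.comap (↑) := by
      rw [lintegral_subtype_comap (measurableSet_singleton _).compl fun x => f ‖x‖,
        restrict_compl_singleton]
    _ = ∫⁻ x, 1 * f x.2 ∂μ.toSphere.prod (.volumeIoiPow (finrank ℝ E - 1)) := by
      simpa using μ.measurePreserving_homeomorphUnitSphereProd.lintegral_comp_emb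
        (Homeomorph.measurableEmbedding _) (f ∘ Subtype.val ∘ Prod.snd)
    _ = μ.toSphere univ * ∫⁻ t : Ioi (0 : ℝ), f t ∂.volumeIoiPow (finrank ℝ E - 1) := by
      rw [lintegral_prod_mul (f := fun _ => 1) (g := fun t : Ioi (0 : ℝ) => f t) (by fun_prop)
        (by fun_prop), lintegral_one]
    _ = _ := by
      rw [Measure.volumeIoiPow, lintegral_withDensity_eq_lintegral_mul _ (by fun_prop)
        (by fun_prop), μ.toSphere_apply_univ]
      congr 1
      exact lintegral_subtype_comap measurableSet_Ioi
        fun t => ENNReal.ofReal (t ^ (finrank ℝ E - 1)) * f t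

end PolarCoordinates

section Gradient

variable {E F : Type*} [NormedAddCommGroup E] [NormedAddCommGroup F] [NormedSpace ℝ F] {g : E → F}

lemma IsRadial.enorm_deriv_smul_le [NormedSpace ℝ E] (hrad : IsRadial g) (hg : Differentiable ℝ g)
    {v : E} (hv : ‖v‖ = 1) (y : E) :
    ‖deriv (fun t : ℝ => g (t • v)) ‖y‖‖ₑ ≤ ‖fderiv ℝ g y‖ₑ := by
  obtain ⟨u, hu, huy⟩ : ∃ u : E, ‖u‖ = 1 ∧ ‖y‖ • u = y := by
    rcases eq_or_ne y 0 with rfl | hy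
    · exact ⟨v, hv, by simp⟩
    · exact ⟨‖y‖⁻¹ • y, norm_smul_inv_norm hy, smul_inv_smul₀ (norm_ne_zero_iff.2 hy) y⟩
  have hvu : (fun t : ℝ => g (t • v)) = fun t => g (t • u) :=
    funext fun t => hrad _ _ (by simp [norm_smul, hu, hv])
  have hray : HasDerivAt (fun t : ℝ => t • u) u ‖y‖ := by
    simpa using (hasDerivAt_id ‖y‖).smul_const u
  have hderiv : deriv (fun t : ℝ => g (t • u)) ‖y‖ = fderiv ℝ g (‖y‖ • u) u :=
    ((hg _).hasFDerivAt.comp_hasDerivAt _ hray).deriv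
  rw [hvu, hderiv, huy]
  simpa [← ofReal_norm u, hu] using (fderiv ℝ g y).le_opENorm u

lemma enorm_rpow_mul_le_of_norm_le [NormedSpace ℝ E] {d b q p : ℝ} {x y : E} (hp : 1 ≤ p)
    (hb0 : 0 ≤ b) (hb : b ≤ d - 1) (hx : x ≠ 0) (hxy : ‖x‖ ≤ ‖y‖) :
    ‖y‖ₑ ^ (1 - d) * (‖g y‖ₑ ^ (q * (1 - p⁻¹)) * ‖fderiv ℝ g y‖ₑ) ≤
      ‖x‖ₑ ^ (1 - d + b * (1 - p⁻¹)) *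
        ((‖fderiv ℝ g y‖ₑ ^ p) ^ p⁻¹ * (‖y‖ₑ ^ (-b) * ‖g y‖ₑ ^ q) ^ (1 - p⁻¹)) := by
  have hp0 : 0 < p := by linarith
  have hθ0 : 0 ≤ 1 - p⁻¹ := sub_nonneg.2 (inv_le_one_of_one_le₀ hp)
  have hθ1 : 1 - p⁻¹ ≤ 1 := by linarith [inv_pos.2 hp0]
  have hexp : 1 - d + b * (1 - p⁻¹) ≤ 0 := by nlinarith
  have hy : ‖y‖ₑ ≠ 0 := enorm_ne_zero.2 fun h => hx (norm_le_zero_iff.1 (by simpa [h] using hxy))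
  have hxy' : ‖x‖ₑ ≤ ‖y‖ₑ := enorm_le_iff_norm_le.2 hxy
  calc
    _ = ‖y‖ₑ ^ (1 - d + b * (1 - p⁻¹)) *
        ((‖fderiv ℝ g y‖ₑ ^ p) ^ p⁻¹ * (‖y‖ₑ ^ (-b) * ‖g y‖ₑ ^ q) ^ (1 - p⁻¹)) := by
      rw [ENNReal.mul_rpow_of_nonneg _ _ hθ0, ← ENNReal.rpow_mul, ← ENNReal.rpow_mul,
        ← ENNReal.rpow_mul, mul_inv_cancel₀ hp0.ne', ENNReal.rpow_one,
        ENNReal.rpow_add _ _ hy enorm_ne_top]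
      have hcancel : ‖y‖ₑ ^ (b * (1 - p⁻¹)) * ‖y‖ₑ ^ (-b * (1 - p⁻¹)) = 1 := by
        rw [← ENNReal.rpow_add _ _ hy enorm_ne_top]
        simp
      calc
        _ = (‖y‖ₑ ^ (b * (1 - p⁻¹)) * ‖y‖ₑ ^ (-b * (1 - p⁻¹))) *
            (‖y‖ₑ ^ (1 - d) * (‖g y‖ₑ ^ (q * (1 - p⁻¹)) * ‖fderiv ℝ g y‖ₑ)) := by
          rw [hcancel, one_mul]
        _ = _ := by ring
    _ ≤ _ := by
      refine mul_le_mul_left ?_ _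
      rw [← neg_neg (1 - d + _), ENNReal.rpow_neg, ENNReal.rpow_neg ‖x‖ₑ, ENNReal.inv_le_inv]
      exact ENNReal.rpow_le_rpow hxy' (neg_nonneg.2 hexp)

variable [InnerProductSpace ℝ E] [FiniteDimensional ℝ E] [MeasurableSpace E] [BorelSpace E]

lemma setLIntegral_norm_lt_le_mul {d b q p : ℝ} (hp : 1 ≤ p) (hb0 : 0 ≤ b) (hb : b ≤ d - 1)
    (hg : ContDiff ℝ 1 g) {x : E} (hx : x ≠ 0) :
    ∫⁻ y in {y | ‖x‖ < ‖y‖}, ‖y‖ₑ ^ (1 - d) * (‖g y‖ₑ ^ (q * (1 - p⁻¹)) * ‖fderiv ℝ g y‖ₑ) ≤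
      ‖x‖ₑ ^ (1 - d + b * (1 - p⁻¹)) *
        ((∫⁻ y, ‖fderiv ℝ g y‖ₑ ^ p) ^ p⁻¹ * weightedEnergy b q g ^ (1 - p⁻¹)) := by
  have hset : MeasurableSet {y : E | ‖x‖ < ‖y‖} := measurableSet_lt measurable_const measurable_norm
  have hfderiv : Measurable fun y => ‖fderiv ℝ g y‖ₑ ^ p :=
    (hg.continuous_fderiv one_ne_zero).enorm.measurable.pow_const _
  have hweight : Measurable fun y => ‖y‖ₑ ^ (-b) * ‖g y‖ₑ ^ q :=
    (measurable_enorm.pow_const _).mul (hg.continuous.enorm.measurable.pow_const _)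
  calc
    _ ≤ ∫⁻ y in {y | ‖x‖ < ‖y‖}, ‖x‖ₑ ^ (1 - d + b * (1 - p⁻¹)) *
        ((‖fderiv ℝ g y‖ₑ ^ p) ^ p⁻¹ * (‖y‖ₑ ^ (-b) * ‖g y‖ₑ ^ q) ^ (1 - p⁻¹)) :=
      setLIntegral_mono' hset fun y hy =>
        enorm_rpow_mul_le_of_norm_le hp hb0 hb hx (le_of_lt hy)
    _ = ‖x‖ₑ ^ (1 - d + b * (1 - p⁻¹)) * ∫⁻ y in {y | ‖x‖ < ‖y‖},
        (‖fderiv ℝ g y‖ₑ ^ p) ^ p⁻¹ * (‖y‖ₑ ^ (-b) * ‖g y‖ₑ ^ q) ^ (1 - p⁻¹) :=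
      lintegral_const_mul _ ((hfderiv.pow_const _).mul (hweight.pow_const _))
    _ ≤ ‖x‖ₑ ^ (1 - d + b * (1 - p⁻¹)) *
        ∫⁻ y, (‖fderiv ℝ g y‖ₑ ^ p) ^ p⁻¹ * (‖y‖ₑ ^ (-b) * ‖g y‖ₑ ^ q) ^ (1 - p⁻¹) :=
      mul_le_mul_right (setLIntegral_le_lintegral _ _) _
    _ ≤ _ := by
      gcongr
      exact ENNReal.lintegral_mul_norm_pow_le hfderiv.aemeasurable hweight.aemeasurable
        (by positivity) (sub_nonneg.2 (inv_le_one_of_one_le₀ hp)) (by ring)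

variable [Nontrivial E]

lemma setLIntegral_norm_lt_rpow_mul {r : ℝ} (hr : 0 ≤ r) {f : ℝ → ℝ≥0∞} (hf : Measurable f) :
    ∫⁻ y : E in {y | r < ‖y‖}, ‖y‖ₑ ^ (1 - finrank ℝ E : ℝ) * f ‖y‖ =
      finrank ℝ E * volume (ball (0 : E) 1) * ∫⁻ t in Ioi r, f t := by
  have hmeas : Measurable fun t : ℝ => ‖t‖ₑ ^ (1 - finrank ℝ E : ℝ) * f t := by fun_prop
  have hset : MeasurableSet {y : E | r < ‖y‖} := measurableSet_lt measurable_const measurable_norm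
  have hcancel (t : ℝ) (ht : t ∈ Ioi r) :
      ENNReal.ofReal (t ^ (finrank ℝ E - 1)) * (‖t‖ₑ ^ (1 - finrank ℝ E : ℝ) * f t) = f t := by
    have ht0 : 0 < t := hr.trans_lt ht
    rw [ENNReal.ofReal_pow ht0.le, Real.enorm_of_nonneg ht0.le, ← ENNReal.rpow_natCast,
      Nat.cast_pred finrank_pos, ← mul_assoc,
      ← ENNReal.rpow_add _ _ (ENNReal.ofReal_pos.2 ht0).ne' ENNReal.ofReal_ne_top]
    simp
  calc
    _ = ∫⁻ y : E, (Ioi r).indicator (fun t => ‖t‖ₑ ^ (1 - finrank ℝ E : ℝ) * f t) ‖y‖ := by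
      rw [← lintegral_indicator hset]
      simp [indicator]
    _ = finrank ℝ E * volume (ball (0 : E) 1) * ∫⁻ t in Ioi 0, (Ioi r).indicator
          (fun t => ENNReal.ofReal (t ^ (finrank ℝ E - 1)) *
            (‖t‖ₑ ^ (1 - finrank ℝ E : ℝ) * f t)) t := by
      rw [lintegral_fun_norm_addHaar _ (hmeas.indicator measurableSet_Ioi)]
      simp [indicator]
    _ = _ := by
      rw [setLIntegral_indicator measurableSet_Ioi, Ioi_inter_Ioi, sup_eq_left.2 hr,
        setLIntegral_congr_fun measurableSet_Ioi hcancel]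

lemma IsRadial.mul_enorm_rpow_le_lintegral (hrad : IsRadial g) (hg : ContDiff ℝ 1 g)
    (hgc : HasCompactSupport g) {k : ℝ} (hk : 1 ≤ k) (x : E) :
    finrank ℝ E * volume (ball (0 : E) 1) * ‖g x‖ₑ ^ k ≤ ENNReal.ofReal k *
      ∫⁻ y in {y | ‖x‖ < ‖y‖},
        ‖y‖ₑ ^ (1 - finrank ℝ E : ℝ) * (‖g y‖ₑ ^ (k - 1) * ‖fderiv ℝ g y‖ₑ) := by
  obtain ⟨v, hv⟩ := exists_norm_eq E zero_le_one
  have hv0 : v ≠ 0 := norm_ne_zero_iff.1 (hv ▸ one_ne_zero)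
  set φ : ℝ → F := fun t => g (t • v)
  have hφ : ContDiff ℝ 1 φ := hg.comp (contDiff_id.smul contDiff_const)
  have hφc : HasCompactSupport φ := hgc.comp_isClosedEmbedding (isClosedEmbedding_smul_left hv0)
  have hgφ (y : E) : g y = φ ‖y‖ := hrad _ _ (by simp [norm_smul, hv])
  have hmeas : Measurable fun t => ‖φ t‖ₑ ^ (k - 1) * ‖deriv φ t‖ₑ :=
    (hφ.continuous.enorm.measurable.pow_const _).mul (hφ.continuous_deriv le_rfl).enorm.measurable
  calc
    _ ≤ finrank ℝ E * volume (ball (0 : E) 1) *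
        (ENNReal.ofReal k * ∫⁻ t in Ioi ‖x‖, ‖φ t‖ₑ ^ (k - 1) * ‖deriv φ t‖ₑ) := by
      rw [hgφ x]
      gcongr
      exact enorm_rpow_le_lintegral_Ioi_deriv hφ hφc hk ‖x‖
    _ = ENNReal.ofReal k * ∫⁻ y in {y | ‖x‖ < ‖y‖},
        ‖y‖ₑ ^ (1 - finrank ℝ E : ℝ) * (‖φ ‖y‖‖ₑ ^ (k - 1) * ‖deriv φ ‖y‖‖ₑ) := by
      rw [setLIntegral_norm_lt_rpow_mul (norm_nonneg x) hmeas]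
      ring
    _ ≤ _ := by
      gcongr with y
      · rw [hgφ y]
      · exact hrad.enorm_deriv_smul_le (hg.differentiable one_ne_zero) hv y

lemma IsRadial.exists_enorm_rpow_le_fderiv_mul {p q : ℝ} (hp : 1 ≤ p) (hq : 0 ≤ q) :
    ∃ C : ℝ≥0, ∀ b : ℝ, 0 ≤ b → b ≤ finrank ℝ E - 1 → ∀ g : E → F, IsRadial g →
      ContDiff ℝ 1 g → HasCompactSupport g → ∀ x ≠ 0,
        ‖g x‖ₑ ^ (p + q * (p - 1)) ≤ C * (∫⁻ y, ‖fderiv ℝ g y‖ₑ ^ p) *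
          weightedEnergy b q g ^ (p - 1) * ‖x‖ₑ ^ (p * (1 - finrank ℝ E) + b * (p - 1)) := by
  have hp0 : 0 < p := by linarith
  have hθ : 0 ≤ 1 - p⁻¹ := sub_nonneg.2 (inv_le_one_of_one_le₀ hp)
  have hθp : (1 - p⁻¹) * p = p - 1 := by field_simp
  set k : ℝ := 1 + q * (1 - p⁻¹)
  set A : ℝ≥0∞ := finrank ℝ E * volume (ball (0 : E) 1)
  have hA0 : A ≠ 0 := mul_ne_zero (Nat.cast_ne_zero.2 finrank_pos.ne')
    (measure_ball_pos volume _ one_pos).ne'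
  have hA : A ≠ ⊤ := ENNReal.mul_ne_top (ENNReal.natCast_ne_top _) measure_ball_lt_top.ne
  have hC : (A⁻¹ * ENNReal.ofReal k) ^ p ≠ ⊤ := ENNReal.rpow_ne_top_of_nonneg hp0.le
    (ENNReal.mul_ne_top (ENNReal.inv_ne_top.2 hA0) ENNReal.ofReal_ne_top)
  refine ⟨((A⁻¹ * ENNReal.ofReal k) ^ p).toNNReal, fun b hb0 hb g hrad hg hgc x hx => ?_⟩
  have hray := hrad.mul_enorm_rpow_le_lintegral hg hgc (by nlinarith : 1 ≤ k) x
  rw [mul_comm, ← ENNReal.le_div_iff_mul_le (.inl hA0) (.inl hA), ENNReal.div_eq_inv_mul,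
    ← mul_assoc, show k - 1 = q * (1 - p⁻¹) from add_sub_cancel_left _ _] at hray
  calc
    _ = (‖g x‖ₑ ^ k) ^ p := by
      rw [← ENNReal.rpow_mul]
      congr 1
      linear_combination (-q) * hθp
    _ ≤ _ := ENNReal.rpow_le_rpow (hray.trans
      (mul_le_mul_right (setLIntegral_norm_lt_le_mul hp hb0 hb hg hx) _)) hp0.le
    _ = _ := by
      rw [ENNReal.coe_toNNReal hC]
      simp only [ENNReal.mul_rpow_of_nonneg _ _ hp0.le, ← ENNReal.rpow_mul, hθp,
        inv_mul_cancel₀ hp0.ne', ENNReal.rpow_one]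
      rw [show (1 - (finrank ℝ E : ℝ) + b * (1 - p⁻¹)) * p =
        p * (1 - finrank ℝ E) + b * (p - 1) by linear_combination b * hθp]
      ring

lemma IsRadial.exists_weightedEnergy_le_fderiv_mul {p q : ℝ} (hp : 1 ≤ p) (hq : 0 ≤ q) :
    ∃ C : ℝ≥0, ∀ b : ℝ, 0 ≤ b → b ≤ finrank ℝ E - 1 → ∀ g : E → F, IsRadial g →
      ContDiff ℝ 1 g → HasCompactSupport g →
        weightedEnergy (-(p * (finrank ℝ E - 1 - b))) (p + p * q) g ≤
          C * (∫⁻ x, ‖fderiv ℝ g x‖ₑ ^ p) * weightedEnergy b q g ^ p := by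
  obtain ⟨C, hC⟩ := IsRadial.exists_enorm_rpow_le_fderiv_mul (E := E) (F := F) hp hq
  refine ⟨C, fun b hb0 hb g hrad hg hgc => ?_⟩
  have hmeas : Measurable fun x => ‖x‖ₑ ^ (-b) * ‖g x‖ₑ ^ q :=
    (measurable_enorm.pow_const _).mul (hg.continuous.enorm.measurable.pow_const _)
  set J := ∫⁻ x, ‖fderiv ℝ g x‖ₑ ^ p
  set W := weightedEnergy b q g
  calc
    _ ≤ ∫⁻ x, C * J * W ^ (p - 1) * (‖x‖ₑ ^ (-b) * ‖g x‖ₑ ^ q) := by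
      refine lintegral_mono_ae ?_
      filter_upwards [Measure.ae_ne volume (0 : E)] with x hx
      rw [neg_neg]
      calc
        _ = ‖x‖ₑ ^ (p * (finrank ℝ E - 1 - b)) * (‖g x‖ₑ ^ (p + q * (p - 1)) * ‖g x‖ₑ ^ q) := by
          rw [← ENNReal.rpow_add_of_nonneg _ _ (by nlinarith) hq]
          ring_nf
        _ ≤ ‖x‖ₑ ^ (p * (finrank ℝ E - 1 - b)) * (C * J * W ^ (p - 1) *
            ‖x‖ₑ ^ (p * (1 - finrank ℝ E) + b * (p - 1)) * ‖g x‖ₑ ^ q) := by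
          gcongr
          exact hC b hb0 hb g hrad hg hgc x hx
        _ = C * J * W ^ (p - 1) * (‖x‖ₑ ^ (p * (finrank ℝ E - 1 - b)) *
            ‖x‖ₑ ^ (p * (1 - finrank ℝ E) + b * (p - 1)) * ‖g x‖ₑ ^ q) := by ring
        _ = _ := by
          rw [← ENNReal.rpow_add _ _ (enorm_ne_zero.2 hx) enorm_ne_top]
          ring_nf
    _ = C * J * W ^ (p - 1) * W := lintegral_const_mul _ hmeas
    _ = _ := by
      rw [mul_assoc]
      congr 1
      nth_rw 2 [← ENNReal.rpow_one W]
      rw [← ENNReal.rpow_add_of_nonneg _ _ (by linarith) zero_le_one, sub_add_cancel]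

end Gradient

section Finiteness

variable {E F : Type*} [NormedAddCommGroup E] [NormedAddCommGroup F] {g : E → F}

lemma exists_enorm_sub_le_mul_min {L : ℝ≥0} (hL : LipschitzWith L g) (hgc : HasCompactSupport g) :
    ∃ K : ℝ≥0, ∀ x y, ‖g x - g y‖ₑ ≤ K * min ‖x - y‖ₑ 1 := by
  obtain ⟨M, hM⟩ := hgc.exists_bound_of_continuous hL.continuous
  refine ⟨max L (M.toNNReal + M.toNNReal), fun x y => ?_⟩
  have hMx (x : E) : ‖g x‖ₑ ≤ M.toNNReal := by
    rw [← ofReal_norm]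
    exact ENNReal.ofReal_le_ofReal (hM x)
  rcases le_total ‖x - y‖ₑ 1 with h | h
  · rw [min_eq_left h, ← edist_eq_enorm_sub, ← edist_eq_enorm_sub]
    refine (hL x y).trans (mul_le_mul_left ?_ _)
    exact_mod_cast le_max_left _ _
  · rw [min_eq_right h, mul_one]
    refine (enorm_sub_le.trans (add_le_add (hMx x) (hMx y))).trans ?_
    exact_mod_cast le_max_right _ _

variable [InnerProductSpace ℝ E] [FiniteDimensional ℝ E] [MeasurableSpace E] [BorelSpace E]

lemma weightedEnergy_ne_top [Nontrivial E] {b q : ℝ} (hb : b < finrank ℝ E) (hq : 0 < q)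
    (hg : Continuous g) (hgc : HasCompactSupport g) : weightedEnergy b q g ≠ ⊤ := by
  have hweight : LocallyIntegrable fun x : E => ‖x‖ ^ (-b) := by
    refine locallyIntegrable_of_norm_le_rpow (C := 1) finrank_pos hb (.of_forall fun x => ?_)
      (by fun_prop : Measurable fun x : E => ‖x‖ ^ (-b)).aestronglyMeasurable
    rw [one_mul, Real.norm_of_nonneg (by positivity)]
  have hpow : HasCompactSupport fun x => ‖g x‖ ^ q :=
    hgc.comp_left (g := fun v : F => ‖v‖ ^ q) (by simp [hq.ne'])
  have hint := hweight.integrable_smul_left_of_hasCompactSupport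
    (hg.norm.rpow_const fun _ => .inr hq.le) hpow
  refine ne_of_eq_of_ne (lintegral_congr_ae ?_) hint.hasFiniteIntegral.ne
  filter_upwards [Measure.ae_ne volume (0 : E)] with x hx
  rw [smul_eq_mul, enorm_mul, mul_comm, Real.enorm_rpow_of_nonneg (norm_nonneg _) hq.le, enorm_norm,
    ← ofReal_norm x, ENNReal.ofReal_rpow_of_pos (norm_pos_iff.2 hx),
    Real.enorm_of_nonneg (by positivity)]

lemma lintegral_enorm_fderiv_rpow_ne_top [NormedSpace ℝ F] {p : ℝ} (hp : 0 < p)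
    (hg : ContDiff ℝ 1 g) (hgc : HasCompactSupport g) : ∫⁻ x, ‖fderiv ℝ g x‖ₑ ^ p ≠ ⊤ := by
  have hpow : HasCompactSupport fun x => ‖fderiv ℝ g x‖ ^ p :=
    (hgc.fderiv ℝ).comp_left (g := fun v : E →L[ℝ] F => ‖v‖ ^ p) (by simp [hp.ne'])
  have hint : Integrable fun x => ‖fderiv ℝ g x‖ ^ p :=
    ((hg.continuous_fderiv one_ne_zero).norm.rpow_const fun _ =>
      .inr hp.le).integrable_of_hasCompactSupport hpow
  simpa only [HasFiniteIntegral, Real.enorm_rpow_of_nonneg (norm_nonneg _) hp.le, enorm_norm]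
    using hint.hasFiniteIntegral.ne

lemma lintegral_Ioi_min_rpow_mul_ne_top {p σ : ℝ} (hσ : 0 < σ) (hσp : σ < p) :
    ∫⁻ t in Ioi (0 : ℝ), min ‖t‖ₑ 1 ^ p * ENNReal.ofReal (t ^ (-σ - 1)) ≠ ⊤ := by
  have hp : 0 ≤ p := (hσ.trans hσp).le
  have hsmall : IntegrableOn (fun t : ℝ => t ^ (p - σ - 1)) (Ioo 0 1) :=
    (intervalIntegral.integrableOn_Ioo_rpow_iff one_pos).2 (by linarith)
  have hlarge : IntegrableOn (fun t : ℝ => t ^ (-σ - 1)) (Ici 1) :=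
    (integrableOn_Ici_iff_integrableOn_Ioi).2 (integrableOn_Ioi_rpow_of_lt (by linarith) one_pos)
  rw [← Ioo_union_Ici_eq_Ioi (zero_lt_one' ℝ)]
  refine ne_top_of_le_ne_top (ENNReal.add_ne_top.2
    ⟨hsmall.setLIntegral_lt_top.ne, hlarge.setLIntegral_lt_top.ne⟩)
    ((lintegral_union_le _ _ _).trans (add_le_add ?_ ?_))
  · refine setLIntegral_mono' measurableSet_Ioo fun t ht => ?_
    calc
      _ ≤ ‖t‖ₑ ^ p * ENNReal.ofReal (t ^ (-σ - 1)) := by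
        gcongr
        exact min_le_left _ _
      _ = ENNReal.ofReal (t ^ (p - σ - 1)) := by
        rw [Real.enorm_of_nonneg ht.1.le, ENNReal.ofReal_rpow_of_pos ht.1,
          ← ENNReal.ofReal_mul (Real.rpow_nonneg ht.1.le _), ← Real.rpow_add ht.1]
        ring_nf
  · refine setLIntegral_mono' measurableSet_Ici fun t _ => mul_le_of_le_one_left zero_le ?_
    exact ENNReal.rpow_le_one (min_le_right _ _) hp

lemma lintegral_min_enorm_rpow_div_ne_top [Nontrivial E] {s p : ℝ} (hp : 0 < p) (hs0 : 0 < s)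
    (hs1 : s < 1) :
    ∫⁻ h : E, min ‖h‖ₑ 1 ^ p / ‖h‖ₑ ^ (finrank ℝ E + s * p) ≠ ⊤ := by
  have hpolar (t : ℝ) (ht : t ∈ Ioi 0) : ENNReal.ofReal (t ^ (finrank ℝ E - 1)) *
      (min ‖t‖ₑ 1 ^ p / ‖t‖ₑ ^ (finrank ℝ E + s * p)) =
        min ‖t‖ₑ 1 ^ p * ENNReal.ofReal (t ^ (-(s * p) - 1)) := by
    have ht0 : 0 < t := ht
    rw [Real.enorm_of_nonneg ht0.le, ENNReal.div_eq_inv_mul, ← ENNReal.rpow_neg,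
      ENNReal.ofReal_rpow_of_pos ht0, ← mul_assoc, ← ENNReal.ofReal_mul (by positivity),
      ← Real.rpow_natCast, ← Real.rpow_add ht0, Nat.cast_pred finrank_pos, mul_comm]
    ring_nf
  have hmeas : Measurable fun t : ℝ => min ‖t‖ₑ 1 ^ p / ‖t‖ₑ ^ (finrank ℝ E + s * p) := by fun_prop
  calc
    _ = finrank ℝ E * volume (ball (0 : E) 1) *
        ∫⁻ t in Ioi (0 : ℝ), min ‖t‖ₑ 1 ^ p * ENNReal.ofReal (t ^ (-(s * p) - 1)) := by
      rw [← setLIntegral_congr_fun measurableSet_Ioi hpolar, ← lintegral_fun_norm_addHaar _ hmeas]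
      simp only [enorm_norm]
    _ ≠ ⊤ := ENNReal.mul_ne_top
      (ENNReal.mul_ne_top (ENNReal.natCast_ne_top _) measure_ball_lt_top.ne)
      (lintegral_Ioi_min_rpow_mul_ne_top (by positivity) (by nlinarith))

lemma measurable_uncurry_gagliardo (hg : StronglyMeasurable g) (s p : ℝ) :
    Measurable (Function.uncurry fun x y =>
      ‖g x - g y‖ₑ ^ p / ‖x - y‖ₑ ^ (finrank ℝ E + s * p)) :=
  (((hg.comp_measurable measurable_fst).sub (hg.comp_measurable measurable_snd)).enorm.pow_const
    _).div (measurable_sub.enorm.pow_const _)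

lemma lintegral_gagliardoDensity_le_two_mul_setLIntegral {s p : ℝ} (hp : 0 < p)
    (hg : StronglyMeasurable g) {S : Set E} (hS : MeasurableSet S) (hgS : Function.support g ⊆ S) :
    ∫⁻ x, gagliardoDensity s p g x ≤ 2 * ∫⁻ x in S, gagliardoDensity s p g x := by
  set K : E → E → ℝ≥0∞ := fun x y => ‖g x - g y‖ₑ ^ p / ‖x - y‖ₑ ^ (finrank ℝ E + s * p) with hK
  have hmeas : Measurable (Function.uncurry K) := measurable_uncurry_gagliardo hg s p
  have hsymm (x y : E) : K x y = K y x := by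
    simp only [hK, enorm_sub_rev (g x), enorm_sub_rev x]
  have hle (x : E) : ∫⁻ y, K x y ≤ S.indicator (fun x => ∫⁻ y, K x y) x + ∫⁻ y in S, K x y := by
    by_cases hx : x ∈ S
    · simp [hx]
    · rw [indicator_of_notMem hx, zero_add, ← lintegral_indicator hS]
      refine lintegral_mono fun y => ?_
      by_cases hy : y ∈ S
      · simp [hy]
      · have hgx : g x = 0 := Function.notMem_support.1 fun h => hx (hgS h)
        have hgy : g y = 0 := Function.notMem_support.1 fun h => hy (hgS h)
        simp [hK, hgx, hgy, hp]
  calc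
    _ ≤ ∫⁻ x, (S.indicator (fun x => ∫⁻ y, K x y) x + ∫⁻ y in S, K x y) := lintegral_mono hle
    _ = (∫⁻ x in S, ∫⁻ y, K x y) + ∫⁻ x, ∫⁻ y in S, K x y := by
      rw [lintegral_add_left (hmeas.lintegral_prod_right.indicator hS), lintegral_indicator hS]
    _ = (∫⁻ x in S, ∫⁻ y, K x y) + ∫⁻ y in S, ∫⁻ x, K y x := by
      rw [lintegral_lintegral_swap hmeas.aemeasurable]
      simp only [hsymm]
    _ = _ := (two_mul _).symm

lemma lintegral_gagliardoDensity_ne_top [Nontrivial E] {s p : ℝ} (hs0 : 0 < s) (hs1 : s < 1)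
    (hp : 0 < p) {L : ℝ≥0} (hL : LipschitzWith L g) (hgc : HasCompactSupport g) :
    ∫⁻ x, gagliardoDensity s p g x ≠ ⊤ := by
  obtain ⟨K, hK⟩ := exists_enorm_sub_le_mul_min hL hgc
  set e : ℝ := finrank ℝ E + s * p
  set I : ℝ≥0∞ := ∫⁻ h : E, min ‖h‖ₑ 1 ^ p / ‖h‖ₑ ^ e
  have hKp : (K : ℝ≥0∞) ^ p ≠ ⊤ := ENNReal.rpow_ne_top_of_nonneg hp.le ENNReal.coe_ne_top
  have hdensity (x : E) : gagliardoDensity s p g x ≤ K ^ p * I := by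
    calc
      _ ≤ ∫⁻ y, K ^ p * (min ‖x - y‖ₑ 1 ^ p / ‖x - y‖ₑ ^ e) := by
        refine lintegral_mono fun y => ?_
        rw [← mul_div_assoc, ← ENNReal.mul_rpow_of_nonneg _ _ hp.le]
        exact ENNReal.div_le_div_right (ENNReal.rpow_le_rpow (hK x y) hp.le) _
      _ = _ := by
        rw [lintegral_const_mul' _ _ hKp,
          lintegral_sub_left_eq_self (fun h => min ‖h‖ₑ 1 ^ p / ‖h‖ₑ ^ e) x]
  refine ne_top_of_le_ne_top ?_ (lintegral_gagliardoDensity_le_two_mul_setLIntegral hp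
    hL.continuous.stronglyMeasurable (isClosed_tsupport g).measurableSet (subset_tsupport g))
  refine ENNReal.mul_ne_top (by simp) (ne_top_of_le_ne_top ?_ (lintegral_mono hdensity))
  rw [setLIntegral_const]
  exact ENNReal.mul_ne_top
    (ENNReal.mul_ne_top hKp (lintegral_min_enorm_rpow_div_ne_top hp hs0 hs1))
    hgc.isCompact.measure_lt_top.ne

lemma sobolevEnergy_ne_top [Nontrivial E] [NormedSpace ℝ F] {s p : ℝ} (hs0 : 0 < s) (hs1 : s ≤ 1)
    (hp : 0 < p) (hg : ContDiff ℝ 1 g) (hgc : HasCompactSupport g) : sobolevEnergy s p g ≠ ⊤ := by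
  rcases hs1.eq_or_lt with rfl | hs1
  · simpa only [sobolevEnergy, if_true] using lintegral_enorm_fderiv_rpow_ne_top hp hg hgc
  · obtain ⟨L, hL⟩ := hg.lipschitzWith_of_hasCompactSupport hgc one_ne_zero
    simpa only [sobolevEnergy, if_neg hs1.ne] using
      lintegral_gagliardoDensity_ne_top hs0 hs1 hp hL hgc

end Finiteness

section Interpolation

variable {E F : Type*} [NormedAddCommGroup E] [InnerProductSpace ℝ E] [FiniteDimensional ℝ E]
  [MeasurableSpace E] [BorelSpace E] [Nontrivial E] [NormedAddCommGroup F] [NormedSpace ℝ F]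

lemma IsRadial.exists_weightedEnergy_le_sobolevEnergy_mul {s p q : ℝ} (hs0 : 0 ≤ s) (hs1 : s ≤ 1)
    (hp : 1 ≤ p) (hq : 0 < q) :
    ∃ C : ℝ≥0, ∀ b : ℝ, 0 ≤ b → b ≤ finrank ℝ E - 1 → ∀ g : E → F, IsRadial g →
      ContDiff ℝ 1 g → HasCompactSupport g →
        weightedEnergy (-(s * p * (finrank ℝ E - 1 - b))) (p + s * p * q) g ≤
          C * sobolevEnergy s p g * weightedEnergy b q g ^ (s * p) := by
  rcases hs1.eq_or_lt with rfl | hs1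
  · simpa only [sobolevEnergy, if_true, one_mul] using
      IsRadial.exists_weightedEnergy_le_fderiv_mul (E := E) (F := F) hp hq.le
  · obtain ⟨C, hC⟩ := IsRadial.exists_weightedEnergy_le_gagliardo_mul (E := E) (F := F)
      (by linarith : 0 < p) hq hs0
    refine ⟨C, fun b hb0 hb g hrad hg hgc => ?_⟩
    simpa only [sobolevEnergy, if_neg hs1.ne] using hC b hb0 hb g hrad
      hg.continuous.stronglyMeasurable (weightedEnergy_ne_top (by linarith) hq hg.continuous hgc)

lemma IsRadial.exists_lintegral_enorm_rpow_le {s p q : ℝ} (hs0 : 0 ≤ s) (hs1 : s ≤ 1)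
    (hp : 1 ≤ p) (hq : 0 < q) :
    ∃ C : ℝ≥0, ∀ b l : ℝ, 0 ≤ b → b ≤ finrank ℝ E - 1 → 0 ≤ l → l ≤ 1 →
      l * (s * p * (finrank ℝ E - 1 - b)) = (1 - l) * b → ∀ g : E → F, IsRadial g →
      ContDiff ℝ 1 g → HasCompactSupport g →
        ∫⁻ x, ‖g x‖ₑ ^ (l * (p + s * p * q) + (1 - l) * q) ≤
          (C * sobolevEnergy s p g) ^ l * weightedEnergy b q g ^ (s * p * l + (1 - l)) := by
  obtain ⟨C, hC⟩ := IsRadial.exists_weightedEnergy_le_sobolevEnergy_mul (E := E) (F := F)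
    hs0 hs1 hp hq
  refine ⟨C, fun b l hb0 hb hl0 hl1 hl g hrad hg hgc => ?_⟩
  have hexp : l * -(s * p * (finrank ℝ E - 1 - b)) + (1 - l) * b = 0 := by linear_combination -hl
  calc
    _ = weightedEnergy (l * -(s * p * (finrank ℝ E - 1 - b)) + (1 - l) * b)
        (l * (p + s * p * q) + (1 - l) * q) g := by
      simp only [weightedEnergy, hexp, neg_zero, ENNReal.rpow_zero, one_mul]
    _ ≤ weightedEnergy (-(s * p * (finrank ℝ E - 1 - b))) (p + s * p * q) g ^ l *
        weightedEnergy b q g ^ (1 - l) :=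
      weightedEnergy_interpolate (by positivity) hq.le hl0 hl1 hg.continuous.stronglyMeasurable
    _ ≤ (C * sobolevEnergy s p g * weightedEnergy b q g ^ (s * p)) ^ l *
        weightedEnergy b q g ^ (1 - l) := by
      gcongr
      exact hC b hb0 hb g hrad hg hgc
    _ = _ := by
      rw [ENNReal.mul_rpow_of_nonneg _ _ hl0, ← ENNReal.rpow_mul, mul_assoc,
        ← ENNReal.rpow_add_of_nonneg _ _ (by positivity) (by linarith)]

end Interpolation

section BochnerIntegrals

lemma integral_norm_rpow_eq_toReal_lintegral {X F : Type*} [MeasurableSpace X] {μ : Measure X}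
    [NormedAddCommGroup F] {f : X → F} (hf : AEStronglyMeasurable f μ) {p : ℝ} (hp : 0 ≤ p) :
    ∫ x, ‖f x‖ ^ p ∂μ = (∫⁻ x, ‖f x‖ₑ ^ p ∂μ).toReal := by
  simp only [← toReal_enorm, ENNReal.toReal_rpow]
  exact integral_toReal (hf.enorm.pow_const _)
    (.of_forall fun x => (ENNReal.rpow_ne_top_of_nonneg hp enorm_ne_top).lt_top)

variable {E F : Type*} [NormedAddCommGroup E] [InnerProductSpace ℝ E] [FiniteDimensional ℝ E]
  [MeasurableSpace E] [BorelSpace E] [Nontrivial E] [NormedAddCommGroup F] {g : E → F}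

lemma integral_norm_rpow_mul_eq_toReal_weightedEnergy {b q : ℝ} (hq : 0 ≤ q)
    (hg : StronglyMeasurable g) :
    ∫ x, ‖x‖ ^ (-b) * ‖g x‖ ^ q = (weightedEnergy b q g).toReal := by
  simp only [← toReal_enorm, ENNReal.toReal_rpow, ← ENNReal.toReal_mul]
  refine integral_toReal
    ((measurable_enorm.pow_const _).mul (hg.enorm.pow_const _)).aemeasurable ?_
  filter_upwards [Measure.ae_ne volume (0 : E)] with x hx
  exact ENNReal.mul_lt_top (ENNReal.rpow_ne_top_of_ne_zero (enorm_ne_zero.2 hx) enorm_ne_top).lt_top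
    (ENNReal.rpow_ne_top_of_nonneg hq enorm_ne_top).lt_top

lemma integral_eq_toReal_gagliardoDensity {s p : ℝ} (hp : 0 ≤ p) (hg : StronglyMeasurable g)
    (x : E) :
    ∫ y, ‖g x - g y‖ ^ p / ‖x - y‖ ^ (finrank ℝ E + s * p) = (gagliardoDensity s p g x).toReal := by
  simp only [← toReal_enorm, ENNReal.toReal_rpow, ← ENNReal.toReal_div]
  refine integral_toReal ((measurable_uncurry_gagliardo hg s p).of_uncurry_left).aemeasurable ?_
  filter_upwards [Measure.ae_ne volume x] with y hy
  have hxy : ‖x - y‖ₑ ≠ 0 := enorm_ne_zero.2 (sub_ne_zero.2 hy.symm)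
  exact ENNReal.div_lt_top (ENNReal.rpow_ne_top_of_nonneg hp enorm_ne_top)
    (by simp [ENNReal.rpow_eq_zero_iff, hxy])

lemma integral_integral_eq_toReal_lintegral_gagliardoDensity {s p : ℝ} (hp : 0 ≤ p)
    (hg : StronglyMeasurable g) (hfin : ∫⁻ x, gagliardoDensity s p g x ≠ ⊤) :
    ∫ x, ∫ y, ‖g x - g y‖ ^ p / ‖x - y‖ ^ (finrank ℝ E + s * p) =
      (∫⁻ x, gagliardoDensity s p g x).toReal := by
  have hmeas : Measurable (gagliardoDensity s p g) :=
    (measurable_uncurry_gagliardo hg s p).lintegral_prod_right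
  simp only [integral_eq_toReal_gagliardoDensity hp hg]
  exact integral_toReal hmeas.aemeasurable (ae_lt_top hmeas hfin)

lemma sobolevSemi_eq_toReal_sobolevEnergy {d : ℕ} [Nontrivial (EuclideanSpace ℝ (Fin d))] {s p : ℝ}
    {g : EuclideanSpace ℝ (Fin d) → ℝ} (hs0 : 0 < s) (hs1 : s ≤ 1) (hp : 0 < p)
    (hg : ContDiff ℝ 1 g) (hgc : HasCompactSupport g) :
    sobolevSemi d s p g = (sobolevEnergy s p g).toReal ^ (1 / p) := by
  rcases hs1.eq_or_lt with rfl | hs1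
  · rw [sobolevSemi, if_pos rfl, sobolevEnergy, if_pos rfl, integral_norm_rpow_eq_toReal_lintegral
      (hg.continuous_fderiv one_ne_zero).aestronglyMeasurable hp.le]
  · have hfin := sobolevEnergy_ne_top hs0 hs1.le hp hg hgc
    simp only [sobolevEnergy, if_neg hs1.ne] at hfin ⊢
    rw [← integral_integral_eq_toReal_lintegral_gagliardoDensity hp.le
      hg.continuous.stronglyMeasurable hfin, finrank_euclideanSpace_fin, sobolevSemi,
      if_neg hs1.ne, if_neg hs0.ne']
    simp only [Real.norm_eq_abs]

end BochnerIntegrals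

section RadialInterpolation

lemma rpow_one_div_le_max_mul {γ p q σ l D J W X : ℝ} (hp : 1 ≤ p) (hq : 0 < q) (hσ : 0 ≤ σ)
    (hl0 : 0 ≤ l) (hl1 : l ≤ 1) (hD : 0 ≤ D) (hJ : 0 ≤ J) (hW : 0 ≤ W) (hX : 0 ≤ X)
    (hγ0 : 0 < γ) (hγ : γ = l * (p + σ * q) + (1 - l) * q)
    (h : X ≤ (D * J) ^ l * W ^ (σ * l + (1 - l))) :
    X ^ (1 / γ) ≤ max D 1 * (J ^ (1 / p)) ^ (p * l / γ) * (W ^ (1 / q)) ^ (1 - p * l / γ) := by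
  have hlγ : l ≤ γ := by
    have : 0 ≤ (1 - l) * q := mul_nonneg (sub_nonneg.2 hl1) hq.le
    have : 0 ≤ l * (p - 1) := mul_nonneg hl0 (sub_nonneg.2 hp)
    have : 0 ≤ l * (σ * q) := by positivity
    linarith
  have hJexp : l * (1 / γ) = 1 / p * (p * l / γ) := by field_simp
  have hWexp : (σ * l + (1 - l)) * (1 / γ) = 1 / q * (1 - p * l / γ) := by
    field_simp
    linear_combination -hγ
  calc
    X ^ (1 / γ) ≤ ((D * J) ^ l * W ^ (σ * l + (1 - l))) ^ (1 / γ) := by gcongr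
    _ = D ^ (l * (1 / γ)) * (J ^ (1 / p)) ^ (p * l / γ) * (W ^ (1 / q)) ^ (1 - p * l / γ) := by
      rw [Real.mul_rpow (by positivity) (by positivity), ← Real.rpow_mul (by positivity),
        ← Real.rpow_mul hW, Real.mul_rpow hD hJ, ← Real.rpow_mul hJ, ← Real.rpow_mul hW, hWexp,
        ← hJexp]
    _ ≤ _ := by
      gcongr
      calc
        D ^ (l * (1 / γ)) ≤ max D 1 ^ (l * (1 / γ)) := by
          gcongr
          exact le_max_left _ _
        _ ≤ max D 1 ^ (1 : ℝ) := Real.rpow_le_rpow_of_exponent_le (le_max_right _ _)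
          (by rwa [mul_one_div, div_le_one hγ0])
        _ = _ := Real.rpow_one _

lemma exists_rpow_integral_abs_le_sobolevSemi_mul {d : ℕ}
    [Nontrivial (EuclideanSpace ℝ (Fin d))] {s p q : ℝ} (hs0 : 0 < s) (hs1 : s ≤ 1) (hp : 1 ≤ p)
    (hq : 0 < q) :
    ∃ C > 0, ∀ b l γ : ℝ, 0 ≤ b → b ≤ d - 1 → 0 ≤ l → l ≤ 1 →
      l * (s * p * (d - 1 - b)) = (1 - l) * b → γ = l * (p + s * p * q) + (1 - l) * q →
      0 < γ → ∀ g : EuclideanSpace ℝ (Fin d) → ℝ, IsRadial g → ContDiff ℝ 1 g →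
      HasCompactSupport g →
        (∫ x, |g x| ^ γ) ^ (1 / γ) ≤ C * sobolevSemi d s p g ^ (p * l / γ) *
          ((∫ x, ‖x‖ ^ (-b) * |g x| ^ q) ^ (1 / q)) ^ (1 - p * l / γ) := by
  have hp0 : 0 < p := by linarith
  obtain ⟨C, hC⟩ := IsRadial.exists_lintegral_enorm_rpow_le
    (E := EuclideanSpace ℝ (Fin d)) (F := ℝ) hs0.le hs1 hp hq
  simp only [finrank_euclideanSpace_fin] at hC
  refine ⟨max C 1, by positivity, fun b l γ hb0 hb hl0 hl1 hl hγ hγ0 g hrad hg hgc => ?_⟩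
  have hgm : StronglyMeasurable g := hg.continuous.stronglyMeasurable
  have hJ := sobolevEnergy_ne_top hs0 hs1 hp0 hg hgc
  have hW := weightedEnergy_ne_top (by simp; linarith) hq hg.continuous hgc (b := b)
  have hbound := hC b l hb0 hb hl0 hl1 hl g hrad hg hgc
  rw [← hγ] at hbound
  simp only [← Real.norm_eq_abs]
  rw [integral_norm_rpow_eq_toReal_lintegral hgm.aestronglyMeasurable hγ0.le,
    integral_norm_rpow_mul_eq_toReal_weightedEnergy hq.le hgm,
    sobolevSemi_eq_toReal_sobolevEnergy hs0 hs1 hp0 hg hgc]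
  refine rpow_one_div_le_max_mul hp hq (by positivity : 0 ≤ s * p) hl0 hl1 C.2 (by positivity)
    (by positivity) (by positivity) hγ0 hγ ?_
  have hW' : 0 ≤ s * p * l + (1 - l) := add_nonneg (by positivity) (sub_nonneg.2 hl1)
  have hfin : (C * sobolevEnergy s p g) ^ l * weightedEnergy b q g ^ (s * p * l + (1 - l)) ≠ ⊤ :=
    ENNReal.mul_ne_top
      (ENNReal.rpow_ne_top_of_nonneg hl0 (ENNReal.mul_ne_top ENNReal.coe_ne_top hJ))
      (ENNReal.rpow_ne_top_of_nonneg hW' hW)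
  simpa only [ENNReal.toReal_mul, ← ENNReal.toReal_rpow, ENNReal.coe_toReal] using
    ENNReal.toReal_mono hfin hbound

end RadialInterpolation

section Exponents

lemma exists_interpolation_parameter {σ p q A B γ : ℝ} (hσ : 0 ≤ σ) (hp : 0 < p) (hq : 0 < q)
    (hA : 0 < A) (hB : 0 < B) (hγ : γ = q + (q * (σ - 1) + p) * A / (B + A)) :
    ∃ l, 0 < l ∧ l < 1 ∧ l * B = (1 - l) * A ∧ γ = l * (p + σ * q) + (1 - l) * q ∧ 0 < γ := by
  have hBA : 0 < B + A := by positivity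
  have hl1 : A / (B + A) < 1 := by rw [div_lt_one hBA]; linarith
  have := sub_pos.2 hl1
  have hγl : γ = A / (B + A) * (p + σ * q) + (1 - A / (B + A)) * q := by
    rw [hγ, mul_div_assoc]
    ring
  refine ⟨A / (B + A), by positivity, hl1, ?_, hγl, by rw [hγl]; positivity⟩
  field_simp
  ring

lemma interpolation_exponent_eq {d s p q t l γ : ℝ}
    (hl : l * (s * p * (t - 2)) = (1 - l) * (2 * d - t))
    (hγ : γ = l * (p + s * p * q) + (1 - l) * q) (hγ0 : γ ≠ 0)
    (hD : p * t - 2 * q * (d - s * p) ≠ 0) :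
    p * (γ * t - 2 * q * d) / (γ * (p * t - 2 * q * (d - s * p))) = p * l / γ := by
  rw [div_eq_div_iff (mul_ne_zero hγ0 hD) hγ0, hγ]
  linear_combination p * (l * (p + s * p * q) + (1 - l) * q) * q * hl

lemma weight_mul_rpow {d α ε q r u : ℝ} (hq : q ≠ 0) (hr : 0 ≤ r) (hu : 0 ≤ u) :
    (r ^ (-((d - α) / (2 * q) - ε / q)) * u) ^ q = r ^ (-((d - α - 2 * ε) / 2)) * u ^ q := by
  rw [Real.mul_rpow (by positivity) hu, ← Real.rpow_mul hr]
  congr 2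
  field_simp

end Exponents

theorem stmt6_general (d : ℕ) {s p q : ℝ} (hs0 : 0 < s) (hs1 : s ≤ 1) (hp : 1 ≤ p) (hq : 0 < q) :
    ∃ C > 0, ∀ α ε : ℝ, 2 < (d : ℝ) + α + 2 * ε → α + 2 * ε < d →
      p * ((d : ℝ) + α + 2 * ε) - 2 * q * ((d : ℝ) - s * p) ≠ 0 →
      ∀ γε aε : ℝ,
      γε = q + (q * (s * p - 1) + p) * ((d : ℝ) - α - 2 * ε) /
        (s * p * ((d : ℝ) + α + 2 * ε - 2) + ((d : ℝ) - α - 2 * ε)) →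
      aε = p * (γε * ((d : ℝ) + α + 2 * ε) - 2 * q * d) /
        (γε * (p * ((d : ℝ) + α + 2 * ε) - 2 * q * ((d : ℝ) - s * p))) →
      ∀ g : EuclideanSpace ℝ (Fin d) → ℝ, IsRadial g → ContDiff ℝ 1 g → HasCompactSupport g →
        (∫ x, |g x| ^ γε) ^ (1 / γε) ≤
          C * sobolevSemi d s p g ^ aε *
            ((∫ x, (‖x‖ ^ (-(((d : ℝ) - α) / (2 * q) - ε / q)) * |g x|) ^ q) ^ (1 / q))
              ^ (1 - aε) := by
  rcases d.eq_zero_or_pos with rfl | hd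
  · exact ⟨1, one_pos, fun α ε h2 hd => by norm_num at h2 hd; linarith⟩
  have : Nonempty (Fin d) := ⟨⟨0, hd⟩⟩
  obtain ⟨C, hC, h⟩ := exists_rpow_integral_abs_le_sobolevSemi_mul (d := d) hs0 hs1 hp hq
  refine ⟨C, hC, fun α ε h2 hd hD γ a hγ ha g hrad hg hgc => ?_⟩
  have hA : 0 < (d : ℝ) - α - 2 * ε := by linarith
  have hB : 0 < s * p * ((d : ℝ) + α + 2 * ε - 2) :=
    mul_pos (by positivity) (by linarith)
  obtain ⟨l, hl0, hl1, hl, hγl, hγ0⟩ :=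
    exists_interpolation_parameter (by positivity) (by positivity) hq hA hB hγ
  rw [interpolation_exponent_eq (by linarith) hγl hγ0.ne' hD] at ha
  simp only [weight_mul_rpow hq.ne' (norm_nonneg _) (abs_nonneg _), ha]
  exact h _ l γ (by linarith) (by linarith) hl0.le hl1.le (by linear_combination hl / 2) hγl hγ0 g
    hrad hg hgc

theorem stmt6 (d : ℕ) (hd : 2 ≤ d) (s p q α : ℝ)
    (hs0 : 0 < s) (hs1 : s ≤ 1) (hp1 : 1 ≤ p) (hq1 : 1 ≤ q)
    (hα0 : 0 < α) (hαd : α < d)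
    (hD : p * ((d : ℝ) + α) - 2 * q * ((d : ℝ) - s * p) < 0) :
    ∃ C > 0, ∃ ε₀ > 0, ∀ ε : ℝ, 0 < ε → ε < ε₀ →
      p * ((d : ℝ) + α + 2 * ε) - 2 * q * ((d : ℝ) - s * p) < 0 →
      ∀ γε aε : ℝ,
      γε = q + (q * (s * p - 1) + p) * ((d : ℝ) - α - 2 * ε) /
        (s * p * ((d : ℝ) + α + 2 * ε - 2) + ((d : ℝ) - α - 2 * ε)) →
      aε = p * (γε * ((d : ℝ) + α + 2 * ε) - 2 * q * d) /
        (γε * (p * ((d : ℝ) + α + 2 * ε) - 2 * q * ((d : ℝ) - s * p))) →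
      ∀ g : EuclideanSpace ℝ (Fin d) → ℝ,
        (∀ x y : EuclideanSpace ℝ (Fin d), ‖x‖ = ‖y‖ → g x = g y) →
        ContDiff ℝ 1 g → HasCompactSupport g →
        (∫ x, |g x| ^ γε) ^ (1 / γε) ≤
          C * sobolevSemi d s p g ^ aε *
            ((∫ x, (‖x‖ ^ (-(((d : ℝ) - α) / (2 * q) - ε / q)) * |g x|) ^ q) ^ (1 / q))
              ^ (1 - aε) := by
  have hd2 : (2 : ℝ) ≤ d := by exact_mod_cast hd
  obtain ⟨C, hC, h⟩ := stmt6_general d (q := q) hs0 hs1 hp1 (by linarith)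
  exact ⟨C, hC, (d - α) / 2, by linarith,
    fun ε hε hεd hDε => h α ε (by linarith) (by linarith) hDε.ne⟩
end

section
/- Let d ≥ 1, 0 < s < 1, and 1 ≤ p < ∞. Then there exists a constant C > 0 such that for every g ∈ C_c^∞(ℝ^d): ( ∫_{ℝ^d}∫_{ℝ^d} |g(x)−g(y)|^p / |x−y|^{d+sp} dx dy )^{1/p} ≤ C ‖∇g‖_{L^p(ℝ^d)}^s ‖g‖_{L^p(ℝ^d)}^{1−s}. -/
open MeasureTheory Real

/-!
Substituting `y = x + h`, the `p`-th power of the left-hand side is the integral over `h` of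
`‖g (· + h) - g‖_p ^ p / |h| ^ (d + s p)`. The difference is at most `|h| ‖∇g‖_p`, by integrating
the gradient along the segment from `x` to `x + h`, and at most `2 ‖g‖_p`, by the triangle
inequality. Since `0 < s < 1`, the integral of `min (|h| a) b ^ p / |h| ^ (d + s p)` converges both
at the origin and at infinity, and rescaling `h` by `b / a` shows that it is a constant multiple of
`(a ^ s b ^ (1 - s)) ^ p`.
-/

open Module (finrank)
open scoped ENNReal NNReal

lemma rpow_lintegral_le_lintegral_rpow {α : Type*} [MeasurableSpace α] {μ : Measure α}
    [IsProbabilityMeasure μ] {p : ℝ} (hp : 1 ≤ p) {f : α → ℝ≥0∞} (hf : AEMeasurable f μ) :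
    (∫⁻ x, f x ∂μ) ^ p ≤ ∫⁻ x, f x ^ p ∂μ := by
  have hp0 : 0 < p := zero_lt_one.trans_le hp
  have hmono := eLpNorm'_le_eLpNorm'_of_exponent_le one_pos hp μ hf.aestronglyMeasurable
  simpa [eLpNorm', hp0.ne', ← ENNReal.rpow_mul] using ENNReal.rpow_le_rpow hmono hp0.le

lemma toReal_eLpNorm' {α F : Type*} [MeasurableSpace α] {μ : Measure α} [NormedAddCommGroup F]
    {p : ℝ} (hp : 0 ≤ p) {f : α → F} (hf : AEStronglyMeasurable f μ) :
    (eLpNorm' f p μ).toReal = (∫ x, ‖f x‖ ^ p ∂μ) ^ (1 / p) := by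
  rw [eLpNorm', ← ENNReal.toReal_rpow, integral_eq_lintegral_of_nonneg_ae
    (.of_forall fun x ↦ by positivity) (hf.norm.aemeasurable.pow_const p).aestronglyMeasurable]
  simp [← ENNReal.ofReal_rpow_of_nonneg (norm_nonneg _) hp]

lemma eLpNorm'_ne_top_of_memLp {α F : Type*} [MeasurableSpace α] {μ : Measure α}
    [NormedAddCommGroup F] {p : ℝ} (hp : 0 < p) {f : α → F} (hf : MemLp f (ENNReal.ofReal p) μ) :
    eLpNorm' f p μ ≠ ∞ := by
  simpa [eLpNorm_eq_eLpNorm', hp, hp.le] using hf.eLpNorm_ne_top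

lemma enorm_rpow_norm_div_rpow_norm {E F : Type*} [NormedAddCommGroup E] [NormedAddCommGroup F]
    {p : ℝ} (hp : 0 < p) (q : ℝ) {u : F} {v : E} (huv : v = 0 → u = 0) :
    ‖‖u‖ ^ p / ‖v‖ ^ q‖ₑ = ‖u‖ₑ ^ p / ‖v‖ₑ ^ q := by
  rcases eq_or_ne v 0 with rfl | hv
  · simp [huv rfl, hp, hp.ne']
  · have hv : 0 < ‖v‖ := norm_pos_iff.2 hv
    rw [enorm_of_nonneg (by positivity), ENNReal.ofReal_div_of_pos (by positivity),
      ← ENNReal.ofReal_rpow_of_nonneg (norm_nonneg u) hp.le, ← ENNReal.ofReal_rpow_of_pos hv,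
      ofReal_norm, ofReal_norm]

section Translation

variable {G F : Type*} [AddGroup G] [MeasurableSpace G] [MeasurableAdd G] [NormedAddCommGroup F]
  {μ : Measure G} [μ.IsAddRightInvariant] {p : ℝ}

lemma eLpNorm'_comp_add_right (f : G → F) (h : G) :
    eLpNorm' (fun x ↦ f (x + h)) p μ = eLpNorm' f p μ :=
  congrArg (· ^ (1 / p)) (lintegral_add_right_eq_self (‖f ·‖ₑ ^ p) h)

lemma eLpNorm'_comp_add_right_sub_le_two_mul (hp : 1 ≤ p) {f : G → F}
    (hf : AEStronglyMeasurable f μ) (h : G) :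
    eLpNorm' (fun x ↦ f (x + h) - f x) p μ ≤ 2 * eLpNorm' f p μ := by
  have hfh : AEStronglyMeasurable (fun x ↦ f (x + h)) μ :=
    hf.comp_measurePreserving (measurePreserving_add_right μ h)
  simp_rw [sub_eq_add_neg]
  refine (eLpNorm'_add_le hfh hf.neg hp).trans_eq ?_
  rw [eLpNorm'_comp_add_right, eLpNorm'_neg, two_mul]

end Translation

section Gradient

variable {E F : Type*} [NormedAddCommGroup E] [NormedSpace ℝ E] [NormedAddCommGroup F]
  [NormedSpace ℝ F]

lemma enorm_add_sub_le_lintegral_fderiv {g : E → F} (hg : ContDiff ℝ 1 g) (x h : E) :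
    ‖g (x + h) - g x‖ₑ ≤
      ‖h‖ₑ * ∫⁻ t in Set.Icc (0 : ℝ) 1, ‖fderiv ℝ g (x + t • h)‖ₑ := by
  have hderiv (t : ℝ) : deriv (fun t : ℝ ↦ g (x + t • h)) t = fderiv ℝ g (x + t • h) h := by
    have hline : HasDerivAt (fun t : ℝ ↦ x + t • h) h t := by
      simpa using ((hasDerivAt_id t).smul_const h).const_add x
    exact ((hg.differentiable one_ne_zero _).hasFDerivAt.comp_hasDerivAt t hline).deriv
  have hcontDiff : ContDiff ℝ 1 fun t : ℝ ↦ g (x + t • h) := by fun_prop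
  calc ‖g (x + h) - g x‖ₑ
      ≤ ∫⁻ t in Set.Icc (0 : ℝ) 1, ‖fderiv ℝ g (x + t • h) h‖ₑ := by
        simpa [hderiv] using
          enorm_sub_le_lintegral_deriv_of_contDiffOn_Icc hcontDiff.contDiffOn zero_le_one
    _ ≤ ∫⁻ t in Set.Icc (0 : ℝ) 1, ‖h‖ₑ * ‖fderiv ℝ g (x + t • h)‖ₑ := by
        gcongr with t
        rw [mul_comm]
        exact ContinuousLinearMap.le_opENorm _ _
    _ = ‖h‖ₑ * ∫⁻ t in Set.Icc (0 : ℝ) 1, ‖fderiv ℝ g (x + t • h)‖ₑ :=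
        lintegral_const_mul' _ _ (by finiteness)

lemma eLpNorm'_comp_add_right_sub_le_enorm_mul_fderiv [MeasurableSpace E] [BorelSpace E]
    {μ : Measure E} [SFinite μ] [μ.IsAddRightInvariant] {p : ℝ} (hp : 1 ≤ p) {g : E → F}
    (hg : ContDiff ℝ 1 g) (h : E) :
    eLpNorm' (fun x ↦ g (x + h) - g x) p μ ≤ ‖h‖ₑ * eLpNorm' (fderiv ℝ g) p μ := by
  have hp0 : 0 < p := zero_lt_one.trans_le hp
  have hcont : Continuous fun z : E × ℝ ↦ fderiv ℝ g (z.1 + z.2 • h) :=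
    (hg.continuous_fderiv one_ne_zero).comp (by fun_prop)
  have : IsProbabilityMeasure (volume.restrict (Set.Icc (0 : ℝ) 1)) := ⟨by simp⟩
  have hjensen (x : E) : (∫⁻ t in Set.Icc (0 : ℝ) 1, ‖fderiv ℝ g (x + t • h)‖ₑ) ^ p ≤
      ∫⁻ t in Set.Icc (0 : ℝ) 1, ‖fderiv ℝ g (x + t • h)‖ₑ ^ p :=
    rpow_lintegral_le_lintegral_rpow hp
      (hcont.comp (.prodMk_right x)).enorm.measurable.aemeasurable
  have hpointwise (x : E) : ‖g (x + h) - g x‖ₑ ^ p ≤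
      ‖h‖ₑ ^ p * ∫⁻ t in Set.Icc (0 : ℝ) 1, ‖fderiv ℝ g (x + t • h)‖ₑ ^ p := by
    grw [enorm_add_sub_le_lintegral_fderiv hg x h, ENNReal.mul_rpow_of_nonneg _ _ hp0.le,
      hjensen x]
  rw [← ENNReal.rpow_le_rpow_iff hp0, ENNReal.mul_rpow_of_nonneg _ _ hp0.le,
    ← lintegral_rpow_enorm_eq_rpow_eLpNorm' hp0, ← lintegral_rpow_enorm_eq_rpow_eLpNorm' hp0]
  calc ∫⁻ x, ‖g (x + h) - g x‖ₑ ^ p ∂μ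
      ≤ ∫⁻ x, ‖h‖ₑ ^ p * (∫⁻ t in Set.Icc (0 : ℝ) 1, ‖fderiv ℝ g (x + t • h)‖ₑ ^ p) ∂μ :=
        lintegral_mono hpointwise
    _ = ‖h‖ₑ ^ p * ∫⁻ t in Set.Icc (0 : ℝ) 1, (∫⁻ x, ‖fderiv ℝ g (x + t • h)‖ₑ ^ p ∂μ) := by
        rw [lintegral_const_mul' _ _ (by finiteness), lintegral_lintegral_swap
          (hcont.enorm.measurable.pow_const p).aemeasurable]
    _ = ‖h‖ₑ ^ p * ∫⁻ x, ‖fderiv ℝ g x‖ₑ ^ p ∂μ := by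
        simp [lintegral_add_right_eq_self (‖fderiv ℝ g ·‖ₑ ^ p)]

end Gradient

section TruncatedKernel

variable {E : Type*} [NormedAddCommGroup E] [NormedSpace ℝ E] [FiniteDimensional ℝ E]
  [MeasurableSpace E] [BorelSpace E] (μ : Measure E) [μ.IsAddHaarMeasure] {s p : ℝ}

lemma integrable_min_norm_one_rpow_div [Nontrivial E] (hs0 : 0 < s) (hs1 : s < 1) (hp : 0 < p) :
    Integrable (fun h : E ↦ ‖min ‖h‖ 1‖ ^ p / ‖h‖ ^ (finrank ℝ E + s * p)) μ := by
  have hsp : 0 < s * p := mul_pos hs0 hp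
  have hsp' : 0 < (1 - s) * p := mul_pos (sub_pos.2 hs1) hp
  have hmeas : Measurable
      fun h : E ↦ ‖min ‖h‖ 1‖ ^ p / ‖h‖ ^ (finrank ℝ E + s * p) := by fun_prop
  rw [← integrableOn_univ, ← Set.union_compl_self (Metric.ball (0 : E) 1)]
  refine IntegrableOn.union ?near ?far
  case near =>
    refine integrableOn_ball_of_norm_le_rpow (C := 1) (α := finrank ℝ E - (1 - s) * p)
      Module.finrank_pos (by linarith) ?_ hmeas.aestronglyMeasurable
    filter_upwards [ae_restrict_mem measurableSet_ball,
      ae_restrict_of_ae (compl_mem_ae_iff.2 (measure_singleton (0 : E)))] with h hball hne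
    have hpos : 0 < ‖h‖ := norm_pos_iff.2 hne
    have hle : ‖h‖ ≤ 1 := (mem_ball_zero_iff.1 hball).le
    rw [min_eq_left hle, norm_norm, norm_of_nonneg (by positivity), ← rpow_sub hpos, one_mul]
    exact le_of_eq (by ring_nf)
  case far =>
    have hdom : Integrable (fun h : E ↦ 2 ^ (finrank ℝ E + s * p) *
        (1 + ‖h‖) ^ (-(finrank ℝ E + s * p))) μ :=
      (integrable_one_add_norm (by linarith)).const_mul _
    refine Integrable.mono' hdom.integrableOn hmeas.aestronglyMeasurable ?_
    filter_upwards [ae_restrict_mem measurableSet_ball.compl] with h hball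
    have hle : 1 ≤ ‖h‖ := by simpa using hball
    rw [min_eq_right hle, norm_one, one_rpow, norm_of_nonneg (by positivity),
      rpow_neg (by positivity), ← div_eq_mul_inv, one_div, ← inv_div,
      ← div_rpow (by positivity) zero_le_two]
    gcongr
    linarith

lemma lintegral_min_enorm_one_rpow_div_lt_top [Nontrivial E] (hs0 : 0 < s) (hs1 : s < 1)
    (hp : 0 < p) :
    ∫⁻ h, min ‖h‖ₑ 1 ^ p / ‖h‖ₑ ^ (finrank ℝ E + s * p) ∂μ < ∞ := by
  have henorm (h : E) : ‖min ‖h‖ 1‖ₑ = min ‖h‖ₑ 1 := by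
    rw [enorm_of_nonneg (by positivity), ENNReal.ofReal_min, ofReal_norm, ENNReal.ofReal_one]
  refine (lintegral_congr fun h ↦ ?_).trans_lt
    (integrable_min_norm_one_rpow_div μ hs0 hs1 hp).hasFiniteIntegral
  rw [enorm_rpow_norm_div_rpow_norm hp _ (by simp +contextual), henorm]

lemma lintegral_eq_pow_finrank_mul_lintegral_comp_smul (f : E → ℝ≥0∞) {r : ℝ≥0} (hr : r ≠ 0) :
    ∫⁻ x, f x ∂μ = r ^ finrank ℝ E * ∫⁻ x, f (r • x) ∂μ := by
  have hr' : (r : ℝ) ≠ 0 := by simpa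
  have hjac : ENNReal.ofReal |((r : ℝ) ^ finrank ℝ E)⁻¹| = ((r : ℝ≥0∞) ^ finrank ℝ E)⁻¹ := by
    rw [abs_of_nonneg (by positivity), ENNReal.ofReal_inv_of_pos (by positivity),
      ENNReal.ofReal_pow r.coe_nonneg, ENNReal.ofReal_coe_nnreal]
  have hscale : ∫⁻ x, f (r • x) ∂μ = ((r : ℝ≥0∞) ^ finrank ℝ E)⁻¹ * ∫⁻ x, f x ∂μ := by
    rw [← hjac, ← smul_eq_mul, ← lintegral_smul_measure, ← Measure.map_addHaar_smul μ hr']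
    exact ((Homeomorph.smulOfNeZero (r : ℝ) hr').measurableEmbedding.lintegral_map f).symm
  rw [hscale, ← mul_assoc, ENNReal.mul_inv_cancel (by simp [hr]) (by finiteness), one_mul]

lemma lintegral_min_enorm_coe_rpow_div {r : ℝ≥0} (hr : r ≠ 0) (hs : 0 ≤ s) (hp : 0 ≤ p) :
    ∫⁻ h, min ‖h‖ₑ r ^ p / ‖h‖ₑ ^ (finrank ℝ E + s * p) ∂μ =
      (r : ℝ≥0∞) ^ ((1 - s) * p) *
        ∫⁻ h, min ‖h‖ₑ 1 ^ p / ‖h‖ₑ ^ (finrank ℝ E + s * p) ∂μ := by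
  have hr' : (r : ℝ≥0∞) ≠ 0 := by simpa
  have hq : 0 ≤ finrank ℝ E + s * p := by positivity
  have hpow : (r : ℝ≥0∞) ^ finrank ℝ E * (r ^ p * ((r : ℝ≥0∞) ^ (finrank ℝ E + s * p))⁻¹) =
      r ^ ((1 - s) * p) := by
    rw [← ENNReal.rpow_natCast, ← ENNReal.rpow_neg, ← ENNReal.rpow_add _ _ hr' (by finiteness),
      ← ENNReal.rpow_add _ _ hr' (by finiteness)]
    ring_nf
  rw [lintegral_eq_pow_finrank_mul_lintegral_comp_smul μ _ hr,
    ← lintegral_const_mul' _ _ (by finiteness), ← lintegral_const_mul' _ _ (by finiteness)]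
  refine lintegral_congr fun h ↦ ?_
  have hnorm : ‖r • h‖ₑ = r * ‖h‖ₑ := by simp [NNReal.smul_def, enorm_smul]
  have hmin : min (r * ‖h‖ₑ) r = r * min ‖h‖ₑ 1 := by rw [mul_min, mul_one]
  rw [hnorm, hmin, ENNReal.mul_rpow_of_nonneg _ _ hp, ENNReal.mul_rpow_of_nonneg _ _ hq,
    div_eq_mul_inv, ENNReal.mul_inv (by simp [hr]) (by simp [hr]), ← hpow, div_eq_mul_inv]
  ring

lemma lintegral_min_enorm_mul_coe_rpow_div {a b : ℝ≥0} (ha : a ≠ 0) (hb : b ≠ 0)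
    (hs : 0 ≤ s) (hp : 0 ≤ p) :
    ∫⁻ h, min (‖h‖ₑ * a) b ^ p / ‖h‖ₑ ^ (finrank ℝ E + s * p) ∂μ =
      ((a : ℝ≥0∞) ^ s * b ^ (1 - s)) ^ p *
        ∫⁻ h, min ‖h‖ₑ 1 ^ p / ‖h‖ₑ ^ (finrank ℝ E + s * p) ∂μ := by
  have hba : b / a ≠ 0 := div_ne_zero hb ha
  have hmin (h : E) : min (‖h‖ₑ * a) b = a * min ‖h‖ₑ (b / a : ℝ≥0) := by
    rw [mul_min, mul_comm, ← ENNReal.coe_mul, mul_div_cancel₀ _ ha]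
  have hpow : a * (b / a) ^ (1 - s) = a ^ s * b ^ (1 - s) := by
    have : a ^ s ≠ 0 := by simp [ha]
    rw [NNReal.div_rpow, NNReal.rpow_sub ha, NNReal.rpow_one]
    field_simp
  simp_rw [hmin, ENNReal.mul_rpow_of_nonneg _ _ hp, mul_div_assoc]
  rw [lintegral_const_mul' _ _ (by finiteness), lintegral_min_enorm_coe_rpow_div μ hba hs hp,
    ← mul_assoc, ENNReal.rpow_mul, ← ENNReal.mul_rpow_of_nonneg _ _ hp,
    ← ENNReal.mul_rpow_of_nonneg _ _ hp, ← ENNReal.coe_rpow_of_ne_zero hba,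
    ← ENNReal.coe_rpow_of_ne_zero ha, ← ENNReal.coe_rpow_of_ne_zero hb, ← ENNReal.coe_mul, hpow,
    ENNReal.coe_mul]

lemma exists_lintegral_min_enorm_mul_rpow_div_le [Nontrivial E] (hs0 : 0 < s) (hs1 : s < 1)
    (hp : 0 < p) :
    ∃ C : ℝ≥0, C ≠ 0 ∧ ∀ a b : ℝ≥0∞,
      ∫⁻ h, min (‖h‖ₑ * a) b ^ p / ‖h‖ₑ ^ (finrank ℝ E + s * p) ∂μ ≤
        C * (a ^ s * b ^ (1 - s)) ^ p := by
  have hs1' : 0 < 1 - s := sub_pos.2 hs1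
  obtain ⟨C, hC, -⟩ := ENNReal.lt_iff_exists_nnreal_btwn.1
    (lintegral_min_enorm_one_rpow_div_lt_top μ hs0 hs1 hp)
  have hC0 : C ≠ 0 := by simpa using hC.ne_bot
  refine ⟨C, hC0, fun a b ↦ ?_⟩
  rcases eq_or_ne a 0 with rfl | ha
  · simp [hp]
  rcases eq_or_ne b 0 with rfl | hb
  · simp [hp]
  by_cases htop : a = ∞ ∨ b = ∞
  · have : a ^ s * b ^ (1 - s) = ∞ := by
      rcases htop with rfl | rfl <;> simp [hs0.le, hs1.le, *]
    simp [this, hp, hC0]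
  · rw [not_or] at htop
    lift a to ℝ≥0 using htop.1
    lift b to ℝ≥0 using htop.2
    rw [lintegral_min_enorm_mul_coe_rpow_div μ (by simpa using ha) (by simpa using hb) hs0.le
      hp.le, mul_comm]
    gcongr

end TruncatedKernel

section Gagliardo

variable {E F : Type*} [NormedAddCommGroup E] [NormedSpace ℝ E] [MeasurableSpace E]
  [NormedAddCommGroup F]

/-- The Gagliardo seminorm of order `s` and exponent `p`, that is, the homogeneous fractional
Sobolev seminorm of `g`, with values in `ℝ≥0∞` so that it is meaningful for every `g`.
The diagonal `x = y` contributes `0 / 0 = 0`. -/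
noncomputable def eGagliardoSeminorm (s p : ℝ) (g : E → F) (μ : Measure E) : ℝ≥0∞ :=
  (∫⁻ x, ∫⁻ y, ‖g x - g y‖ₑ ^ p / ‖x - y‖ₑ ^ (finrank ℝ E + s * p) ∂μ ∂μ) ^ (1 / p)

variable {s p : ℝ}

lemma rpow_integral_le_toReal_eGagliardoSeminorm {μ : Measure E} (hp : 0 < p) {g : E → F}
    (hg : eGagliardoSeminorm s p g μ ≠ ∞) :
    (∫ x, ∫ y, ‖g x - g y‖ ^ p / ‖x - y‖ ^ (finrank ℝ E + s * p) ∂μ ∂μ) ^ (1 / p) ≤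
      (eGagliardoSeminorm s p g μ).toReal := by
  rw [← ENNReal.ofReal_le_iff_le_toReal hg, ← ENNReal.ofReal_rpow_of_nonneg
    (integral_nonneg fun x ↦ integral_nonneg fun y ↦ by positivity) (by positivity),
    eGagliardoSeminorm]
  gcongr
  calc ENNReal.ofReal (∫ x, ∫ y, ‖g x - g y‖ ^ p / ‖x - y‖ ^ (finrank ℝ E + s * p) ∂μ ∂μ)
      ≤ ∫⁻ x, ∫⁻ y, ‖‖g x - g y‖ ^ p / ‖x - y‖ ^ (finrank ℝ E + s * p)‖ₑ ∂μ ∂μ :=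
        (ofReal_le_enorm _).trans <| (enorm_integral_le_lintegral_enorm _).trans <|
          lintegral_mono fun x ↦ enorm_integral_le_lintegral_enorm _
    _ = ∫⁻ x, ∫⁻ y, ‖g x - g y‖ₑ ^ p / ‖x - y‖ₑ ^ (finrank ℝ E + s * p) ∂μ ∂μ := by
        refine lintegral_congr fun x ↦ lintegral_congr fun y ↦ ?_
        exact enorm_rpow_norm_div_rpow_norm hp _ fun hxy ↦ by simp [sub_eq_zero.1 hxy]

variable [BorelSpace E]

lemma eGagliardoSeminorm_rpow [SecondCountableTopology E] {μ : Measure E} [SFinite μ]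
    [μ.IsAddRightInvariant] (hp : 0 < p) {g : E → F} (hg : Continuous g) :
    eGagliardoSeminorm s p g μ ^ p =
      ∫⁻ h, eLpNorm' (fun x ↦ g (x + h) - g x) p μ ^ p / ‖h‖ₑ ^ (finrank ℝ E + s * p) ∂μ := by
  have hshift (x : E) :
      ∫⁻ y, ‖g x - g y‖ₑ ^ p / ‖x - y‖ₑ ^ (finrank ℝ E + s * p) ∂μ =
        ∫⁻ h, ‖g (x + h) - g x‖ₑ ^ p / ‖h‖ₑ ^ (finrank ℝ E + s * p) ∂μ := by
    rw [← lintegral_add_right_eq_self _ x]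
    refine lintegral_congr fun h ↦ ?_
    rw [add_comm h x, enorm_sub_rev, enorm_sub_rev x, add_sub_cancel_left]
  have hdiff : Measurable fun z : E × E ↦ ‖g (z.1 + z.2) - g z.1‖ₑ :=
    Continuous.measurable (by fun_prop)
  have hslice (h : E) : Measurable fun x ↦ ‖g (x + h) - g x‖ₑ := hdiff.comp measurable_prodMk_right
  rw [eGagliardoSeminorm, ← ENNReal.rpow_mul, one_div_mul_cancel hp.ne', ENNReal.rpow_one]
  simp_rw [hshift]
  rw [lintegral_lintegral_swap (Measurable.aemeasurable (by fun_prop))]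
  refine lintegral_congr fun h ↦ ?_
  simp_rw [div_eq_mul_inv]
  rw [lintegral_mul_const _ ((hslice h).pow_const p),
    lintegral_rpow_enorm_eq_rpow_eLpNorm' hp]

variable [FiniteDimensional ℝ E] [Nontrivial E] [NormedSpace ℝ F]
  (μ : Measure E) [μ.IsAddHaarMeasure]

theorem exists_eGagliardoSeminorm_le (hs0 : 0 < s) (hs1 : s < 1) (hp : 1 ≤ p) :
    ∃ C : ℝ≥0, C ≠ 0 ∧ ∀ g : E → F, ContDiff ℝ 1 g →
      eGagliardoSeminorm s p g μ ≤
        C * eLpNorm' (fderiv ℝ g) p μ ^ s * eLpNorm' g p μ ^ (1 - s) := by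
  have hp0 : 0 < p := zero_lt_one.trans_le hp
  obtain ⟨C, hC0, hC⟩ := exists_lintegral_min_enorm_mul_rpow_div_le μ hs0 hs1 hp0
  refine ⟨C ^ (1 / p) * 2 ^ (1 - s), by positivity, fun g hg ↦ ?_⟩
  have hdiff (h : E) : eLpNorm' (fun x ↦ g (x + h) - g x) p μ ≤
      min (‖h‖ₑ * eLpNorm' (fderiv ℝ g) p μ) (2 * eLpNorm' g p μ) :=
    le_min (eLpNorm'_comp_add_right_sub_le_enorm_mul_fderiv hp hg h)
      (eLpNorm'_comp_add_right_sub_le_two_mul hp hg.continuous.aestronglyMeasurable h)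
  have henergy : eGagliardoSeminorm s p g μ ^ p ≤
      C * (eLpNorm' (fderiv ℝ g) p μ ^ s * (2 * eLpNorm' g p μ) ^ (1 - s)) ^ p := by
    rw [eGagliardoSeminorm_rpow hp0 hg.continuous]
    grw [← hC]
    gcongr with h
    exact hdiff h
  have hroot : (C * (eLpNorm' (fderiv ℝ g) p μ ^ s * (2 * eLpNorm' g p μ) ^ (1 - s)) ^ p) =
      ((C ^ (1 / p) * 2 ^ (1 - s) : ℝ≥0) * eLpNorm' (fderiv ℝ g) p μ ^ s *
        eLpNorm' g p μ ^ (1 - s)) ^ p := by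
    have hs1' : 0 ≤ 1 - s := sub_nonneg.2 hs1.le
    have hC' : (C : ℝ≥0∞) = ((C : ℝ≥0∞) ^ (1 / p)) ^ p := by
      rw [← ENNReal.rpow_mul, one_div_mul_cancel hp0.ne', ENNReal.rpow_one]
    nth_rw 1 [hC']
    rw [← ENNReal.mul_rpow_of_nonneg _ _ hp0.le, ENNReal.mul_rpow_of_nonneg _ _ hs1',
      ENNReal.coe_mul, ENNReal.coe_rpow_of_ne_zero hC0, ENNReal.coe_rpow_of_ne_zero two_ne_zero,
      ENNReal.coe_ofNat]
    ring_nf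
  rwa [hroot, ENNReal.rpow_le_rpow_iff hp0] at henergy

end Gagliardo

theorem stmt17_general {E F : Type*} [NormedAddCommGroup E] [NormedSpace ℝ E]
    [FiniteDimensional ℝ E] [Nontrivial E] [MeasurableSpace E] [BorelSpace E]
    [NormedAddCommGroup F] [NormedSpace ℝ F] (μ : Measure E) [μ.IsAddHaarMeasure] {s p : ℝ}
    (hs0 : 0 < s) (hs1 : s < 1) (hp : 1 ≤ p) :
    ∃ C > 0, ∀ g : E → F, ContDiff ℝ 1 g →
      MemLp g (ENNReal.ofReal p) μ → MemLp (fderiv ℝ g) (ENNReal.ofReal p) μ →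
      (∫ x, ∫ y, ‖g x - g y‖ ^ p / ‖x - y‖ ^ (finrank ℝ E + s * p) ∂μ ∂μ) ^ (1 / p) ≤
        C * ((∫ x, ‖fderiv ℝ g x‖ ^ p ∂μ) ^ (1 / p)) ^ s *
          ((∫ x, ‖g x‖ ^ p ∂μ) ^ (1 / p)) ^ (1 - s) := by
  have hp0 : 0 < p := zero_lt_one.trans_le hp
  obtain ⟨C, hC0, hC⟩ := exists_eGagliardoSeminorm_le (F := F) μ hs0 hs1 hp
  refine ⟨C, by positivity, fun g hg hgp hdgp ↦ ?_⟩
  have hbound : C * eLpNorm' (fderiv ℝ g) p μ ^ s * eLpNorm' g p μ ^ (1 - s) ≠ ∞ := by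
    have hg_top := eLpNorm'_ne_top_of_memLp hp0 hgp
    have hdg_top := eLpNorm'_ne_top_of_memLp hp0 hdgp
    finiteness
  calc (∫ x, ∫ y, ‖g x - g y‖ ^ p / ‖x - y‖ ^ (finrank ℝ E + s * p) ∂μ ∂μ) ^ (1 / p)
      ≤ (eGagliardoSeminorm s p g μ).toReal :=
        rpow_integral_le_toReal_eGagliardoSeminorm hp0 (ne_top_of_le_ne_top hbound (hC g hg))
    _ ≤ (C * eLpNorm' (fderiv ℝ g) p μ ^ s * eLpNorm' g p μ ^ (1 - s)).toReal :=
        ENNReal.toReal_mono hbound (hC g hg)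
    _ = _ := by
        rw [ENNReal.toReal_mul, ENNReal.toReal_mul, ← ENNReal.toReal_rpow, ← ENNReal.toReal_rpow,
          toReal_eLpNorm' hp0.le hgp.1, toReal_eLpNorm' hp0.le hdgp.1, ENNReal.coe_toReal]

theorem stmt17 (d : ℕ) (hd : 1 ≤ d) (s p : ℝ)
    (hs0 : 0 < s) (hs1 : s < 1) (hp1 : 1 ≤ p) :
    ∃ C > 0, ∀ g : EuclideanSpace ℝ (Fin d) → ℝ,
      ContDiff ℝ (⊤ : ℕ∞) g → HasCompactSupport g →
      (∫ x, ∫ y, |g x - g y| ^ p / ‖x - y‖ ^ ((d : ℝ) + s * p)) ^ (1 / p) ≤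
        C * ((∫ x, ‖fderiv ℝ g x‖ ^ p) ^ (1 / p)) ^ s *
          ((∫ x, |g x| ^ p) ^ (1 / p)) ^ (1 - s) := by
  have : Nonempty (Fin d) := ⟨0, hd⟩
  obtain ⟨C, hC, h⟩ := stmt17_general (E := EuclideanSpace ℝ (Fin d)) (F := ℝ) volume hs0 hs1 hp1
  refine ⟨C, hC, fun g hg hgc ↦ ?_⟩
  have hg1 : ContDiff ℝ 1 g := hg.of_le (by exact_mod_cast le_top)
  simpa using h g hg1 (hg.continuous.memLp_of_hasCompactSupport hgc)
    ((hg1.continuous_fderiv one_ne_zero).memLp_of_hasCompactSupport (hgc.fderiv ℝ))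
end

section
/- Let d ≥ 1, 0 < s < 1, 1 ≤ p < ∞, and let η ∈ C_c^∞(ℝ \ {0}) be a nonnegative function with support contained in (−1, 1). For λ > 0 and R > S > 0 define g_{λ,R,S}(x) = λ η((|x| − R)/S) for x ∈ ℝ^d. Then there exists a constant C > 0 (depending on d, s, p, η) such that for all R > S > 0 and λ > 0: ∫_{ℝ^d}∫_{ℝ^d} |g_{λ,R,S}(x) − g_{λ,R,S}(y)|^p / |x−y|^{d+sp} dx dy ≤ C λ^p R^{d−1} S^{1−sp}. -/
/-!
The function `g = g_{λ,R,S}` is bounded by a multiple of `λ`, varies on the length scale `S`, and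
vanishes off the annulus `A` of radius `R` and half-width `S`. Hence its Gagliardo integrand is at
most `(1_A(x) + 1_A(y)) K(x - y)`, where `K(z)` is a multiple of
`λ ^ p min(1, |z| / S) ^ p / |z| ^ (d + s p)`. The double integral of this majorant factors as
`2 |A| ∫ K`. The kernel is integrable near `0` because `s < 1` and at infinity because `s > 0`, and
by scaling `∫ K` is of order `λ ^ p S ^ (-s p)`, while `|A|` is of order `R ^ (d - 1) S`.
-/

open MeasureTheory Real

section Convolution

variable {G : Type*} [AddGroup G] [MeasurableSpace G] [MeasurableAdd₂ G] [MeasurableNeg G]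
  {μ : Measure G} [SFinite μ] [μ.IsAddRightInvariant] {w K : G → ℝ}

theorem integrable_snd_mul_comp_sub (hw : Integrable w μ) (hK : Integrable K μ) :
    Integrable (fun z : G × G => w z.2 * K (z.1 - z.2)) (μ.prod μ) :=
  hw.convolution_integrand (ContinuousLinearMap.mul ℝ ℝ) hK

theorem integral_snd_mul_comp_sub (hw : Integrable w μ) (hK : Integrable K μ) :
    ∫ z : G × G, w z.2 * K (z.1 - z.2) ∂μ.prod μ = (∫ x, w x ∂μ) * ∫ x, K x ∂μ := by
  rw [integral_prod_symm _ (integrable_snd_mul_comp_sub hw hK)]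
  simp only [integral_const_mul, integral_sub_right_eq_self K, integral_mul_const]

variable [μ.IsNegInvariant]

theorem integrable_fst_mul_comp_sub (hw : Integrable w μ) (hK : Integrable K μ) :
    Integrable (fun z : G × G => w z.1 * K (z.1 - z.2)) (μ.prod μ) := by
  simpa only [Function.comp_def, Prod.fst_swap, Prod.snd_swap, neg_sub] using
    (integrable_snd_mul_comp_sub hw hK.comp_neg).swap

theorem integral_fst_mul_comp_sub (hw : Integrable w μ) (hK : Integrable K μ) :
    ∫ z : G × G, w z.1 * K (z.1 - z.2) ∂μ.prod μ = (∫ x, w x ∂μ) * ∫ x, K x ∂μ := by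
  rw [← integral_prod_swap, ← integral_neg_eq_self K, ← integral_snd_mul_comp_sub hw hK.comp_neg]
  simp only [Prod.fst_swap, Prod.snd_swap, neg_sub]

theorem integrable_add_mul_comp_sub (hw : Integrable w μ) (hK : Integrable K μ) :
    Integrable (fun z : G × G => (w z.1 + w z.2) * K (z.1 - z.2)) (μ.prod μ) := by
  simp only [add_mul]
  exact (integrable_fst_mul_comp_sub hw hK).add (integrable_snd_mul_comp_sub hw hK)

theorem integral_add_mul_comp_sub (hw : Integrable w μ) (hK : Integrable K μ) :
    ∫ z : G × G, (w z.1 + w z.2) * K (z.1 - z.2) ∂μ.prod μ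
      = 2 * (∫ x, w x ∂μ) * ∫ x, K x ∂μ := by
  simp only [add_mul]
  rw [integral_add (integrable_fst_mul_comp_sub hw hK) (integrable_snd_mul_comp_sub hw hK),
    integral_fst_mul_comp_sub hw hK, integral_snd_mul_comp_sub hw hK]
  ring

end Convolution

section Lipschitz

variable {F : Type*} [NormedAddCommGroup F]

theorem continuous_of_norm_sub_le_mul_min {E : Type*} [NormedAddCommGroup E] {f : E → F}
    {M S : ℝ} (hM : 0 ≤ M) (hf : ∀ x y, ‖f x - f y‖ ≤ M * min 1 (‖x - y‖ / S)) :
    Continuous f := by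
  refine (LipschitzWith.of_dist_le' (K := M / S) fun x y => ?_).continuous
  rw [dist_eq_norm, dist_eq_norm, div_mul_eq_mul_div, mul_div_assoc]
  exact (hf x y).trans (mul_le_mul_of_nonneg_left (min_le_right _ _) hM)

variable {η : ℝ → F} {L : NNReal}

theorem norm_le_of_lipschitzWith_of_support_subset_Ioo {a b : ℝ} (hη : LipschitzWith L η)
    (hsupp : Function.support η ⊆ Set.Ioo a b) (hab : a ≤ b) (t : ℝ) :
    ‖η t‖ ≤ L * (b - a) := by
  by_cases ht : η t = 0
  · rw [ht, norm_zero]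
    exact mul_nonneg L.coe_nonneg (sub_nonneg.2 hab)
  · have hmem : t ∈ Set.Ioo a b := hsupp ht
    have hb : η b = 0 := Function.notMem_support.1 fun h => (hsupp h).2.false
    calc ‖η t‖ = dist (η t) (η b) := by rw [hb, dist_zero_right]
      _ ≤ L * dist t b := hη.dist_le_mul t b
      _ ≤ L * (b - a) := by
        rw [dist_comm, dist_eq, abs_of_pos (sub_pos.2 hmem.2)]
        gcongr
        exact hmem.1.le

theorem norm_sub_le_mul_min_of_lipschitzWith (hη : LipschitzWith L η)
    (hsupp : Function.support η ⊆ Set.Ioo (-1) 1) (a b : ℝ) :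
    ‖η a - η b‖ ≤ 4 * L * min 1 |a - b| := by
  have hbound (t : ℝ) : ‖η t‖ ≤ 2 * L := by
    linarith [norm_le_of_lipschitzWith_of_support_subset_Ioo hη hsupp (by norm_num) t]
  have hlip : ‖η a - η b‖ ≤ L * |a - b| := hη.norm_sub_le a b
  rw [mul_min_of_nonneg _ _ (by positivity : (0 : ℝ) ≤ 4 * L)]
  refine le_min ?_ ?_
  · linarith [norm_sub_le (η a) (η b), hbound a, hbound b]
  · linarith [mul_nonneg L.coe_nonneg (abs_nonneg (a - b))]

end Lipschitz

section Annulus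

variable {E : Type*} [NormedAddCommGroup E]

/-- The annulus `{R - S < ‖x‖ ≤ R + S}` of mean radius `R` and half-width `S`, written as a
difference of closed balls, whose Haar measures are explicit. -/
def annulus (R S : ℝ) : Set E :=
  Metric.closedBall 0 (R + S) \ Metric.closedBall 0 (R - S)

variable [MeasurableSpace E]

theorem measure_annulus_ne_top [ProperSpace E] (μ : Measure E) [IsFiniteMeasureOnCompacts μ]
    (R S : ℝ) : μ (annulus R S) ≠ ⊤ :=
  measure_ne_top_of_subset Set.sdiff_subset measure_closedBall_lt_top.ne

variable [BorelSpace E]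

theorem measurableSet_annulus (R S : ℝ) : MeasurableSet (annulus R S : Set E) :=
  measurableSet_closedBall.diff measurableSet_closedBall

variable [NormedSpace ℝ E] [FiniteDimensional ℝ E] (μ : Measure E) [μ.IsAddHaarMeasure]

theorem measureReal_closedBall_sdiff_closedBall_le (x : E) {a b : ℝ} (ha : 0 ≤ a)
    (hab : a ≤ b) :
    μ.real (Metric.closedBall x b \ Metric.closedBall x a)
      ≤ (b - a) * Module.finrank ℝ E * b ^ (Module.finrank ℝ E - 1)
        * μ.real (Metric.ball (0 : E) 1) := by
  have hb : 0 ≤ b := ha.trans hab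
  rw [measureReal_sdiff (Metric.closedBall_subset_closedBall hab) measurableSet_closedBall
      measure_closedBall_lt_top.ne, Measure.addHaar_real_closedBall _ _ hb,
    Measure.addHaar_real_closedBall _ _ ha, ← sub_mul]
  gcongr
  have hpow := (le_abs_self _).trans (abs_pow_sub_pow_le b a (Module.finrank ℝ E))
  rwa [abs_of_nonneg (sub_nonneg.2 hab), abs_of_nonneg ha, abs_of_nonneg hb, max_eq_left hab]
    at hpow

theorem measureReal_annulus_le {R S : ℝ} (hS : 0 ≤ S) (hSR : S ≤ R) :
    μ.real (annulus R S)
      ≤ 2 * S * Module.finrank ℝ E * (2 * R) ^ (Module.finrank ℝ E - 1)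
        * μ.real (Metric.ball (0 : E) 1) := by
  refine (measureReal_closedBall_sdiff_closedBall_le μ 0 (by linarith) (by linarith)).trans ?_
  have hwidth : R + S - (R - S) = 2 * S := by ring
  rw [hwidth]
  gcongr <;> linarith

end Annulus

section RadialBump

variable {E F : Type*} [NormedAddCommGroup E] [NormedAddCommGroup F] [NormedSpace ℝ F]

/-- The radial profile `x ↦ l • η ((‖x‖ - R) / S)`, the paper's `g_{λ,R,S}` with `l = λ`. -/
noncomputable def radialBump (η : ℝ → F) (l R S : ℝ) (x : E) : F :=
  l • η ((‖x‖ - R) / S)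

variable {η : ℝ → F} {L : NNReal} {S : ℝ}

theorem norm_radialBump_sub_le (hη : LipschitzWith L η)
    (hsupp : Function.support η ⊆ Set.Ioo (-1) 1) (l R : ℝ) (hS : 0 < S) (x y : E) :
    ‖radialBump η l R S x - radialBump η l R S y‖
      ≤ |l| * (4 * L) * min 1 (‖x - y‖ / S) := by
  have hdist : |(‖x‖ - R) / S - (‖y‖ - R) / S| ≤ ‖x - y‖ / S := by
    rw [← sub_div, abs_div, abs_of_pos hS, sub_sub_sub_cancel_right]
    gcongr
    exact abs_norm_sub_norm_le x y
  rw [radialBump, radialBump, ← smul_sub, norm_smul, norm_eq_abs, mul_assoc]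
  gcongr
  exact (norm_sub_le_mul_min_of_lipschitzWith hη hsupp _ _).trans (by gcongr)

theorem support_radialBump_subset (hsupp : Function.support η ⊆ Set.Ioo (-1) 1) (l R : ℝ)
    (hS : 0 < S) :
    Function.support (radialBump η l R S : E → F) ⊆ annulus R S := by
  intro x hx
  have hmem : (‖x‖ - R) / S ∈ Set.Ioo (-1) 1 :=
    hsupp (right_ne_zero_of_smul (Function.mem_support.1 hx))
  rw [Set.mem_Ioo, lt_div_iff₀ hS, div_lt_iff₀ hS] at hmem
  rw [annulus, Set.mem_sdiff, mem_closedBall_zero_iff, mem_closedBall_zero_iff]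
  constructor <;> linarith

end RadialBump

theorem pow_finrank_sub_one (E : Type*) [AddCommGroup E] [Module ℝ E] [Module.Finite ℝ E]
    [Nontrivial E] (r : ℝ) :
    r ^ (Module.finrank ℝ E - 1) = r ^ ((Module.finrank ℝ E : ℝ) - 1) := by
  rw [← rpow_natCast, Nat.cast_pred Module.finrank_pos]

section Gagliardo

variable {E F : Type*} [NormedAddCommGroup E] [NormedSpace ℝ E] [NormedAddCommGroup F]

/-- The integrand `‖f x - f y‖ ^ p / ‖x - y‖ ^ (d + s p)`, `d = dim E`, of the `p`-th power of the
Gagliardo seminorm of order `s`, as a function on `E × E`. -/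
noncomputable def gagliardoIntegrand (s p : ℝ) (f : E → F) (z : E × E) : ℝ :=
  ‖f z.1 - f z.2‖ ^ p / ‖z.1 - z.2‖ ^ ((Module.finrank ℝ E : ℝ) + s * p)

/-- The kernel `min 1 (‖z‖ / S) ^ p / ‖z‖ ^ (d + s p)`, `d = dim E`, which dominates the Gagliardo
integrand of functions that are bounded and vary on the length scale `S`. -/
noncomputable def gagliardoKernel (s p S : ℝ) (z : E) : ℝ :=
  min 1 (‖z‖ / S) ^ p / ‖z‖ ^ ((Module.finrank ℝ E : ℝ) + s * p)

theorem gagliardoIntegrand_nonneg (s p : ℝ) (f : E → F) (z : E × E) :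
    0 ≤ gagliardoIntegrand s p f z := by
  unfold gagliardoIntegrand
  positivity

theorem gagliardoKernel_nonneg (s p : ℝ) {S : ℝ} (hS : 0 ≤ S) (z : E) :
    0 ≤ gagliardoKernel s p S z := by
  unfold gagliardoKernel
  positivity

theorem gagliardoKernel_eq_mul_comp_smul (s p : ℝ) {S : ℝ} (hS : 0 < S) (z : E) :
    gagliardoKernel s p S z
      = S ^ (-((Module.finrank ℝ E : ℝ) + s * p)) * gagliardoKernel s p 1 (S⁻¹ • z) := by
  have hnorm : ‖S⁻¹ • z‖ = ‖z‖ / S := by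
    rw [norm_smul, norm_inv, norm_of_nonneg hS.le, inv_mul_eq_div]
  rw [gagliardoKernel, gagliardoKernel, hnorm, div_one, div_rpow (norm_nonneg z) hS.le,
    rpow_neg hS.le]
  field_simp

section Kernel

variable [FiniteDimensional ℝ E] [MeasurableSpace E] [BorelSpace E] (μ : Measure E)
  [μ.IsAddHaarMeasure] {s p S : ℝ}

theorem integral_gagliardoKernel (hS : 0 < S) :
    ∫ z, gagliardoKernel s p S z ∂μ = S ^ (-(s * p)) * ∫ z, gagliardoKernel s p 1 z ∂μ := by
  simp only [gagliardoKernel_eq_mul_comp_smul s p hS]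
  rw [integral_const_mul, Measure.integral_comp_inv_smul_of_nonneg _ _ hS.le, smul_eq_mul,
    ← rpow_natCast S, ← mul_assoc, ← rpow_add hS]
  congr 2
  ring

variable [Nontrivial E]

theorem integrable_gagliardoKernel_one (hs0 : 0 < s) (hs1 : s < 1) (hp : 0 < p) :
    Integrable (fun z : E => gagliardoKernel s p 1 z) μ := by
  simp only [gagliardoKernel, div_one]
  refine (integrable_fun_norm_addHaar μ
    (f := fun r => min 1 r ^ p / r ^ ((Module.finrank ℝ E : ℝ) + s * p))).2 ?_
  have near_zero : IntegrableOn (fun r : ℝ => r ^ (p - s * p - 1)) (Set.Ioc 0 1) :=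
    (intervalIntegrable_iff_integrableOn_Ioc_of_le zero_le_one).1
      (intervalIntegral.intervalIntegrable_rpow' (by linarith [mul_lt_of_lt_one_left hp hs1]))
  have near_infinity : IntegrableOn (fun r : ℝ => r ^ (-1 - s * p)) (Set.Ioi 1) :=
    integrableOn_Ioi_rpow_of_lt (by linarith [mul_pos hs0 hp]) zero_lt_one
  rw [← Set.Ioc_union_Ioi_eq_Ioi (zero_le_one' ℝ)]
  refine (near_zero.congr_fun (fun r hr => ?_) measurableSet_Ioc).union
    (near_infinity.congr_fun (fun r hr => ?_) measurableSet_Ioi)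
  · simp only [smul_eq_mul]
    rw [min_eq_right hr.2, pow_finrank_sub_one E, ← rpow_sub hr.1, ← rpow_add hr.1]
    ring_nf
  · have hr0 : 0 < r := zero_lt_one.trans hr
    simp only [smul_eq_mul]
    rw [min_eq_left (le_of_lt hr), pow_finrank_sub_one E, one_rpow, one_div, ← rpow_neg hr0.le,
      ← rpow_add hr0]
    ring_nf

theorem integrable_gagliardoKernel (hs0 : 0 < s) (hs1 : s < 1) (hp : 0 < p) (hS : 0 < S) :
    Integrable (fun z : E => gagliardoKernel s p S z) μ := by
  simp only [gagliardoKernel_eq_mul_comp_smul s p hS]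
  exact ((integrable_gagliardoKernel_one μ hs0 hs1 hp).comp_smul (inv_ne_zero hS.ne')).const_mul _

end Kernel

section Energy

variable {s p S M : ℝ} {f : E → F} {A : Set E}

theorem gagliardoIntegrand_le_mul_gagliardoKernel (hp : 0 ≤ p) (hS : 0 ≤ S) (hM : 0 ≤ M)
    (hf : ∀ x y, ‖f x - f y‖ ≤ M * min 1 (‖x - y‖ / S)) (z : E × E) :
    gagliardoIntegrand s p f z ≤ M ^ p * gagliardoKernel s p S (z.1 - z.2) := by
  rw [gagliardoIntegrand, gagliardoKernel, ← mul_div_assoc, ← mul_rpow hM (by positivity)]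
  gcongr
  exact hf z.1 z.2

theorem gagliardoIntegrand_eq_zero (hp : p ≠ 0) (hfA : Function.support f ⊆ A) {z : E × E}
    (hz₁ : z.1 ∉ A) (hz₂ : z.2 ∉ A) : gagliardoIntegrand s p f z = 0 := by
  have hf {x : E} (hx : x ∉ A) : f x = 0 := Function.notMem_support.1 fun h => hx (hfA h)
  simp [gagliardoIntegrand, hf hz₁, hf hz₂, hp]

theorem gagliardoIntegrand_le_indicator_add_mul (hp : 0 < p) (hS : 0 ≤ S) (hM : 0 ≤ M)
    (hf : ∀ x y, ‖f x - f y‖ ≤ M * min 1 (‖x - y‖ / S)) (hfA : Function.support f ⊆ A)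
    (z : E × E) :
    gagliardoIntegrand s p f z
      ≤ (A.indicator 1 z.1 + A.indicator 1 z.2)
        * (M ^ p * gagliardoKernel s p S (z.1 - z.2)) := by
  by_cases hz : z.1 ∈ A ∨ z.2 ∈ A
  · have hone : 1 ≤ A.indicator (1 : E → ℝ) z.1 + A.indicator 1 z.2 := by
      rcases hz with h | h <;> simp [h, Set.indicator_nonneg]
    have hK := gagliardoKernel_nonneg s p hS (z.1 - z.2)
    exact (gagliardoIntegrand_le_mul_gagliardoKernel hp.le hS hM hf z).trans
      (le_mul_of_one_le_left (by positivity) hone)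
  · rw [not_or] at hz
    simp [gagliardoIntegrand_eq_zero hp.ne' hfA hz.1 hz.2, hz.1, hz.2]

variable [FiniteDimensional ℝ E] [MeasurableSpace E] [BorelSpace E]

theorem measurable_gagliardoIntegrand (hf : Continuous f) :
    Measurable (gagliardoIntegrand s p f) := by
  have hnum : Continuous fun z : E × E => ‖f z.1 - f z.2‖ := by fun_prop
  exact (hnum.measurable.pow_const p).div (by fun_prop)

variable [Nontrivial E] (μ : Measure E) [μ.IsAddHaarMeasure]

theorem integrable_gagliardoIntegrand (hs0 : 0 < s) (hs1 : s < 1) (hp : 0 < p) (hS : 0 < S)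
    (hM : 0 ≤ M) (hA : MeasurableSet A) (hAfin : μ A ≠ ⊤)
    (hf : ∀ x y, ‖f x - f y‖ ≤ M * min 1 (‖x - y‖ / S)) (hfA : Function.support f ⊆ A) :
    Integrable (gagliardoIntegrand s p f) (μ.prod μ) := by
  have hw : Integrable (A.indicator (1 : E → ℝ)) μ :=
    (integrable_indicator_iff hA).2 (integrableOn_const hAfin)
  have hK := (integrable_gagliardoKernel μ hs0 hs1 hp hS).const_mul (M ^ p)
  have hmeas : Measurable (gagliardoIntegrand s p f) :=
    measurable_gagliardoIntegrand (continuous_of_norm_sub_le_mul_min hM hf)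
  refine (integrable_add_mul_comp_sub hw hK).mono' hmeas.aestronglyMeasurable
    (.of_forall fun z => ?_)
  rw [norm_of_nonneg (gagliardoIntegrand_nonneg s p f z)]
  exact gagliardoIntegrand_le_indicator_add_mul hp hS.le hM hf hfA z

theorem integral_gagliardoIntegrand_le (hs0 : 0 < s) (hs1 : s < 1) (hp : 0 < p) (hS : 0 < S)
    (hM : 0 ≤ M) (hA : MeasurableSet A) (hAfin : μ A ≠ ⊤)
    (hf : ∀ x y, ‖f x - f y‖ ≤ M * min 1 (‖x - y‖ / S)) (hfA : Function.support f ⊆ A) :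
    ∫ z, gagliardoIntegrand s p f z ∂μ.prod μ
      ≤ 2 * M ^ p * S ^ (-(s * p)) * μ.real A * ∫ z, gagliardoKernel s p 1 z ∂μ := by
  have hw : Integrable (A.indicator (1 : E → ℝ)) μ :=
    (integrable_indicator_iff hA).2 (integrableOn_const hAfin)
  have hK := (integrable_gagliardoKernel μ hs0 hs1 hp hS).const_mul (M ^ p)
  calc ∫ z, gagliardoIntegrand s p f z ∂μ.prod μ
      ≤ ∫ z, (A.indicator 1 z.1 + A.indicator 1 z.2)
          * (M ^ p * gagliardoKernel s p S (z.1 - z.2)) ∂μ.prod μ :=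
        integral_mono_of_nonneg (.of_forall (gagliardoIntegrand_nonneg s p f))
          (integrable_add_mul_comp_sub hw hK)
          (.of_forall (gagliardoIntegrand_le_indicator_add_mul hp hS.le hM hf hfA))
    _ = 2 * μ.real A * (M ^ p * (S ^ (-(s * p)) * ∫ z, gagliardoKernel s p 1 z ∂μ)) := by
        rw [integral_add_mul_comp_sub hw hK, integral_indicator_one hA, integral_const_mul,
          integral_gagliardoKernel μ hS]
    _ = _ := by ring

end Energy

section RadialEnergy

variable [NormedSpace ℝ F] [FiniteDimensional ℝ E] [Nontrivial E] [MeasurableSpace E]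
  [BorelSpace E] (μ : Measure E) [μ.IsAddHaarMeasure] {s p : ℝ} {η : ℝ → F} {L : NNReal}

theorem integrable_gagliardoIntegrand_radialBump (hs0 : 0 < s) (hs1 : s < 1) (hp : 0 < p)
    (hη : LipschitzWith L η) (hsupp : Function.support η ⊆ Set.Ioo (-1) 1) (l R : ℝ) {S : ℝ}
    (hS : 0 < S) :
    Integrable (gagliardoIntegrand s p (radialBump η l R S : E → F)) (μ.prod μ) :=
  integrable_gagliardoIntegrand μ hs0 hs1 hp hS (by positivity) (measurableSet_annulus R S)
    (measure_annulus_ne_top μ R S) (norm_radialBump_sub_le hη hsupp l R hS)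
    (support_radialBump_subset hsupp l R hS)

theorem integral_gagliardoIntegrand_radialBump_le (hs0 : 0 < s) (hs1 : s < 1) (hp : 0 < p)
    (hη : LipschitzWith L η) (hsupp : Function.support η ⊆ Set.Ioo (-1) 1) (l : ℝ) {R S : ℝ}
    (hS : 0 < S) (hSR : S ≤ R) :
    ∫ z, gagliardoIntegrand s p (radialBump η l R S : E → F) z ∂μ.prod μ
      ≤ (4 * Module.finrank ℝ E * 2 ^ (Module.finrank ℝ E - 1) * μ.real (Metric.ball (0 : E) 1)
          * (4 * L) ^ p * ∫ z : E, gagliardoKernel s p 1 z ∂μ)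
        * |l| ^ p * R ^ ((Module.finrank ℝ E : ℝ) - 1) * S ^ (1 - s * p) := by
  set d := Module.finrank ℝ E with hd
  set c := μ.real (Metric.ball (0 : E) 1)
  set I := ∫ z : E, gagliardoKernel s p 1 z ∂μ
  have hI : 0 ≤ I := integral_nonneg (gagliardoKernel_nonneg s p zero_le_one)
  have hSpow : S ^ (1 - s * p) = S * S ^ (-(s * p)) := by
    rw [sub_eq_add_neg, rpow_add hS, rpow_one]
  calc ∫ z, gagliardoIntegrand s p (radialBump η l R S) z ∂μ.prod μ
      ≤ 2 * (|l| * (4 * L)) ^ p * S ^ (-(s * p)) * μ.real (annulus R S) * I :=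
        integral_gagliardoIntegrand_le μ hs0 hs1 hp hS (by positivity)
          (measurableSet_annulus R S) (measure_annulus_ne_top μ R S)
          (norm_radialBump_sub_le hη hsupp l R hS) (support_radialBump_subset hsupp l R hS)
    _ ≤ 2 * (|l| * (4 * L)) ^ p * S ^ (-(s * p)) * (2 * S * d * (2 * R) ^ (d - 1) * c) * I := by
        gcongr
        exact measureReal_annulus_le μ hS.le hSR
    _ = _ := by
        rw [hSpow, hd, ← pow_finrank_sub_one, mul_pow, mul_rpow (abs_nonneg l) (by positivity)]
        ring

theorem stmt18_general (hs0 : 0 < s) (hs1 : s < 1) (hp : 0 < p) (hη : LipschitzWith L η)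
    (hsupp : Function.support η ⊆ Set.Ioo (-1) 1) :
    ∃ C > 0, ∀ l R S : ℝ, 0 < S → S ≤ R →
      Integrable (gagliardoIntegrand s p (radialBump η l R S : E → F)) (μ.prod μ) ∧
      ∫ x, ∫ y, gagliardoIntegrand s p (radialBump η l R S : E → F) (x, y) ∂μ ∂μ
        ≤ C * |l| ^ p * R ^ ((Module.finrank ℝ E : ℝ) - 1) * S ^ (1 - s * p) := by
  have hI : 0 ≤ ∫ z : E, gagliardoKernel s p 1 z ∂μ :=
    integral_nonneg (gagliardoKernel_nonneg s p zero_le_one)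
  refine ⟨4 * Module.finrank ℝ E * 2 ^ (Module.finrank ℝ E - 1) * μ.real (Metric.ball (0 : E) 1)
    * (4 * L) ^ p * (∫ z : E, gagliardoKernel s p 1 z ∂μ) + 1, by positivity,
    fun l R S hS hSR => ?_⟩
  have hR : 0 < R := hS.trans_le hSR
  have hint := integrable_gagliardoIntegrand_radialBump (E := E) μ hs0 hs1 hp hη hsupp l R hS
  refine ⟨hint, ?_⟩
  rw [← integral_prod _ hint]
  refine (integral_gagliardoIntegrand_radialBump_le μ hs0 hs1 hp hη hsupp l hS hSR).trans ?_
  gcongr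
  exact (lt_add_one _).le

end RadialEnergy

end Gagliardo

theorem stmt18 (d : ℕ) (hd : 1 ≤ d) (s p : ℝ)
    (hs0 : 0 < s) (hs1 : s < 1) (hp1 : 1 ≤ p)
    (η : ℝ → ℝ) (hη : ContDiff ℝ (⊤ : ℕ∞) η) (hηc : HasCompactSupport η)
    (hηsupp : tsupport η ⊆ Set.Ioo (-1 : ℝ) 1) (hη0 : 0 ∉ tsupport η)
    (hηnonneg : ∀ t, 0 ≤ η t) :
    ∃ C > 0, ∀ l R S : ℝ, 0 < l → 0 < S → S < R →
      (∫ x : EuclideanSpace ℝ (Fin d), ∫ y : EuclideanSpace ℝ (Fin d),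
          |l * η ((‖x‖ - R) / S) - l * η ((‖y‖ - R) / S)| ^ p /
            ‖x - y‖ ^ ((d : ℝ) + s * p)) ≤
        C * l ^ p * R ^ ((d : ℝ) - 1) * S ^ (1 - s * p) := by
  have : Nonempty (Fin d) := ⟨⟨0, hd⟩⟩
  obtain ⟨L, hL⟩ := hη.lipschitzWith_of_hasCompactSupport hηc (by simp)
  obtain ⟨C, hC, hbound⟩ := stmt18_general (volume : Measure (EuclideanSpace ℝ (Fin d))) hs0 hs1
    (zero_lt_one.trans_le hp1) hL ((subset_tsupport η).trans hηsupp)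
  exact ⟨C, hC, fun l R S hl hS hSR => by
    simpa [gagliardoIntegrand, radialBump, abs_of_pos hl] using (hbound l R S hS hSR.le).2⟩
end

section
/- Let d ≥ 1, 1 ≤ q < ∞, 0 < α < d, and let η ∈ C_c^∞(ℝ \ {0}) be a nonnegative function with support contained in (−1, 1). For λ > 0 and R ≥ 2S > 0 define g_{λ,R,S}(x) = λ η((|x| − R)/S) for x ∈ ℝ^d. Then there exists a constant C > 0 (depending on d, q, α, η) such that for all R ≥ 2S > 0 and λ > 0: ∫_{ℝ^d}∫_{ℝ^d} |g_{λ,R,S}(x)|^q |g_{λ,R,S}(y)|^q / |x−y|^{d−α} dx dy ≤ C λ^{2q} R^{d+α−2} S^2 if 1 < α < d; ≤ C λ^{2q} R^{d−1} S^2 log(R/S) if α = 1; and ≤ C λ^{2q} R^{d−1} S^{1+α} if 0 < α < 1. -/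
open MeasureTheory Real

/-!
Write `D` for the dimension. About `r / S` dilates of the part of the shell in a ball of radius `r`
are disjoint and stay in the concentric ball of radius `3 r`, so for `r ≤ R` that part has volume at
most a constant times `S r ^ (D - 1)`; it is also at most a constant times `r ^ D`, and at most
`S R ^ (D - 1)` up to a constant. By the layer-cake formula the Riesz potential of the shell is
`(D - α) ∫ |shell ∩ B(x, r)| r ^ (α - D - 1) dr`, written below in the variable `t = 1 / r`. The
integrand behaves like `r ^ (α - 1)` for `r < S`, like `S r ^ (α - 2)` for `S < r < R`, and like
`S R ^ (D - 1) r ^ (α - D - 1)` for `r > R`: the scale `r = R` dominates if `α > 1`, the scale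
`r = S` if `α < 1`, and the whole range between them contributes the logarithm if `α = 1`. The
energy is at most the supremum of the potential times the volume `S R ^ (D - 1)` of the shell.
-/

open Module (finrank)
open Set Metric
open scoped ENNReal Pointwise

/-- The closed spherical shell of mean radius `R` and half-width `S` centred at the origin. -/
def closedShell (E : Type*) [NormedAddCommGroup E] (R S : ℝ) : Set E :=
  {x | |‖x‖ - R| ≤ S}

section Shell

variable {E : Type*} [NormedAddCommGroup E] {R S : ℝ}

theorem mem_closedShell_iff {x : E} : x ∈ closedShell E R S ↔ R - S ≤ ‖x‖ ∧ ‖x‖ ≤ R + S := by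
  rw [closedShell, mem_ofPred_eq, abs_le]
  constructor <;> rintro ⟨h₁, h₂⟩ <;> constructor <;> linarith

theorem closedShell_subset_closedBall : closedShell E R S ⊆ closedBall 0 (R + S) := fun _ hx =>
  mem_closedBall_zero_iff.2 (mem_closedShell_iff.1 hx).2

theorem measurableSet_closedShell [MeasurableSpace E] [OpensMeasurableSpace E] :
    MeasurableSet (closedShell E R S) :=
  (isClosed_le (by fun_prop) continuous_const).measurableSet

variable [NormedSpace ℝ E]

theorem disjoint_smul_closedShell {s t : ℝ} (hs : 0 ≤ s) (ht : 0 ≤ t)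
    (hst : s * (R + S) < t * (R - S)) :
    Disjoint (s • closedShell E R S) (t • closedShell E R S) := by
  rw [Set.disjoint_left]
  rintro _ ⟨y, hy, rfl⟩ ⟨z, hz, hzy⟩
  have hnorm : t * ‖z‖ = s * ‖y‖ := by
    simpa only [norm_smul, norm_of_nonneg hs, norm_of_nonneg ht] using congrArg norm hzy
  exact hst.not_ge <| calc
    t * (R - S) ≤ t * ‖z‖ := by gcongr; exact (mem_closedShell_iff.1 hz).1
    _ = s * ‖y‖ := hnorm
    _ ≤ s * (R + S) := by gcongr; exact (mem_closedShell_iff.1 hy).2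

theorem one_add_smul_closedBall_inter_ball_subset {a ρ r : ℝ} (ha : 0 ≤ a) (x : E) :
    (1 + a) • (closedBall 0 ρ ∩ ball x r) ⊆ ball x (r + a * ρ) := by
  rintro _ ⟨y, ⟨hyρ, hyr⟩, rfl⟩
  rw [mem_closedBall_zero_iff] at hyρ
  rw [mem_ball_iff_norm] at hyr ⊢
  calc ‖(1 + a) • y - x‖ = ‖(y - x) + a • y‖ := by congr 1; module
    _ ≤ ‖y - x‖ + a * ‖y‖ := by
        simpa only [norm_smul, norm_of_nonneg ha] using norm_add_le (y - x) (a • y)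
    _ < r + a * ρ := add_lt_add_of_lt_of_le hyr (by gcongr)

end Shell

section ShellVolume

variable {E : Type*} [NormedAddCommGroup E] [NormedSpace ℝ E] [FiniteDimensional ℝ E]
  [MeasurableSpace E] [BorelSpace E] (μ : Measure E) [μ.IsAddHaarMeasure]

theorem measure_le_measure_smul {t : ℝ} (ht : 1 ≤ t) (s : Set E) : μ s ≤ μ (t • s) := by
  rw [Measure.addHaar_smul]
  exact le_mul_of_one_le_left' (ENNReal.one_le_ofReal.2 ((one_le_pow₀ ht).trans (le_abs_self _)))

theorem card_mul_measure_le_of_pairwiseDisjoint_smul {ι : Type*} {I : Finset ι} {t : ι → ℝ}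
    {s B : Set E} (hs : MeasurableSet s) (ht : ∀ i ∈ I, 1 ≤ t i) (hsub : ∀ i ∈ I, t i • s ⊆ B)
    (hdisj : (I : Set ι).PairwiseDisjoint fun i => t i • s) : I.card * μ s ≤ μ B :=
  calc I.card * μ s = ∑ _i ∈ I, μ s := by rw [Finset.sum_const, nsmul_eq_mul]
    _ ≤ ∑ i ∈ I, μ (t i • s) := Finset.sum_le_sum fun i hi => measure_le_measure_smul μ (ht i hi) s
    _ = μ (⋃ i ∈ I, t i • s) :=
        (measure_biUnion_finset hdisj fun _ _ => hs.const_smul₀ _).symm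
    _ ≤ μ B := measure_mono (iUnion₂_subset hsub)

variable {R S r : ℝ}

/-- The dilates by `1 + 8 k S / R`, for `k < r / (8 S)`, move the shell outwards by steps larger
than its width, while they move no point of it by more than `2 r`. -/
theorem ceil_mul_measure_closedShell_inter_ball_le (hS : 0 < S) (hSR : S ≤ R) (hr : r ≤ 3 * R)
    (x : E) :
    ⌈r / (8 * S)⌉₊ * μ (closedShell E R S ∩ ball x r) ≤ μ (ball x (3 * r)) := by
  have hR : 0 < R := hS.trans_le hSR
  set a : ℕ → ℝ := fun k => 8 * k * S / R
  have ha0 (k : ℕ) : 0 ≤ a k := by positivity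
  have haR (k : ℕ) : a k * R = 8 * k * S := div_mul_cancel₀ _ hR.ne'
  have har {k : ℕ} (hk : k < ⌈r / (8 * S)⌉₊) : a k * R < r := by
    have := (lt_div_iff₀ (by positivity)).1 (Nat.lt_ceil.1 hk)
    linarith [haR k]
  have hdisj {j k : ℕ} (hjk : j < k) (hk : k < ⌈r / (8 * S)⌉₊) :
      Disjoint ((1 + a j) • closedShell E R S) ((1 + a k) • closedShell E R S) := by
    have hgap : 8 * S ≤ (a k - a j) * R := by
      have : (j : ℝ) + 1 ≤ k := by exact_mod_cast hjk
      nlinarith [haR j, haR k]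
    have hak : a k < 3 := lt_of_mul_lt_mul_right ((har hk).trans_le hr) hR.le
    have haj : a j < 3 :=
      lt_of_mul_lt_mul_right ((har (hjk.trans hk)).trans_le hr) hR.le
    refine disjoint_smul_closedShell (by linarith [ha0 j]) (by linarith [ha0 k]) ?_
    nlinarith [mul_lt_mul_of_pos_right hak hS, mul_lt_mul_of_pos_right haj hS]
  rw [← Finset.card_range ⌈r / (8 * S)⌉₊]
  refine card_mul_measure_le_of_pairwiseDisjoint_smul μ (t := fun k => 1 + a k)
    (measurableSet_closedShell.inter measurableSet_ball) (fun k _ => by linarith [ha0 k])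
    (fun k hk => ?_) (fun j hj k hk hjk => ?_)
  · have hshift : r + a k * (R + S) ≤ 3 * r := by
      nlinarith [har (Finset.mem_range.1 hk), mul_le_mul_of_nonneg_left hSR (ha0 k)]
    exact (smul_set_mono (inter_subset_inter_left _ closedShell_subset_closedBall)).trans <|
      (one_add_smul_closedBall_inter_ball_subset (ha0 k) x).trans (ball_subset_ball hshift)
  · rw [Finset.coe_range, mem_Iio] at hj hk
    have hmono {i : ℕ} : (1 + a i) • (closedShell E R S ∩ ball x r) ⊆
        (1 + a i) • closedShell E R S := smul_set_mono inter_subset_left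
    rcases hjk.lt_or_gt with h | h
    · exact (hdisj h hk).mono hmono hmono
    · exact (hdisj h hj).symm.mono hmono hmono

theorem measureReal_ball_of_pos (x : E) (hr : 0 < r) :
    μ.real (ball x r) = r ^ finrank ℝ E * μ.real (ball (0 : E) 1) := by
  rw [measureReal_def, Measure.addHaar_ball_of_pos μ x hr, ENNReal.toReal_mul,
    ENNReal.toReal_ofReal (by positivity), measureReal_def]

theorem measureReal_closedShell_inter_ball_le (hS : 0 < S) (hSR : S ≤ R) (hr0 : 0 < r)
    (hr : r ≤ 3 * R) (x : E) :
    μ.real (closedShell E R S ∩ ball x r) ≤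
      8 * 3 ^ finrank ℝ E * μ.real (ball (0 : E) 1) * S * r ^ ((finrank ℝ E : ℝ) - 1) := by
  have hpack := ENNReal.toReal_mono measure_ball_lt_top.ne
    (ceil_mul_measure_closedShell_inter_ball_le μ hS hSR hr x)
  rw [ENNReal.toReal_mul, ENNReal.toReal_natCast, ← measureReal_def, ← measureReal_def,
    measureReal_ball_of_pos μ x (by positivity : 0 < 3 * r)] at hpack
  have hceil : r / (8 * S) * μ.real (closedShell E R S ∩ ball x r) ≤
      (3 * r) ^ finrank ℝ E * μ.real (ball (0 : E) 1) :=
    (mul_le_mul_of_nonneg_right (Nat.le_ceil _) measureReal_nonneg).trans hpack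
  rw [div_mul_eq_mul_div, div_le_iff₀ (by positivity), mul_pow] at hceil
  rw [rpow_sub hr0, rpow_one, rpow_natCast, mul_div_assoc', le_div_iff₀ hr0]
  linarith

theorem measureReal_closedShell_le (hS : 0 < S) (hSR : S ≤ R) :
    μ.real (closedShell E R S) ≤
      8 * 3 ^ finrank ℝ E * μ.real (ball (0 : E) 1) * S * (3 * R) ^ ((finrank ℝ E : ℝ) - 1) := by
  have hR : 0 < R := hS.trans_le hSR
  have hsub : closedShell E R S ⊆ ball 0 (3 * R) :=
    closedShell_subset_closedBall.trans (closedBall_subset_ball (by linarith))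
  simpa only [inter_eq_left.2 hsub] using
    measureReal_closedShell_inter_ball_le μ hS hSR (by positivity : 0 < 3 * R) le_rfl (0 : E)

end ShellVolume

/-- The volume, up to a constant factor, of the largest part of a shell of mean radius `R` and
half-width `S` in dimension `D` that a ball of radius `r` can cover: the ball itself if `r ≤ S`, a
cap of width `r` if `S ≤ r ≤ R`, and the whole shell if `R ≤ r`. -/
noncomputable def shellProfile (D R S r : ℝ) : ℝ :=
  min (r ^ D) (S * min r R ^ (D - 1))

section ShellProfile

variable {D R S r : ℝ}

theorem shellProfile_le_rpow : shellProfile D R S r ≤ r ^ D :=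
  min_le_left _ _

theorem shellProfile_le_mul_rpow (hD : 1 ≤ D) (hS : 0 ≤ S) (hR : 0 ≤ R) (hr : 0 ≤ r) :
    shellProfile D R S r ≤ S * r ^ (D - 1) := by
  refine (min_le_right _ _).trans ?_
  gcongr
  exact min_le_left r R

theorem shellProfile_le_const (hD : 1 ≤ D) (hS : 0 ≤ S) (hR : 0 ≤ R) (hr : 0 ≤ r) :
    shellProfile D R S r ≤ S * R ^ (D - 1) := by
  refine (min_le_right _ _).trans ?_
  gcongr
  exact min_le_right r R

theorem exists_measure_closedShell_inter_ball_le_shellProfile {E : Type*} [NormedAddCommGroup E]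
    [NormedSpace ℝ E] [FiniteDimensional ℝ E] [Nontrivial E] [MeasurableSpace E] [BorelSpace E]
    (μ : Measure E) [μ.IsAddHaarMeasure] :
    ∃ C > 0, ∀ R S : ℝ, 0 < S → S ≤ R →
      μ (closedShell E R S) ≤ ENNReal.ofReal (C * (S * R ^ ((finrank ℝ E : ℝ) - 1))) ∧
      ∀ (x : E) (r : ℝ), 0 < r →
        μ (closedShell E R S ∩ ball x r) ≤
          ENNReal.ofReal (C * shellProfile (finrank ℝ E) R S r) := by
  set n := finrank ℝ E
  set ω := μ.real (ball (0 : E) 1)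
  have hω : 0 < ω := ENNReal.toReal_pos (measure_ball_pos μ _ one_pos).ne' measure_ball_lt_top.ne
  have hn : (0 : ℝ) ≤ n - 1 := by
    rw [sub_nonneg]; exact_mod_cast Module.finrank_pos (R := ℝ) (M := E)
  set K : ℝ := 3 ^ ((n : ℝ) - 1)
  have hK : 1 ≤ K := one_le_rpow (by norm_num) hn
  refine ⟨8 * 3 ^ n * ω * K, by positivity, fun R S hS hSR => ?_⟩
  have hR : 0 < R := hS.trans_le hSR
  have hfin : μ (closedShell E R S) ≠ ∞ :=
    measure_ne_top_of_subset closedShell_subset_closedBall measure_closedBall_lt_top.ne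
  have hshell : μ.real (closedShell E R S) ≤ 8 * 3 ^ n * ω * K * (S * R ^ ((n : ℝ) - 1)) := by
    refine (measureReal_closedShell_le μ hS hSR).trans_eq ?_
    rw [mul_rpow (by norm_num) hR.le]
    ring
  refine ⟨(ENNReal.le_ofReal_iff_toReal_le hfin (by positivity)).2 hshell, fun x r hr => ?_⟩
  refine (ENNReal.le_ofReal_iff_toReal_le (measure_ne_top_of_subset inter_subset_left hfin)
    (by unfold shellProfile; positivity)).2 ?_
  rw [shellProfile, mul_min_of_nonneg _ _ (by positivity), ← measureReal_def]
  refine le_min ?_ ?_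
  · have h3 : 1 ≤ 8 * (3 : ℝ) ^ n := by linarith [one_le_pow₀ (n := n) (by norm_num : (1 : ℝ) ≤ 3)]
    calc μ.real (closedShell E R S ∩ ball x r) ≤ μ.real (ball x r) :=
          measureReal_mono inter_subset_right measure_ball_lt_top.ne
      _ = 1 * ω * 1 * r ^ (n : ℝ) := by rw [measureReal_ball_of_pos μ x hr, rpow_natCast]; ring
      _ ≤ 8 * 3 ^ n * ω * K * r ^ (n : ℝ) := by gcongr
  · rcases le_total r R with h | h
    · rw [min_eq_left h]
      calc μ.real (closedShell E R S ∩ ball x r) ≤ 8 * 3 ^ n * ω * S * r ^ ((n : ℝ) - 1) :=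
            measureReal_closedShell_inter_ball_le μ hS hSR hr (by linarith) x
        _ = 8 * 3 ^ n * ω * 1 * (S * r ^ ((n : ℝ) - 1)) := by ring
        _ ≤ 8 * 3 ^ n * ω * K * (S * r ^ ((n : ℝ) - 1)) := by gcongr
    · rw [min_eq_right h]
      exact (measureReal_mono inter_subset_left hfin).trans hshell

end ShellProfile

section RadialIntegrals

variable {φ : ℝ → ℝ} {c s p ρ σ : ℝ}

theorem mul_rpow_le_of_le_rpow (hφ : ∀ r > 0, φ r ≤ c * r ^ s) {t : ℝ} (ht : 0 < t) :
    φ t⁻¹ * t ^ (p - 1) ≤ c * t ^ (p - 1 - s) :=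
  calc φ t⁻¹ * t ^ (p - 1) ≤ c * t⁻¹ ^ s * t ^ (p - 1) := by gcongr; exact hφ _ (inv_pos.2 ht)
    _ = c * t ^ (p - 1 - s) := by rw [inv_rpow ht.le, rpow_sub ht _ s]; ring

theorem setLIntegral_mul_rpow_le {A : Set ℝ} (hA : MeasurableSet A) (hA0 : A ⊆ Ioi 0)
    (hc : 0 ≤ c) (hint : IntegrableOn (fun t => t ^ (p - 1 - s)) A)
    (hφ : ∀ r > 0, φ r ≤ c * r ^ s) :
    ∫⁻ t in A, ENNReal.ofReal (φ t⁻¹ * t ^ (p - 1)) ≤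
      ENNReal.ofReal (c * ∫ t in A, t ^ (p - 1 - s)) := by
  rw [← integral_const_mul, ofReal_integral_eq_lintegral_ofReal (hint.const_mul c)]
  · exact setLIntegral_mono' hA fun t ht =>
      ENNReal.ofReal_le_ofReal (mul_rpow_le_of_le_rpow hφ (hA0 ht))
  · filter_upwards [ae_restrict_mem hA] with t ht
    exact mul_nonneg hc (rpow_nonneg (hA0 ht).le _)

theorem setLIntegral_Ioi_inv_mul_rpow_le (hc : 0 ≤ c) (hρ : 0 < ρ) (hps : p < s)
    (hφ : ∀ r > 0, φ r ≤ c * r ^ s) :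
    ∫⁻ t in Ioi ρ⁻¹, ENNReal.ofReal (φ t⁻¹ * t ^ (p - 1)) ≤
      ENNReal.ofReal (c * (ρ ^ (s - p) / (s - p))) := by
  have hρ' : 0 < ρ⁻¹ := inv_pos.2 hρ
  refine (setLIntegral_mul_rpow_le measurableSet_Ioi (Ioi_subset_Ioi hρ'.le) hc
    (integrableOn_Ioi_rpow_of_lt (by linarith) hρ') hφ).trans_eq ?_
  rw [integral_Ioi_rpow_of_lt (by linarith) hρ', show p - 1 - s + 1 = -(s - p) by ring,
    neg_div_neg_eq, inv_rpow hρ.le, rpow_neg hρ.le, inv_inv]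

theorem setLIntegral_Ioc_zero_inv_mul_rpow_le (hc : 0 ≤ c) (hρ : 0 < ρ) (hsp : s < p)
    (hφ : ∀ r > 0, φ r ≤ c * r ^ s) :
    ∫⁻ t in Ioc 0 ρ⁻¹, ENNReal.ofReal (φ t⁻¹ * t ^ (p - 1)) ≤
      ENNReal.ofReal (c * (ρ ^ (s - p) / (p - s))) := by
  have hρ' : 0 < ρ⁻¹ := inv_pos.2 hρ
  refine (setLIntegral_mul_rpow_le measurableSet_Ioc Ioc_subset_Ioi_self hc
    ((intervalIntegrable_iff_integrableOn_Ioc_of_le hρ'.le).1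
      (intervalIntegral.intervalIntegrable_rpow' (by linarith))) hφ).trans_eq ?_
  rw [← intervalIntegral.integral_of_le hρ'.le, integral_rpow (Or.inl (by linarith)),
    show p - 1 - s + 1 = p - s by ring, zero_rpow (by linarith), sub_zero, inv_rpow hρ.le,
    ← rpow_neg hρ.le, neg_sub]

theorem setLIntegral_Ioc_inv_inv_mul_rpow_le (hc : 0 ≤ c) (hρ : 0 < ρ) (hρσ : ρ ≤ σ)
    (hφ : ∀ r > 0, φ r ≤ c * r ^ p) :
    ∫⁻ t in Ioc σ⁻¹ ρ⁻¹, ENNReal.ofReal (φ t⁻¹ * t ^ (p - 1)) ≤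
      ENNReal.ofReal (c * log (σ / ρ)) := by
  have hσ : 0 < σ⁻¹ := inv_pos.2 (hρ.trans_le hρσ)
  have hle : σ⁻¹ ≤ ρ⁻¹ := inv_anti₀ hρ hρσ
  have h0 : (0 : ℝ) ∉ uIcc σ⁻¹ ρ⁻¹ := by
    rw [uIcc_of_le hle]
    exact fun h => hσ.not_ge h.1
  refine (setLIntegral_mul_rpow_le measurableSet_Ioc
    (Ioc_subset_Ioi_self.trans (Ioi_subset_Ioi hσ.le)) hc
    ((intervalIntegrable_iff_integrableOn_Ioc_of_le hle).1
      (intervalIntegral.intervalIntegrable_rpow (Or.inr h0))) hφ).trans_eq ?_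
  simp only [← intervalIntegral.integral_of_le hle, show p - 1 - p = -1 by ring, rpow_neg_one,
    integral_inv h0, inv_div_inv]

end RadialIntegrals

/-- The size, up to a constant factor, of the potential with kernel `|x - y| ^ (α - D)` that the
uniform density on a shell of mean radius `R` and half-width `S` in dimension `D` generates on the
shell. -/
noncomputable def shellPotential (α R S : ℝ) : ℝ :=
  if 1 < α then S * R ^ (α - 1) else if α = 1 then S * log (R / S) else S ^ α

section ShellPotential

variable {D α R S : ℝ}

theorem shellPotential_of_one_lt (hα : 1 < α) : shellPotential α R S = S * R ^ (α - 1) :=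
  if_pos hα

theorem shellPotential_one : shellPotential 1 R S = S * log (R / S) := by
  rw [shellPotential, if_neg (lt_irrefl _), if_pos rfl]

theorem shellPotential_of_lt_one (hα : α < 1) : shellPotential α R S = S ^ α := by
  rw [shellPotential, if_neg hα.not_gt, if_neg hα.ne]

theorem shellPotential_nonneg (hS : 0 < S) (hSR : S ≤ R) : 0 ≤ shellPotential α R S := by
  have hR : 0 < R := hS.trans_le hSR
  have hlog : 0 ≤ log (R / S) := log_nonneg ((one_le_div hS).2 hSR)
  unfold shellPotential
  split_ifs <;> positivity

theorem lintegral_shellProfile_le_of_lt_one (hα0 : 0 < α) (hα1 : α < 1) (hD : 1 ≤ D) (hS : 0 < S)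
    (hR : 0 < R) :
    ∫⁻ t in Ioi 0, ENNReal.ofReal (shellProfile D R S t⁻¹ * t ^ (D - α - 1)) ≤
      ENNReal.ofReal ((1 / α + 1 / (1 - α)) * S ^ α) := by
  have hfar := setLIntegral_Ioc_zero_inv_mul_rpow_le (s := D - 1) (p := D - α) hS.le hS
    (by linarith) fun r hr => shellProfile_le_mul_rpow hD hS.le hR.le hr.le
  have hnear := setLIntegral_Ioi_inv_mul_rpow_le (s := D) (p := D - α) zero_le_one hS
    (by linarith) fun r _ =>
      (shellProfile_le_rpow (R := R) (S := S)).trans_eq (one_mul _).symm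
  rw [show D - 1 - (D - α) = α - 1 by ring, show D - α - (D - 1) = 1 - α by ring] at hfar
  rw [show D - (D - α) = α by ring] at hnear
  rw [← Ioc_union_Ioi_eq_Ioi (inv_pos.2 hS).le]
  refine (lintegral_union_le _ _ _).trans ((add_le_add hfar hnear).trans_eq ?_)
  rw [← ENNReal.ofReal_add (by positivity) (by positivity), rpow_sub_one hS.ne']
  congr 1
  field_simp
  ring

theorem lintegral_shellProfile_le_of_one_lt (hα1 : 1 < α) (hαD : α < D) (hS : 0 < S) (hR : 0 < R) :
    ∫⁻ t in Ioi 0, ENNReal.ofReal (shellProfile D R S t⁻¹ * t ^ (D - α - 1)) ≤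
      ENNReal.ofReal ((1 / (D - α) + 1 / (α - 1)) * (S * R ^ (α - 1))) := by
  have hD : 1 ≤ D := (hα1.trans hαD).le
  have hfar := setLIntegral_Ioc_zero_inv_mul_rpow_le (φ := shellProfile D R S)
    (c := S * R ^ (D - 1)) (s := 0) (p := D - α) (by positivity) hR (by linarith) fun r hr => by
      simpa only [rpow_zero, mul_one] using shellProfile_le_const hD hS.le hR.le hr.le
  have hnear := setLIntegral_Ioi_inv_mul_rpow_le (s := D - 1) (p := D - α) hS.le hR
    (by linarith) fun r hr => shellProfile_le_mul_rpow hD hS.le hR.le hr.le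
  rw [sub_zero, zero_sub] at hfar
  rw [show D - 1 - (D - α) = α - 1 by ring] at hnear
  have hexp : R ^ (D - 1) * R ^ (-(D - α)) = R ^ (α - 1) := by
    rw [← rpow_add hR]; congr 1; ring
  rw [← Ioc_union_Ioi_eq_Ioi (inv_pos.2 hR).le]
  refine (lintegral_union_le _ _ _).trans ((add_le_add hfar hnear).trans_eq ?_)
  rw [← ENNReal.ofReal_add (by positivity) (by positivity), ← hexp]
  congr 1
  ring

theorem lintegral_shellProfile_le_of_eq_one (hD : 1 < D) (hS : 0 < S) (hSR : S ≤ R) :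
    ∫⁻ t in Ioi 0, ENNReal.ofReal (shellProfile D R S t⁻¹ * t ^ (D - 1 - 1)) ≤
      ENNReal.ofReal (S * (1 / (D - 1) + log (R / S) + 1)) := by
  have hR : 0 < R := hS.trans_le hSR
  have hlog : 0 ≤ log (R / S) := log_nonneg ((one_le_div hS).2 hSR)
  have hfar := setLIntegral_Ioc_zero_inv_mul_rpow_le (φ := shellProfile D R S)
    (c := S * R ^ (D - 1)) (s := 0) (p := D - 1) (by positivity) hR (by linarith) fun r hr => by
      simpa only [rpow_zero, mul_one] using shellProfile_le_const hD.le hS.le hR.le hr.le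
  have hmid := setLIntegral_Ioc_inv_inv_mul_rpow_le (p := D - 1) hS.le hS hSR
    fun r hr => shellProfile_le_mul_rpow hD.le hS.le hR.le hr.le
  have hnear := setLIntegral_Ioi_inv_mul_rpow_le (s := D) (p := D - 1) zero_le_one hS
    (by linarith) fun r _ =>
      (shellProfile_le_rpow (R := R) (S := S)).trans_eq (one_mul _).symm
  rw [sub_zero, zero_sub] at hfar
  rw [sub_sub_cancel, rpow_one] at hnear
  have hexp : R ^ (D - 1) * R ^ (-(D - 1)) = 1 := by rw [← rpow_add hR, add_neg_cancel, rpow_zero]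
  rw [← Ioc_union_Ioi_eq_Ioi (inv_pos.2 hS).le,
    ← Ioc_union_Ioc_eq_Ioc (inv_pos.2 hR).le (inv_anti₀ hS hSR)]
  refine (lintegral_union_le _ _ _).trans <| (add_le_add_left (lintegral_union_le _ _ _) _).trans <|
    (add_le_add (add_le_add hfar hmid) hnear).trans_eq ?_
  rw [← ENNReal.ofReal_add (by positivity) (by positivity),
    ← ENNReal.ofReal_add (by positivity) (by positivity)]
  congr 1
  linear_combination S / (D - 1) * hexp

theorem exists_lintegral_shellProfile_le_shellPotential (hα0 : 0 < α) (hαD : α < D) (hD : 1 ≤ D) :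
    ∃ C > 0, ∀ R S : ℝ, 0 < S → 2 * S ≤ R →
      ∫⁻ t in Ioi 0, ENNReal.ofReal (shellProfile D R S t⁻¹ * t ^ (D - α - 1)) ≤
        ENNReal.ofReal (C * shellPotential α R S) := by
  rcases lt_trichotomy α 1 with hα1 | rfl | hα1
  · refine ⟨1 / α + 1 / (1 - α), by positivity, fun R S hS hR => ?_⟩
    rw [shellPotential_of_lt_one hα1]
    exact lintegral_shellProfile_le_of_lt_one hα0 hα1 hD hS (by linarith)
  · refine ⟨(1 / (D - 1) + 1) / log 2 + 1, by positivity, fun R S hS hR => ?_⟩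
    rw [shellPotential_one]
    refine (lintegral_shellProfile_le_of_eq_one hαD hS (by linarith)).trans
      (ENNReal.ofReal_le_ofReal ?_)
    have hlog : log 2 ≤ log (R / S) := log_le_log two_pos ((le_div_iff₀ hS).2 hR)
    calc S * (1 / (D - 1) + log (R / S) + 1)
        = S * ((1 / (D - 1) + 1) / log 2 * log 2 + log (R / S)) := by field_simp; ring
      _ ≤ S * ((1 / (D - 1) + 1) / log 2 * log (R / S) + log (R / S)) := by gcongr
      _ = ((1 / (D - 1) + 1) / log 2 + 1) * (S * log (R / S)) := by ring
  · refine ⟨1 / (D - α) + 1 / (α - 1), by positivity, fun R S hS hR => ?_⟩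
    rw [shellPotential_of_one_lt hα1]
    exact lintegral_shellProfile_le_of_one_lt hα1 hαD hS (by linarith)

end ShellPotential

section RieszPotential

variable {E : Type*} [NormedAddCommGroup E] [MeasurableSpace E] {μ : Measure E}

theorem lintegral_norm_sub_inv_rpow_le [OpensMeasurableSpace E] (x : E) {A : Set E} {p : ℝ}
    (hp : 0 < p) :
    ∫⁻ y in A, ENNReal.ofReal (‖x - y‖⁻¹ ^ p) ∂μ ≤
      ENNReal.ofReal p * ∫⁻ t in Ioi 0, μ (A ∩ ball x t⁻¹) * ENNReal.ofReal (t ^ (p - 1)) := by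
  have hmeas : Measurable fun y => ‖x - y‖⁻¹ := by
    simp only [← dist_eq_norm]
    fun_prop
  rw [lintegral_rpow_eq_lintegral_meas_lt_mul _ (.of_forall fun y => inv_nonneg.2 (norm_nonneg _))
    hmeas.aemeasurable hp]
  refine mul_le_mul_right (setLIntegral_mono' measurableSet_Ioi fun t ht => ?_) _
  rw [Measure.restrict_apply (measurableSet_lt measurable_const hmeas)]
  gcongr μ ?_ * _
  rintro y ⟨hty : t < ‖x - y‖⁻¹, hyA⟩
  refine ⟨hyA, ?_⟩
  rw [mem_ball', dist_eq_norm]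
  exact (lt_inv_comm₀ ht (inv_pos.1 (lt_trans ht hty))).1 hty

theorem lintegral_norm_sub_inv_rpow_le_of_measure_inter_ball_le [OpensMeasurableSpace E] {x : E}
    {A : Set E} {p C : ℝ} {φ : ℝ → ℝ} (hp : 0 < p) (hC : 0 ≤ C)
    (hφ : ∀ r > 0, μ (A ∩ ball x r) ≤ ENNReal.ofReal (C * φ r)) :
    ∫⁻ y in A, ENNReal.ofReal (‖x - y‖⁻¹ ^ p) ∂μ ≤
      ENNReal.ofReal (p * C) * ∫⁻ t in Ioi 0, ENNReal.ofReal (φ t⁻¹ * t ^ (p - 1)) := by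
  refine (lintegral_norm_sub_inv_rpow_le x hp).trans ?_
  rw [ENNReal.ofReal_mul hp.le, mul_assoc,
    ← lintegral_const_mul' (ENNReal.ofReal C) _ ENNReal.ofReal_ne_top]
  gcongr ENNReal.ofReal p * ?_
  refine setLIntegral_mono' measurableSet_Ioi fun t ht => ?_
  rw [← ENNReal.ofReal_mul hC, ← mul_assoc, ENNReal.ofReal_mul' (rpow_nonneg (mem_Ioi.1 ht).le _)]
  gcongr
  exact hφ _ (inv_pos.2 ht)

theorem lintegral_lintegral_mul_div_norm_rpow_le {A : Set E} {w : E → ℝ}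
    {B p : ℝ} {J : ℝ≥0∞} (hw0 : ∀ x, 0 ≤ w x) (hwB : ∀ x, w x ≤ B) (hwA : Function.support w ⊆ A)
    (hJ : ∀ x, ∫⁻ y in A, ENNReal.ofReal (‖x - y‖⁻¹ ^ p) ∂μ ≤ J) :
    ∫⁻ x, ∫⁻ y, ‖w x * w y / ‖x - y‖ ^ p‖ₑ ∂μ ∂μ ≤ ENNReal.ofReal (B ^ 2) * J * μ A := by
  have hB : 0 ≤ B := (hw0 0).trans (hwB 0)
  have hw {x : E} (hx : x ∉ A) : w x = 0 := Function.notMem_support.1 fun h => hx (hwA h)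
  have hinner (x : E) : ∫⁻ y, ‖w x * w y / ‖x - y‖ ^ p‖ₑ ∂μ ≤ ENNReal.ofReal (B ^ 2) * J := calc
    _ = ∫⁻ y in A, ‖w x * w y / ‖x - y‖ ^ p‖ₑ ∂μ :=
        (setLIntegral_eq_of_support_subset fun y hy => by
          by_contra hyA
          simp [hw hyA] at hy).symm
    _ ≤ ∫⁻ y in A, ENNReal.ofReal (B ^ 2) * ENNReal.ofReal (‖x - y‖⁻¹ ^ p) ∂μ := by
        refine lintegral_mono fun y => ?_
        rw [← ENNReal.ofReal_mul (by positivity),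
          Real.enorm_of_nonneg (div_nonneg (mul_nonneg (hw0 x) (hw0 y)) (by positivity)),
          inv_rpow (norm_nonneg _), ← div_eq_mul_inv, sq]
        gcongr
        exacts [hw0 y, hwB x, hwB y]
    _ ≤ ENNReal.ofReal (B ^ 2) * J := by
        rw [lintegral_const_mul' _ _ ENNReal.ofReal_ne_top]
        gcongr
        exact hJ x
  calc _ = ∫⁻ x in A, ∫⁻ y, ‖w x * w y / ‖x - y‖ ^ p‖ₑ ∂μ ∂μ :=
        (setLIntegral_eq_of_support_subset fun x hx => by
          by_contra hxA
          simp [hw hxA] at hx).symm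
    _ ≤ ∫⁻ _ in A, ENNReal.ofReal (B ^ 2) * J ∂μ := lintegral_mono hinner
    _ = ENNReal.ofReal (B ^ 2) * J * μ A := setLIntegral_const _ _

end RieszPotential

theorem integrable_prod_and_integral_integral_le {X Y : Type*} [MeasurableSpace X]
    [MeasurableSpace Y] {μ : Measure X} {ν : Measure Y} [SFinite μ] [SFinite ν] {F : X × Y → ℝ}
    (hF : AEStronglyMeasurable F (μ.prod ν)) {B : ℝ} (hB : 0 ≤ B)
    (hFB : ∫⁻ x, ∫⁻ y, ‖F (x, y)‖ₑ ∂ν ∂μ ≤ ENNReal.ofReal B) :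
    Integrable F (μ.prod ν) ∧ ∫ x, ∫ y, F (x, y) ∂ν ∂μ ≤ B := by
  rw [← lintegral_prod _ hF.enorm] at hFB
  have hint : Integrable F (μ.prod ν) := ⟨hF, hFB.trans_lt ENNReal.ofReal_lt_top⟩
  refine ⟨hint, (le_norm_self _).trans ?_⟩
  rw [← integral_prod _ hint, ← ENNReal.ofReal_le_ofReal_iff hB, ofReal_norm]
  exact (enorm_integral_le_lintegral_enorm F).trans hFB

section CoulombEnergy

variable {E : Type*} [NormedAddCommGroup E]

/-- The radial bump `g_{l,R,S}` of height `l`, radius `R` and half-width `S` with profile `η`. -/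
noncomputable def shellBump (E : Type*) [NormedAddCommGroup E] (η : ℝ → ℝ) (l R S : ℝ) (x : E) :
    ℝ :=
  l * η ((‖x‖ - R) / S)

theorem support_shellBump_subset {η : ℝ → ℝ} (hη : Function.support η ⊆ Icc (-1) 1) {l R S : ℝ}
    (hS : 0 < S) : Function.support (shellBump E η l R S) ⊆ closedShell E R S := by
  intro x hx
  have hx' : -1 ≤ (‖x‖ - R) / S ∧ (‖x‖ - R) / S ≤ 1 := hη (right_ne_zero_of_mul hx)
  rwa [← abs_le, abs_div, abs_of_pos hS, div_le_one hS] at hx'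

theorem abs_shellBump_le {η : ℝ → ℝ} {l M : ℝ} (hη : ∀ t, |η t| ≤ M) (hl : 0 ≤ l) (R S : ℝ)
    (x : E) : |shellBump E η l R S x| ≤ l * M := by
  rw [shellBump, abs_mul, abs_of_nonneg hl]
  gcongr
  exact hη _

theorem measurable_shellBump [MeasurableSpace E] [OpensMeasurableSpace E] {η : ℝ → ℝ}
    (hη : Measurable η) (l R S : ℝ) : Measurable (shellBump E η l R S) := by
  unfold shellBump
  fun_prop

variable [NormedSpace ℝ E]

/-- The density `|g x| ^ q * |g y| ^ q / |x - y| ^ (D - α)` of the Coulomb energy of `g` on a space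
of dimension `D`. -/
noncomputable def coulombDensity (q α : ℝ) (g : E → ℝ) (z : E × E) : ℝ :=
  |g z.1| ^ q * |g z.2| ^ q / ‖z.1 - z.2‖ ^ ((finrank ℝ E : ℝ) - α)

/-- The Coulomb energy of `g` with parameters `q` and `α`, as an iterated Bochner integral; it is
the integral over the product space when `coulombDensity q α g` is integrable there. -/
noncomputable def coulombEnergy [MeasurableSpace E] (μ : Measure E) (q α : ℝ) (g : E → ℝ) : ℝ :=
  ∫ x, ∫ y, coulombDensity q α g (x, y) ∂μ ∂μ

variable [FiniteDimensional ℝ E] [MeasurableSpace E] [BorelSpace E]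

theorem measurable_coulombDensity {g : E → ℝ} (hg : Measurable g) (q α : ℝ) :
    Measurable (coulombDensity q α g) := by
  unfold coulombDensity
  fun_prop

variable (μ : Measure E) [μ.IsAddHaarMeasure] {q α : ℝ}

theorem exists_coulombEnergy_le_of_support_subset_closedShell (hq : 0 < q) (hα0 : 0 < α)
    (hαD : α < finrank ℝ E) :
    ∃ C > 0, ∀ M R S : ℝ, 0 < S → 2 * S ≤ R → ∀ g : E → ℝ, Measurable g → (∀ x, |g x| ≤ M) →
      Function.support g ⊆ closedShell E R S →
      Integrable (coulombDensity q α g) (μ.prod μ) ∧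
      coulombEnergy μ q α g ≤
        C * M ^ (2 * q) * (S * R ^ ((finrank ℝ E : ℝ) - 1) * shellPotential α R S) := by
  have hfinrank : 0 < finrank ℝ E := by exact_mod_cast hα0.trans hαD
  have : Nontrivial E := Module.nontrivial_of_finrank_pos hfinrank
  have hD : (1 : ℝ) ≤ finrank ℝ E := by exact_mod_cast hfinrank
  set D : ℝ := (finrank ℝ E : ℝ)
  have hDα : 0 < D - α := sub_pos.2 hαD
  obtain ⟨C₁, hC₁, hvol⟩ := exists_measure_closedShell_inter_ball_le_shellProfile μ
  obtain ⟨C₂, hC₂, hpot⟩ := exists_lintegral_shellProfile_le_shellPotential hα0 hαD hD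
  refine ⟨(D - α) * C₁ * C₂ * C₁, by positivity, fun M R S hS hR g hg hgM hgsupp => ?_⟩
  have hR0 : 0 < R := by linarith
  have hM : 0 ≤ M := (abs_nonneg _).trans (hgM 0)
  have hΦ : 0 ≤ shellPotential α R S := shellPotential_nonneg hS (by linarith)
  obtain ⟨hshell, hball⟩ := hvol R S hS (by linarith)
  have hJ (x : E) : ∫⁻ y in closedShell E R S, ENNReal.ofReal (‖x - y‖⁻¹ ^ (D - α)) ∂μ ≤
      ENNReal.ofReal ((D - α) * C₁ * (C₂ * shellPotential α R S)) := by
    rw [ENNReal.ofReal_mul (by positivity)]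
    exact (lintegral_norm_sub_inv_rpow_le_of_measure_inter_ball_le hDα hC₁.le (hball x)).trans
      (mul_le_mul_right (hpot R S hS hR) _)
  have henergy := lintegral_lintegral_mul_div_norm_rpow_le (fun x => by positivity)
    (fun x => rpow_le_rpow (abs_nonneg _) (hgM x) hq.le)
    ((Function.support_subset_iff'.2 fun x hx => by
      rw [Function.notMem_support.1 fun h => hx (hgsupp h), abs_zero, zero_rpow hq.ne'])) hJ
  rw [← ENNReal.ofReal_mul (by positivity)] at henergy
  refine integrable_prod_and_integral_integral_le
    (measurable_coulombDensity hg q α).aestronglyMeasurable (by positivity)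
    ((henergy.trans (mul_le_mul_right hshell _)).trans_eq ?_)
  rw [← ENNReal.ofReal_mul (by positivity), ← rpow_natCast, ← rpow_mul hM,
    show q * ((2 : ℕ) : ℝ) = 2 * q by push_cast; ring]
  congr 1
  ring

theorem stmt19_general (hq : 0 < q) (hα0 : 0 < α) (hαD : α < finrank ℝ E) {η : ℝ → ℝ}
    (hη : Measurable η) (hηbdd : ∃ M, ∀ t, |η t| ≤ M) (hηsupp : Function.support η ⊆ Icc (-1) 1) :
    ∃ C > 0, ∀ l R S : ℝ, 0 < l → 0 < S → 2 * S ≤ R →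
      Integrable (coulombDensity q α (shellBump E η l R S)) (μ.prod μ) ∧
      (1 < α → coulombEnergy μ q α (shellBump E η l R S) ≤
        C * l ^ (2 * q) * R ^ ((finrank ℝ E : ℝ) + α - 2) * S ^ (2 : ℝ)) ∧
      (α = 1 → coulombEnergy μ q α (shellBump E η l R S) ≤
        C * l ^ (2 * q) * R ^ ((finrank ℝ E : ℝ) - 1) * S ^ (2 : ℝ) * log (R / S)) ∧
      (α < 1 → coulombEnergy μ q α (shellBump E η l R S) ≤
        C * l ^ (2 * q) * R ^ ((finrank ℝ E : ℝ) - 1) * S ^ (1 + α)) := by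
  obtain ⟨C, hC, henergy⟩ := exists_coulombEnergy_le_of_support_subset_closedShell μ hq hα0 hαD
  obtain ⟨M, hM0, hM⟩ : ∃ M > 0, ∀ t, |η t| ≤ M := hηbdd.elim fun M hM =>
    ⟨max M 1, lt_max_of_lt_right one_pos, fun t => (hM t).trans (le_max_left _ _)⟩
  refine ⟨C * M ^ (2 * q), by positivity, fun l R S hl hS hR => ?_⟩
  have hR0 : 0 < R := by linarith
  obtain ⟨hint, hle⟩ := henergy (l * M) R S hS hR (shellBump E η l R S)
    (measurable_shellBump hη l R S) (abs_shellBump_le hM hl.le R S)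
    (support_shellBump_subset hηsupp hS)
  rw [mul_rpow hl.le hM0.le] at hle
  refine ⟨hint, fun h => hle.trans_eq ?_, fun h => hle.trans_eq ?_, fun h => hle.trans_eq ?_⟩
  · rw [shellPotential_of_one_lt h, rpow_two,
      show (finrank ℝ E : ℝ) + α - 2 = (finrank ℝ E - 1) + (α - 1) by ring, rpow_add hR0]
    ring
  · rw [h, shellPotential_one, rpow_two]
    ring
  · rw [shellPotential_of_lt_one h, rpow_add hS, rpow_one]
    ring

end CoulombEnergy

theorem stmt19 (d : ℕ) (hd : 1 ≤ d) (q α : ℝ)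
    (hq1 : 1 ≤ q) (hα0 : 0 < α) (hαd : α < d)
    (η : ℝ → ℝ) (hη : ContDiff ℝ (⊤ : ℕ∞) η) (hηc : HasCompactSupport η)
    (hηsupp : tsupport η ⊆ Set.Ioo (-1 : ℝ) 1) (hη0 : 0 ∉ tsupport η)
    (hηnonneg : ∀ t, 0 ≤ η t) :
    ∃ C > 0, ∀ l R S : ℝ, 0 < l → 0 < S → 2 * S ≤ R →
      (1 < α →
        (∫ x : EuclideanSpace ℝ (Fin d), ∫ y : EuclideanSpace ℝ (Fin d),
            |l * η ((‖x‖ - R) / S)| ^ q * |l * η ((‖y‖ - R) / S)| ^ q /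
              ‖x - y‖ ^ ((d : ℝ) - α)) ≤
          C * l ^ (2 * q) * R ^ ((d : ℝ) + α - 2) * S ^ (2 : ℝ)) ∧
      (α = 1 →
        (∫ x : EuclideanSpace ℝ (Fin d), ∫ y : EuclideanSpace ℝ (Fin d),
            |l * η ((‖x‖ - R) / S)| ^ q * |l * η ((‖y‖ - R) / S)| ^ q /
              ‖x - y‖ ^ ((d : ℝ) - α)) ≤
          C * l ^ (2 * q) * R ^ ((d : ℝ) - 1) * S ^ (2 : ℝ) * Real.log (R / S)) ∧
      (α < 1 →
        (∫ x : EuclideanSpace ℝ (Fin d), ∫ y : EuclideanSpace ℝ (Fin d),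
            |l * η ((‖x‖ - R) / S)| ^ q * |l * η ((‖y‖ - R) / S)| ^ q /
              ‖x - y‖ ^ ((d : ℝ) - α)) ≤
          C * l ^ (2 * q) * R ^ ((d : ℝ) - 1) * S ^ (1 + α)) := by
  have hηz : Function.support η ⊆ Set.Icc (-1) 1 :=
    (subset_tsupport η).trans (hηsupp.trans Set.Ioo_subset_Icc_self)
  simpa only [coulombEnergy, coulombDensity, shellBump, finrank_euclideanSpace_fin] using
    (stmt19_general (volume : Measure (EuclideanSpace ℝ (Fin d))) (one_pos.trans_le hq1) hα0
      (by simpa) hη.continuous.measurable (hηc.exists_bound_of_continuous hη.continuous) hηz).imp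
      fun C h => h.imp_right fun h l R S hl hS hR => (h l R S hl hS hR).2
end
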